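/- arXiv:1103.1469 — 2 statements merged into one kernel-verified Lean document; each statement's English description precedes it below -/
import Mathlib

section
/- Let D ⊆ ℝⁿ be a nonempty bounded open connected set, let a < b be real numbers, and let u be a real-valued function that is smooth on a neighborhood of D̄ × [a, b] and satisfies the nonparametric mean curvature flow equation ∂u/∂t = Δu − ⟨∇u, (D²u)∇u⟩/(1 + |∇u|²) on D̄ × [a, b] (spatial derivatives, i.e., the graphs of u(·, t) move by mean curvature). Assume h(u(·,t), x) > 0 for all (x, t) ∈ D̄ × [a, b]. If the minimum of the function (x, t) ↦ κ₁(u(·,t), x)/h(u(·,t), x) over D̄ × [a, b] is attained at a point (x₀, t₀) with x₀ ∈ D and t₀ > a, then the function (x, t) ↦ κ₁(u(·,t), x)/h(u(·,t), x) is constant on D × [a, t₀]. -/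
open scoped RealInnerProductSpace

/-- The Hessian of `f` at `x`, applied to the vector `ξ` (i.e. `(D²f(x))ξ`). -/
noncomputable def hess {n : ℕ} (f : EuclideanSpace ℝ (Fin n) → ℝ)
    (x ξ : EuclideanSpace ℝ (Fin n)) : EuclideanSpace ℝ (Fin n) :=
  fderiv ℝ (gradient f) x ξ

/-- The Laplacian of `f` at `x`, as the trace of the Hessian. -/
noncomputable def lap {n : ℕ} (f : EuclideanSpace ℝ (Fin n) → ℝ)
    (x : EuclideanSpace ℝ (Fin n)) : ℝ :=
  ∑ i, ⟪hess f x (EuclideanSpace.single i 1), EuclideanSpace.single i 1⟫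

/-- `f` satisfies the translator equation with velocity `(v', vn) ∈ ℝⁿ × ℝ` at the point `x`:
`(1 + |∇f|²)·Δf − ⟨∇f, (D²f)∇f⟩ = (v_{n+1} − ⟨v', ∇f⟩)·(1 + |∇f|²)`. -/
def TranslatorEqAt {n : ℕ} (f : EuclideanSpace ℝ (Fin n) → ℝ)
    (v' : EuclideanSpace ℝ (Fin n)) (vn : ℝ) (x : EuclideanSpace ℝ (Fin n)) : Prop :=
  (1 + ‖gradient f x‖ ^ 2) * lap f x - ⟪gradient f x, hess f x (gradient f x)⟫
    = (vn - ⟪v', gradient f x⟫) * (1 + ‖gradient f x‖ ^ 2)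

/-- The scalar mean curvature `h(f,x)` of the graph of `f` at `(x, f(x))` with respect to the
upward unit normal: `h = ((1+|∇f|²)Δf − ⟨∇f,(D²f)∇f⟩)/W³` where `W = √(1+|∇f|²)`. -/
noncomputable def graphH {n : ℕ} (f : EuclideanSpace ℝ (Fin n) → ℝ)
    (x : EuclideanSpace ℝ (Fin n)) : ℝ :=
  ((1 + ‖gradient f x‖ ^ 2) * lap f x - ⟪gradient f x, hess f x (gradient f x)⟫)
    / Real.sqrt (1 + ‖gradient f x‖ ^ 2) ^ 3

/-- The smallest principal curvature `κ₁(f,x)` of the graph of `f` at `(x, f(x))` with respect to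
the upward unit normal: the minimum over nonzero `ξ` of
`⟨(D²f(x))ξ, ξ⟩ / (W(x)·⟨(I + ∇f(∇f)ᵀ)ξ, ξ⟩)`, where
`⟨(I + ∇f(∇f)ᵀ)ξ, ξ⟩ = |ξ|² + ⟨∇f, ξ⟩²` and `W = √(1+|∇f|²)`. -/
noncomputable def graphKappa1 {n : ℕ} (f : EuclideanSpace ℝ (Fin n) → ℝ)
    (x : EuclideanSpace ℝ (Fin n)) : ℝ :=
  sInf { r : ℝ | ∃ ξ : EuclideanSpace ℝ (Fin n), ξ ≠ 0 ∧
    r = ⟪hess f x ξ, ξ⟫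
      / (Real.sqrt (1 + ‖gradient f x‖ ^ 2) * (‖ξ‖ ^ 2 + ⟪gradient f x, ξ⟫ ^ 2)) }

open scoped ContDiff Manifold Topology

/-! Put `W = √(1 + |∇u|²)`. Then `W κ₁` is the smallest eigenvalue of `D²u` relative to the graph
metric `I + ∇u ∇uᵀ`, and the flow equation says `W h = ∂ₜu`, so `κ₁ / h` is the quotient of these
two functions. Differentiating the equation in time shows that `∂ₜu` solves the linearized flow.
The eigenvalue is a viscosity supersolution of it: if `θ` touches it from below at a point with null
direction `ξ`, the second-order condition for `D²u - θ (I + ∇u ∇uᵀ) ≥ 0` holds not only for fixed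
`ξ` but along all moving directions `ξ + s ⟨y, e⟩ ∇u`. Tracing it over `e` for a suitable `y`
gives precisely the term that cancels the second variation of the flow operator. With `c` the
minimum of `κ₁ / h`, the strong maximum principle then applies to `c ∂ₜu ≤ W κ₁`: barriers in
slanted space-time tubes carry a strict inequality forward in time, so equality at the final time
forces equality at all earlier times on balls, and connectedness of `D` finishes the proof. -/

section Calculus

variable {X : Type*} [NormedAddCommGroup X] [NormedSpace ℝ X]

/-- The algebra of smooth real-valued functions on a normed space. -/
abbrev SmoothFun (X : Type*) [NormedAddCommGroup X] [NormedSpace ℝ X] : Type _ :=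
  C^∞⟮𝓘(ℝ, X), X; ℝ⟯

namespace SmoothFun

theorem contDiff (f : SmoothFun X) : ContDiff ℝ ∞ f := f.contMDiff.contDiff

theorem continuous (f : SmoothFun X) : Continuous f := f.contDiff.continuous

theorem differentiable (f : SmoothFun X) : Differentiable ℝ f :=
  f.contDiff.differentiable (by simp)

theorem contDiff_fderiv (f : SmoothFun X) : ContDiff ℝ ∞ (fderiv ℝ f) :=
  f.contDiff.fderiv_right (by simp)

/-- A smooth function `f`, bundled. -/
def ofContDiff (f : X → ℝ) (hf : ContDiff ℝ ∞ f) : SmoothFun X := ⟨f, hf.contMDiff⟩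

@[simp] theorem ofContDiff_apply (f : X → ℝ) (hf : ContDiff ℝ ∞ f) (z : X) :
    ofContDiff f hf z = f z := rfl

@[simp] theorem add_apply (f g : SmoothFun X) (z : X) : (f + g) z = f z + g z := rfl
@[simp] theorem sub_apply (f g : SmoothFun X) (z : X) : (f - g) z = f z - g z := rfl
@[simp] theorem mul_apply (f g : SmoothFun X) (z : X) : (f * g) z = f z * g z := rfl
@[simp] theorem smul_apply (c : ℝ) (f : SmoothFun X) (z : X) : (c • f) z = c * f z := rfl
@[simp] theorem one_apply (z : X) : (1 : SmoothFun X) z = 1 := rfl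
@[simp] theorem zero_apply (z : X) : (0 : SmoothFun X) z = 0 := rfl
@[simp] theorem algebraMap_apply (c : ℝ) (z : X) : algebraMap ℝ (SmoothFun X) c z = c := rfl
@[simp] theorem ofNat_apply (k : ℕ) [k.AtLeastTwo] (z : X) :
    (ofNat(k) : SmoothFun X) z = ofNat(k) :=
  map_ofNat ((Pi.evalRingHom (fun _ => ℝ) z).comp ContMDiffMap.coeFnRingHom) k
@[simp] theorem sum_apply {ι : Type*} (s : Finset ι) (f : ι → SmoothFun X) (z : X) :
    (∑ i ∈ s, f i) z = ∑ i ∈ s, f i z :=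
  map_sum ((Pi.evalRingHom (fun _ => ℝ) z).comp ContMDiffMap.coeFnRingHom) f s

end SmoothFun

open SmoothFun

/-- The directional derivative in the direction `v`, as a derivation of the algebra of smooth
functions depending linearly on `v`. -/
noncomputable def dirDeriv : X →ₗ[ℝ] Derivation ℝ (SmoothFun X) (SmoothFun X) where
  toFun v := Derivation.mk'
    { toFun := fun f => ofContDiff (fun z => fderiv ℝ f z v)
        (f.contDiff_fderiv.clm_apply contDiff_const)
      map_add' := fun f g => by
        ext z
        change fderiv ℝ (⇑f + ⇑g) z v = _
        simp [fderiv_add (f.differentiable z) (g.differentiable z)]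
      map_smul' := fun c f => by
        ext z
        change fderiv ℝ (c • ⇑f) z v = _
        simp [fderiv_const_smul (f.differentiable z)] }
    (fun f g => by
      ext z
      change fderiv ℝ (⇑f * ⇑g) z v = _
      simp [fderiv_mul (f.differentiable z) (g.differentiable z)])
  map_add' v w := by ext f z; exact map_add (fderiv ℝ f z) v w
  map_smul' c v := by ext f z; exact map_smul (fderiv ℝ f z) c v

theorem dirDeriv_apply (v : X) (f : SmoothFun X) (z : X) : dirDeriv v f z = fderiv ℝ f z v := rfl

theorem dirDeriv_dirDeriv_apply (v w : X) (f : SmoothFun X) (z : X) :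
    dirDeriv v (dirDeriv w f) z = fderiv ℝ (fderiv ℝ f) z v w := by
  have h := (f.contDiff_fderiv.differentiable (by simp) z).hasFDerivAt.clm_apply
    (hasFDerivAt_const w z)
  rw [dirDeriv_apply, show ⇑(dirDeriv w f) = fun z => fderiv ℝ f z w from rfl, h.fderiv]
  simp

theorem dirDeriv_comm (v w : X) (f : SmoothFun X) :
    dirDeriv v (dirDeriv w f) = dirDeriv w (dirDeriv v f) := by
  ext z
  simpa only [dirDeriv_dirDeriv_apply] using
    (f.contDiff.contDiffAt.isSymmSndFDerivAt
      (by simpa using WithTop.coe_le_coe.2 (le_top : (2 : ℕ∞) ≤ ⊤))).eq v w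

theorem hasDerivAt_line (f : SmoothFun X) (z v : X) (s : ℝ) :
    HasDerivAt (fun s : ℝ => f (z + s • v)) (dirDeriv v f (z + s • v)) s := by
  have hline : HasDerivAt (fun s : ℝ => z + s • v) v s := by
    simpa using ((hasDerivAt_id s).smul_const v).const_add z
  exact (f.differentiable (z + s • v)).hasFDerivAt.comp_hasDerivAt s hline

/-- A function whose second derivative is negative at a critical point has a strict local maximum
there, so at a local minimum it would be locally constant. -/
theorem deriv_deriv_nonneg_of_isLocalMin {φ : ℝ → ℝ} {a : ℝ} (hmin : IsLocalMin φ a)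
    (hφ : ContinuousAt φ a) : 0 ≤ deriv (deriv φ) a := by
  by_contra! hneg
  have hmax : IsLocalMin (-φ) a := by
    apply isLocalMin_of_deriv_deriv_pos _ _ hφ.neg
    · simpa [deriv.neg'] using hneg
    · simpa using hmin.deriv_eq_zero
  have hconst : φ =ᶠ[𝓝 a] fun _ => φ a := by
    filter_upwards [hmin, hmax] with s h₁ h₂
    exact le_antisymm (neg_le_neg_iff.1 h₂) h₁
  have hzero : deriv φ =ᶠ[𝓝 a] fun _ => 0 := hconst.deriv.trans (by simp)
  simp [hzero.deriv_eq] at hneg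

/-- The second-order condition for `s ↦ α + 2 s β + s² γ` along a line: the coefficients vary
along with the direction in which a quadratic form is evaluated. -/
theorem second_order_nonneg {α β γ : SmoothFun X} {z v : X} (hα : α z = 0)
    (hmin : ∀ᶠ s : ℝ in 𝓝 0,
      0 ≤ α (z + s • v) + 2 * s * β (z + s • v) + s ^ 2 * γ (z + s • v)) :
    0 ≤ dirDeriv v (dirDeriv v α) z + 4 * dirDeriv v β z + 2 * γ z := by
  set φ : ℝ → ℝ := fun s =>
    α (z + s • v) + 2 * s * β (z + s • v) + s ^ 2 * γ (z + s • v) with hφ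
  have hlin (s : ℝ) : HasDerivAt (fun s : ℝ => 2 * s) 2 s := by
    simpa using (hasDerivAt_id s).const_mul 2
  have hsq (s : ℝ) : HasDerivAt (fun s : ℝ => s ^ 2) (2 * s) s := by
    simpa using hasDerivAt_pow 2 s
  have hderiv (s : ℝ) : HasDerivAt φ (dirDeriv v α (z + s • v)
      + (2 * β (z + s • v) + 2 * s * dirDeriv v β (z + s • v))
      + (2 * s * γ (z + s • v) + s ^ 2 * dirDeriv v γ (z + s • v))) s :=
    ((hasDerivAt_line α z v s).add ((hlin s).mul (hasDerivAt_line β z v s))).add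
      ((hsq s).mul (hasDerivAt_line γ z v s))
  have hderiv₂ : HasDerivAt (deriv φ)
      (dirDeriv v (dirDeriv v α) z + 4 * dirDeriv v β z + 2 * γ z) 0 := by
    rw [funext fun s => (hderiv s).deriv]
    refine (((hasDerivAt_line (dirDeriv v α) z v 0).add
      (((hasDerivAt_line β z v 0).const_mul 2).add
        ((hlin 0).mul (hasDerivAt_line (dirDeriv v β) z v 0)))).add
      (((hlin 0).mul (hasDerivAt_line γ z v 0)).add
        ((hsq 0).mul (hasDerivAt_line (dirDeriv v γ) z v 0)))).congr_deriv ?_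
    simp only [zero_smul, add_zero, mul_zero, zero_mul]
    ring
  have hφ₀ : φ 0 = 0 := by simp [hφ, hα]
  have hloc : IsLocalMin φ 0 := hmin.mono fun s hs => hφ₀.trans_le hs
  exact hderiv₂.deriv ▸ deriv_deriv_nonneg_of_isLocalMin hloc (hderiv 0).continuousAt

theorem dirDeriv_eq_zero_of_isMinOn_line {f : SmoothFun X} {z v : X}
    (hmin : ∀ᶠ s : ℝ in 𝓝 0, f z ≤ f (z + s • v)) : dirDeriv v f z = 0 := by
  have hloc : IsLocalMin (fun s : ℝ => f (z + s • v)) 0 := by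
    simpa [IsLocalMin, IsMinFilter] using hmin
  simpa using hloc.hasDerivAt_eq_zero (hasDerivAt_line f z v 0)

theorem dirDeriv_nonpos_of_left_min {f : SmoothFun X} {z v : X}
    (hmin : ∀ᶠ s : ℝ in 𝓝 0, s ≤ 0 → f z ≤ f (z + s • v)) : dirDeriv v f z ≤ 0 := by
  have h : HasDerivAt (fun s : ℝ => f (z + s • v)) (dirDeriv v f z) 0 := by
    simpa using hasDerivAt_line f z v 0
  have hslope := (hasDerivWithinAt_iff_tendsto_slope' (s := Set.Iio (0 : ℝ)) (by simp)).1
    (h.hasDerivWithinAt (s := Set.Iio 0))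
  refine le_of_tendsto hslope ?_
  filter_upwards [self_mem_nhdsWithin, nhdsWithin_le_nhds hmin] with s (hs : s < 0) hle
  rw [slope_def_field]
  exact div_nonpos_of_nonneg_of_nonpos (by simpa using hle hs.le) (by simpa using hs.le)

theorem dirDeriv_apply_eq_zero_of_eqOn {S : Set X} (hS : UniqueDiffOn ℝ S) {f : SmoothFun X}
    (hf : ∀ z ∈ S, f z = 0) (v : X) : ∀ z ∈ S, dirDeriv v f z = 0 := by
  intro z hz
  have hzero : HasFDerivWithinAt f (0 : X →L[ℝ] ℝ) S z :=
    (hasFDerivWithinAt_const (0 : ℝ) z S).congr hf (hf z hz)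
  rw [dirDeriv_apply,
    (hS z hz).eq ((f.differentiable z).hasFDerivAt.hasFDerivWithinAt) hzero]
  rfl

theorem eventually_translate {z v : X} {Q : X → Prop} (h : ∀ᶠ z' in 𝓝 z, Q z') :
    ∀ᶠ s : ℝ in 𝓝 0, Q (z + s • v) := by
  have hcont : Continuous fun s : ℝ => z + s • v := by fun_prop
  exact (by simpa using hcont.tendsto 0 : Filter.Tendsto _ _ (𝓝 z)).eventually h

theorem continuous_dirDeriv_dirDeriv_apply (f : SmoothFun X) :
    Continuous fun p : X × X => dirDeriv p.2 (dirDeriv p.2 f) p.1 := by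
  simp only [dirDeriv_dirDeriv_apply]
  have h : Continuous (fderiv ℝ (fderiv ℝ f)) :=
    f.contDiff_fderiv.continuous_fderiv (by simp)
  exact ((h.comp continuous_fst).clm_apply continuous_snd).clm_apply continuous_snd

theorem continuous_dirDeriv_apply (f : SmoothFun X) :
    Continuous fun p : X × X => dirDeriv p.2 f p.1 :=
  (f.contDiff_fderiv.continuous.comp continuous_fst).clm_apply continuous_snd

end Calculus

section SpaceTime

variable {E : Type*} [NormedAddCommGroup E] [InnerProductSpace ℝ E]

/-- The derivative `∂_ξ` in the spatial direction `ξ` of functions on space-time `E × ℝ`. -/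
noncomputable def spaceDeriv :
    E →ₗ[ℝ] Derivation ℝ (SmoothFun (E × ℝ)) (SmoothFun (E × ℝ)) :=
  dirDeriv ∘ₗ LinearMap.inl ℝ E ℝ

/-- The time derivative `∂_t` of functions on space-time `E × ℝ`. -/
noncomputable def timeDeriv : Derivation ℝ (SmoothFun (E × ℝ)) (SmoothFun (E × ℝ)) :=
  dirDeriv (0, 1)

theorem spaceDeriv_eq_dirDeriv (ξ : E) : spaceDeriv ξ = dirDeriv (ξ, (0 : ℝ)) := rfl

theorem spaceDeriv_apply (ξ : E) (f : SmoothFun (E × ℝ)) (z : E × ℝ) :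
    spaceDeriv ξ f z = fderiv ℝ f z (ξ, 0) := rfl

theorem spaceDeriv_comm (ξ η : E) (f : SmoothFun (E × ℝ)) :
    spaceDeriv ξ (spaceDeriv η f) = spaceDeriv η (spaceDeriv ξ f) :=
  dirDeriv_comm _ _ f

theorem dirDeriv_timeDeriv (v : E × ℝ) (f : SmoothFun (E × ℝ)) :
    dirDeriv v (timeDeriv f) = timeDeriv (dirDeriv v f) :=
  dirDeriv_comm v _ f

variable [FiniteDimensional ℝ E]

/-- The spatial gradient `∇f(z)`. -/
noncomputable def spaceGrad (f : SmoothFun (E × ℝ)) (z : E × ℝ) : E :=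
  (InnerProductSpace.toDual ℝ E).symm (fderiv ℝ f z ∘L ContinuousLinearMap.inl ℝ E ℝ)

theorem inner_spaceGrad (f : SmoothFun (E × ℝ)) (z : E × ℝ) (ξ : E) :
    ⟪spaceGrad f z, ξ⟫ = spaceDeriv ξ f z := by
  simp [spaceGrad, spaceDeriv_apply]

/-- The carré du champ `g ↦ ⟨∇f, ∇g⟩` in the spatial directions, as a derivation in `g`. -/
noncomputable def gradInner (f : SmoothFun (E × ℝ)) :
    Derivation ℝ (SmoothFun (E × ℝ)) (SmoothFun (E × ℝ)) :=
  ∑ i, spaceDeriv (stdOrthonormalBasis ℝ E i) f • spaceDeriv (stdOrthonormalBasis ℝ E i)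

/-- The Laplacian in the spatial directions. -/
noncomputable def laplace : SmoothFun (E × ℝ) →ₗ[ℝ] SmoothFun (E × ℝ) :=
  ∑ i, (spaceDeriv (stdOrthonormalBasis ℝ E i)).toLinearMap ∘ₗ
    (spaceDeriv (stdOrthonormalBasis ℝ E i)).toLinearMap

theorem gradInner_eq_sum (f g : SmoothFun (E × ℝ)) :
    gradInner f g = ∑ i, spaceDeriv (stdOrthonormalBasis ℝ E i) f *
      spaceDeriv (stdOrthonormalBasis ℝ E i) g := by
  simp only [gradInner, ← Derivation.coeFnAddMonoidHom_apply (∑ _, _), map_sum, Finset.sum_apply,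
    Derivation.coeFnAddMonoidHom_apply, Derivation.smul_apply, smul_eq_mul]

theorem laplace_eq_sum (f : SmoothFun (E × ℝ)) :
    laplace f = ∑ i, spaceDeriv (stdOrthonormalBasis ℝ E i)
      (spaceDeriv (stdOrthonormalBasis ℝ E i) f) := by
  simp [laplace, LinearMap.sum_apply]

theorem gradInner_apply_eq_inner (f g : SmoothFun (E × ℝ)) (z : E × ℝ) :
    gradInner f g z = ⟪spaceGrad f z, spaceGrad g z⟫ := by
  rw [gradInner_eq_sum, ← (stdOrthonormalBasis ℝ E).sum_inner_mul_inner]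
  simp [real_inner_comm (spaceGrad g z), inner_spaceGrad]

theorem gradInner_apply (f g : SmoothFun (E × ℝ)) (z : E × ℝ) :
    gradInner f g z = spaceDeriv (spaceGrad f z) g z := by
  rw [gradInner_apply_eq_inner, real_inner_comm, inner_spaceGrad]

theorem gradInner_self_apply (f : SmoothFun (E × ℝ)) (z : E × ℝ) :
    gradInner f f z = ‖spaceGrad f z‖ ^ 2 := by
  rw [gradInner_apply_eq_inner, real_inner_self_eq_norm_sq]

theorem gradInner_comm (f g : SmoothFun (E × ℝ)) : gradInner f g = gradInner g f := by
  simp only [gradInner_eq_sum, mul_comm]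

theorem gradInner_add_left (f g h : SmoothFun (E × ℝ)) :
    gradInner (f + g) h = gradInner f h + gradInner g h := by
  simp only [gradInner_comm _ h, map_add]

theorem dirDeriv_gradInner (v : E × ℝ) (f g : SmoothFun (E × ℝ)) :
    dirDeriv v (gradInner f g) = gradInner (dirDeriv v f) g + gradInner f (dirDeriv v g) := by
  simp only [gradInner_eq_sum, map_sum, Derivation.leibniz, smul_eq_mul, spaceDeriv_eq_dirDeriv,
    dirDeriv_comm v, ← Finset.sum_add_distrib]
  exact Finset.sum_congr rfl fun i _ => by ring

theorem gradInner_gradInner_apply (f g h : SmoothFun (E × ℝ)) (z : E × ℝ) :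
    gradInner f (gradInner g h) z = spaceDeriv (spaceGrad h z) (spaceDeriv (spaceGrad f z) g) z
      + spaceDeriv (spaceGrad g z) (spaceDeriv (spaceGrad f z) h) z := by
  rw [gradInner_apply, spaceDeriv_eq_dirDeriv, dirDeriv_gradInner, gradInner_comm _ h,
    SmoothFun.add_apply, gradInner_apply h, gradInner_apply g]

theorem dirDeriv_laplace (v : E × ℝ) (f : SmoothFun (E × ℝ)) :
    dirDeriv v (laplace f) = laplace (dirDeriv v f) := by
  simp only [laplace_eq_sum, map_sum, spaceDeriv_eq_dirDeriv, dirDeriv_comm v]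

theorem laplace_mul (f g : SmoothFun (E × ℝ)) :
    laplace (f * g) = f * laplace g + g * laplace f + 2 * gradInner f g := by
  simp only [laplace_eq_sum, gradInner_eq_sum, map_add, Derivation.leibniz, smul_eq_mul,
    Finset.mul_sum, ← Finset.sum_add_distrib]
  exact Finset.sum_congr rfl fun _ _ => by ring

end SpaceTime

section Operators

variable {E : Type*} [NormedAddCommGroup E] [InnerProductSpace ℝ E] [FiniteDimensional ℝ E]

/-- The nonparametric mean curvature flow operator multiplied by `1 + |∇u|²`; the term
`⟨∇u, (D²u)∇u⟩` appears as `½ ⟨∇u, ∇|∇u|²⟩`. -/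
noncomputable def mcfOp (u : SmoothFun (E × ℝ)) : SmoothFun (E × ℝ) :=
  (1 + gradInner u u) * (timeDeriv u - laplace u) + (1 / 2 : ℝ) • gradInner u (gradInner u u)

/-- The linearization of `mcfOp` at `u`. -/
noncomputable def linOp (u : SmoothFun (E × ℝ)) : SmoothFun (E × ℝ) →ₗ[ℝ] SmoothFun (E × ℝ) :=
  (2 * (timeDeriv u - laplace u)) • (gradInner u).toLinearMap
    + (1 + gradInner u u) • (timeDeriv.toLinearMap - laplace)
    + (1 / 2 : ℝ) • (gradInner (gradInner u u)).toLinearMap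
    + (gradInner u).toLinearMap ∘ₗ (gradInner u).toLinearMap

/-- The second variation of `mcfOp` at `u` in the direction `f`. -/
noncomputable def mcfSecondVar (u f : SmoothFun (E × ℝ)) : SmoothFun (E × ℝ) :=
  2 * gradInner f f * (timeDeriv u - laplace u)
    + 4 * gradInner u f * (timeDeriv f - laplace f)
    + 2 * gradInner f (gradInner u f) + gradInner u (gradInner f f)

theorem linOp_eq (u f : SmoothFun (E × ℝ)) :
    linOp u f = 2 * gradInner u f * (timeDeriv u - laplace u)
      + (1 + gradInner u u) * (timeDeriv f - laplace f)
      + (1 / 2 : ℝ) • gradInner (gradInner u u) f + gradInner u (gradInner u f) := by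
  simp only [linOp, LinearMap.add_apply, LinearMap.smul_apply, LinearMap.sub_apply,
    LinearMap.comp_apply, Derivation.coeFn_coe, smul_eq_mul]
  ring

theorem dirDeriv_mcfOp (v : E × ℝ) (u : SmoothFun (E × ℝ)) :
    dirDeriv v (mcfOp u) = linOp u (dirDeriv v u) := by
  simp only [mcfOp, linOp_eq, map_add, map_sub, Derivation.leibniz, Derivation.map_smul,
    Derivation.map_one_eq_zero, dirDeriv_laplace, dirDeriv_gradInner, dirDeriv_timeDeriv,
    gradInner_comm (dirDeriv v u), smul_eq_mul]
  simp only [gradInner_comm (gradInner u u)]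
  ext z
  simp only [SmoothFun.add_apply, SmoothFun.mul_apply, SmoothFun.one_apply, SmoothFun.sub_apply,
    SmoothFun.smul_apply, SmoothFun.ofNat_apply, SmoothFun.zero_apply]
  ring

theorem dirDeriv_linOp_dirDeriv (v : E × ℝ) (u : SmoothFun (E × ℝ)) :
    dirDeriv v (linOp u (dirDeriv v u))
      = linOp u (dirDeriv v (dirDeriv v u)) + mcfSecondVar u (dirDeriv v u) := by
  have htwo : dirDeriv v (2 : SmoothFun (E × ℝ)) = 0 := (dirDeriv v).map_natCast 2
  simp only [mcfSecondVar, linOp_eq, map_add, map_sub, Derivation.leibniz, Derivation.map_smul,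
    Derivation.map_one_eq_zero, dirDeriv_laplace, dirDeriv_gradInner, dirDeriv_timeDeriv,
    gradInner_comm (dirDeriv v u) u, smul_eq_mul, htwo, gradInner_add_left]
  ext z
  simp only [SmoothFun.add_apply, SmoothFun.mul_apply, SmoothFun.one_apply, SmoothFun.sub_apply,
    SmoothFun.smul_apply, SmoothFun.ofNat_apply, SmoothFun.zero_apply]
  simp only [gradInner_comm (gradInner u (dirDeriv v u))]
  ring

theorem linOp_mul (u f g : SmoothFun (E × ℝ)) :
    linOp u (f * g) = f * linOp u g + g * linOp u f
      - 2 * (1 + gradInner u u) * gradInner f g + 2 * gradInner u f * gradInner u g := by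
  simp only [linOp_eq, laplace_mul, Derivation.leibniz, map_add, smul_eq_mul]
  ext z
  simp only [SmoothFun.add_apply, SmoothFun.mul_apply, SmoothFun.one_apply, SmoothFun.sub_apply,
    SmoothFun.smul_apply, SmoothFun.ofNat_apply]
  ring

theorem linOp_algebraMap (u : SmoothFun (E × ℝ)) (c : ℝ) :
    linOp u (algebraMap ℝ _ c) = 0 := by
  simp [linOp_eq, laplace_eq_sum]

theorem linOp_apply (u f : SmoothFun (E × ℝ)) (z : E × ℝ) :
    linOp u f z = 2 * spaceDeriv (spaceGrad u z) f z * (timeDeriv u z - laplace u z)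
      + (1 + ‖spaceGrad u z‖ ^ 2) * (timeDeriv f z - laplace f z)
      + 2 * spaceDeriv (spaceGrad (spaceDeriv (spaceGrad u z) u) z) f z
      + spaceDeriv (spaceGrad u z) (spaceDeriv (spaceGrad u z) f) z := by
  have hmix : spaceDeriv (spaceGrad f z) (spaceDeriv (spaceGrad u z) u) z
      = spaceDeriv (spaceGrad (spaceDeriv (spaceGrad u z) u) z) f z := by
    rw [← gradInner_apply, gradInner_comm, gradInner_apply]
  simp only [linOp_eq, gradInner_comm (gradInner u u), SmoothFun.add_apply, SmoothFun.mul_apply,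
    SmoothFun.sub_apply, SmoothFun.smul_apply, SmoothFun.one_apply, SmoothFun.ofNat_apply,
    gradInner_gradInner_apply, gradInner_self_apply]
  rw [gradInner_apply u f, spaceDeriv_comm (spaceGrad u z) (spaceGrad f z), hmix]
  ring

theorem mcfOp_apply (u : SmoothFun (E × ℝ)) (z : E × ℝ) :
    mcfOp u z = (1 + ‖spaceGrad u z‖ ^ 2) * (timeDeriv u z - laplace u z)
      + spaceDeriv (spaceGrad u z) (spaceDeriv (spaceGrad u z) u) z := by
  simp only [mcfOp, SmoothFun.add_apply, SmoothFun.mul_apply, SmoothFun.sub_apply,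
    SmoothFun.smul_apply, SmoothFun.one_apply, gradInner_gradInner_apply, gradInner_self_apply]
  ring

end Operators

section Trace

variable {E : Type*} [NormedAddCommGroup E] [InnerProductSpace ℝ E]

/-- Lagrange's identity: sum `B` over the vectors `⟪b i, p⟫ b j - ⟪b j, p⟫ b i`. -/
theorem apply_self_le_norm_sq_mul_trace {ι : Type*} [Fintype ι] (b : OrthonormalBasis ι ℝ E)
    {B : E →ₗ[ℝ] E →ₗ[ℝ] ℝ} (hB : ∀ e, 0 ≤ B e e) (p : E) :
    B p p ≤ ‖p‖ ^ 2 * ∑ i, B (b i) (b i) := by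
  have hBp : B p p = ∑ i, ∑ j, ⟪b i, p⟫ * ⟪b j, p⟫ * B (b i) (b j) := by
    conv_lhs => rw [← b.sum_repr' p]
    simp only [map_sum, LinearMap.sum_apply, map_smul, LinearMap.smul_apply, smul_eq_mul,
      Finset.mul_sum]
    rw [Finset.sum_comm]
    exact Finset.sum_congr rfl fun i _ => Finset.sum_congr rfl fun j _ => by ring
  have hnorm : ‖p‖ ^ 2 = ∑ i, ⟪b i, p⟫ ^ 2 := (b.sum_sq_inner_right p).symm
  have hnonneg : 0 ≤ ∑ i, ∑ j, B (⟪b i, p⟫ • b j - ⟪b j, p⟫ • b i)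
      (⟪b i, p⟫ • b j - ⟪b j, p⟫ • b i) :=
    Finset.sum_nonneg fun i _ => Finset.sum_nonneg fun j _ => hB _
  have hexpand : ∑ i, ∑ j, B (⟪b i, p⟫ • b j - ⟪b j, p⟫ • b i)
      (⟪b i, p⟫ • b j - ⟪b j, p⟫ • b i)
      = ∑ i, ∑ j, (⟪b i, p⟫ ^ 2 * B (b j) (b j) - ⟪b i, p⟫ * ⟪b j, p⟫ * B (b i) (b j))
        + ∑ i, ∑ j, (⟪b j, p⟫ ^ 2 * B (b i) (b i) - ⟪b j, p⟫ * ⟪b i, p⟫ * B (b j) (b i)) := by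
    simp only [← Finset.sum_add_distrib]
    refine Finset.sum_congr rfl fun i _ => Finset.sum_congr rfl fun j _ => ?_
    simp only [map_sub, map_smul, LinearMap.sub_apply, LinearMap.smul_apply, smul_eq_mul]
    ring
  have hhalf : ∑ i, ∑ j, (⟪b i, p⟫ ^ 2 * B (b j) (b j) - ⟪b i, p⟫ * ⟪b j, p⟫ * B (b i) (b j))
      = ‖p‖ ^ 2 * ∑ i, B (b i) (b i) - B p p := by
    rw [hnorm, hBp, Finset.sum_mul_sum]
    simp only [Finset.sum_sub_distrib]
  rw [hexpand, Finset.sum_comm (f := fun i j =>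
    ⟪b j, p⟫ ^ 2 * B (b i) (b i) - ⟪b j, p⟫ * ⟪b i, p⟫ * B (b j) (b i)), hhalf] at hnonneg
  linarith

variable [FiniteDimensional ℝ E]

/-- The spatial Hessian at a point, as a bilinear form. -/
noncomputable def spaceHess (f : SmoothFun (E × ℝ)) (z : E × ℝ) : E →ₗ[ℝ] E →ₗ[ℝ] ℝ :=
  LinearMap.mk₂ ℝ (fun ξ η => spaceDeriv ξ (spaceDeriv η f) z)
    (by intros; simp) (by intros; simp) (by intros; simp) (by intros; simp)

theorem traced_second_order {F J K : SmoothFun (E × ℝ)} {z : E × ℝ} {y : E}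
    (h : ∀ e : E, 0 ≤ spaceDeriv e (spaceDeriv e F) z + 4 * (⟪y, e⟫ * spaceDeriv e J z)
      + 2 * (⟪y, e⟫ ^ 2 * K z)) (p : E) :
    spaceDeriv p (spaceDeriv p F) z + 4 * (⟪y, p⟫ * spaceDeriv p J z) + 2 * (⟪y, p⟫ ^ 2 * K z)
      ≤ (1 + ‖p‖ ^ 2) * (laplace F z + 4 * spaceDeriv y J z + 2 * (‖y‖ ^ 2 * K z)) := by
  let b := stdOrthonormalBasis ℝ E
  let l (x : E) : E →ₗ[ℝ] ℝ := innerₛₗ ℝ x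
  let B := spaceHess F z + (4 : ℝ) • (l y).smulRight (l (spaceGrad J z))
    + (2 * K z) • (l y).smulRight (l y)
  have hB (e : E) : B e e = spaceDeriv e (spaceDeriv e F) z + 4 * (⟪y, e⟫ * spaceDeriv e J z)
      + 2 * (⟪y, e⟫ ^ 2 * K z) := by
    simp only [B, l, spaceHess, LinearMap.add_apply, LinearMap.smul_apply, LinearMap.coe_smulRight,
      innerₛₗ_apply_apply, LinearMap.mk₂_apply, inner_spaceGrad, smul_eq_mul]
    ring
  have hBnonneg (e : E) : 0 ≤ B e e := (h e).trans_eq (hB e).symm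
  have htrace : ∑ i, B (b i) (b i) = laplace F z + 4 * spaceDeriv y J z + 2 * (‖y‖ ^ 2 * K z) := by
    have hJ : ∑ i, ⟪y, b i⟫ * spaceDeriv (b i) J z = spaceDeriv y J z := by
      simp only [← inner_spaceGrad, real_inner_comm _ (spaceGrad J z)]
      simpa [real_inner_comm y] using b.sum_inner_mul_inner y (spaceGrad J z)
    simp only [hB, Finset.sum_add_distrib, ← Finset.mul_sum, ← Finset.sum_mul, hJ,
      b.sum_sq_inner_left, laplace_eq_sum, SmoothFun.sum_apply, b]
  rw [← hB, ← htrace, add_mul, one_mul]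
  exact (apply_self_le_norm_sq_mul_trace b hBnonneg p).trans
    (le_add_of_nonneg_left (Finset.sum_nonneg fun i _ => hBnonneg _))

end Trace

section Pinching

variable {E : Type*} [NormedAddCommGroup E] [InnerProductSpace ℝ E]

/-- The metric `I + ∇u ∇uᵀ` induced on the graph of `u`, evaluated on fixed vectors. -/
noncomputable def metricForm (u : SmoothFun (E × ℝ)) (ξ η : E) : SmoothFun (E × ℝ) :=
  algebraMap ℝ _ ⟪ξ, η⟫ + spaceDeriv ξ u * spaceDeriv η u

/-- The pinching form `D²u - θ (I + ∇u ∇uᵀ)`, evaluated on fixed vectors. -/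
noncomputable def pinch (θ u : SmoothFun (E × ℝ)) (ξ η : E) : SmoothFun (E × ℝ) :=
  spaceDeriv ξ (spaceDeriv η u) - θ * metricForm u ξ η

variable {θ u : SmoothFun (E × ℝ)} {ξ : E} {z : E × ℝ}

theorem metricForm_apply (u : SmoothFun (E × ℝ)) (ξ η : E) (z : E × ℝ) :
    metricForm u ξ η z = ⟪ξ, η⟫ + spaceDeriv ξ u z * spaceDeriv η u z := rfl

theorem metricForm_self_pos (u : SmoothFun (E × ℝ)) (hξ : ξ ≠ 0) (z : E × ℝ) :
    0 < metricForm u ξ ξ z := by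
  rw [metricForm_apply]
  exact add_pos_of_pos_of_nonneg (real_inner_self_pos.2 hξ) (mul_self_nonneg _)

theorem pinch_apply (θ u : SmoothFun (E × ℝ)) (ξ η : E) (z : E × ℝ) :
    pinch θ u ξ η z = spaceDeriv ξ (spaceDeriv η u) z - θ z * metricForm u ξ η z := rfl

theorem spaceDeriv_spaceDeriv_of_null {η : E} (hnull : pinch θ u ξ η z = 0) :
    spaceDeriv ξ (spaceDeriv η u) z = θ z * metricForm u ξ η z :=
  sub_eq_zero.1 hnull

theorem spaceDeriv_metricForm (u : SmoothFun (E × ℝ)) (e ξ η : E) :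
    spaceDeriv e (metricForm u ξ η) = spaceDeriv ξ u * spaceDeriv e (spaceDeriv η u)
      + spaceDeriv η u * spaceDeriv e (spaceDeriv ξ u) := by
  simp only [metricForm, map_add, Derivation.map_algebraMap, Derivation.leibniz, smul_eq_mul,
    zero_add]

theorem pinch_smul_right (θ u : SmoothFun (E × ℝ)) (ξ η : E) (c : ℝ) :
    pinch θ u ξ (c • η) = c • pinch θ u ξ η := by
  ext z
  simp only [pinch_apply, metricForm_apply, map_smul, Derivation.smul_apply,
    Derivation.map_smul, SmoothFun.smul_apply, real_inner_smul_right]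
  ring

theorem pinch_smul_smul (θ u : SmoothFun (E × ℝ)) (η : E) (c : ℝ) :
    pinch θ u (c • η) (c • η) = c ^ 2 • pinch θ u η η := by
  ext z
  simp only [pinch_apply, metricForm_apply, map_smul, Derivation.smul_apply,
    Derivation.map_smul, SmoothFun.smul_apply, real_inner_smul_right, real_inner_smul_left]
  ring

theorem pinch_add_smul_apply (θ u : SmoothFun (E × ℝ)) (ξ η : E) (s : ℝ) (z : E × ℝ) :
    pinch θ u (ξ + s • η) (ξ + s • η) z
      = pinch θ u ξ ξ z + 2 * s * pinch θ u ξ η z + s ^ 2 * pinch θ u η η z := by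
  simp only [pinch_apply, metricForm_apply, map_add, map_smul, Derivation.add_apply,
    Derivation.smul_apply, Derivation.map_smul, SmoothFun.add_apply, SmoothFun.smul_apply,
    inner_add_left, inner_add_right, real_inner_smul_left, real_inner_smul_right,
    spaceDeriv_comm η ξ u, real_inner_comm ξ η]
  ring

theorem pinch_eq_zero_of_null (hP : ∀ η, 0 ≤ pinch θ u η η z) (hnull : pinch θ u ξ ξ z = 0)
    (η : E) : pinch θ u ξ η z = 0 := by
  have hquad (s : ℝ) : 0 ≤ pinch θ u η η z * (s * s) + (2 * pinch θ u ξ η z) * s + 0 := by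
    have := hP (ξ + s • η)
    rw [pinch_add_smul_apply, hnull] at this
    linarith
  have hdiscrim := discrim_le_zero hquad
  rw [discrim] at hdiscrim
  nlinarith [sq_nonneg (pinch θ u ξ η z)]

section Touching

variable (hP : ∀ᶠ z' in 𝓝 z, z'.2 ≤ z.2 → ∀ η, 0 ≤ pinch θ u η η z')
  (hnull : pinch θ u ξ ξ z = 0)
include hP hnull

theorem spaceDeriv_pinch_eq_zero_of_null (e : E) : spaceDeriv e (pinch θ u ξ ξ) z = 0 := by
  refine dirDeriv_eq_zero_of_isMinOn_line ?_
  filter_upwards [eventually_translate (v := (e, (0 : ℝ))) hP] with s hs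
  exact hnull.trans_le (hs (by simp) ξ)

theorem timeDeriv_pinch_nonpos_of_null : timeDeriv (pinch θ u ξ ξ) z ≤ 0 := by
  refine dirDeriv_nonpos_of_left_min ?_
  filter_upwards [eventually_translate (v := ((0 : E), (1 : ℝ))) hP] with s hs hs₀
  exact hnull.trans_le (hs (by simpa using hs₀) ξ)

theorem pinch_second_order_of_null (e η : E) :
    0 ≤ spaceDeriv e (spaceDeriv e (pinch θ u ξ ξ)) z + 4 * spaceDeriv e (pinch θ u ξ η) z
      + 2 * pinch θ u η η z := by
  refine second_order_nonneg hnull ?_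
  filter_upwards [eventually_translate (v := (e, (0 : ℝ))) hP] with s hs
  exact (hs (by simp) (ξ + s • η)).trans_eq (pinch_add_smul_apply θ u ξ η s _)

end Touching

end Pinching

section TouchingPoint

variable {E : Type*} [NormedAddCommGroup E] [InnerProductSpace ℝ E] [FiniteDimensional ℝ E]
  {θ u : SmoothFun (E × ℝ)} {ξ : E} {z : E × ℝ}

theorem spaceDeriv_spaceGrad_self (u : SmoothFun (E × ℝ)) (z : E × ℝ) :
    spaceDeriv (spaceGrad u z) u z = ‖spaceGrad u z‖ ^ 2 := by
  rw [← inner_spaceGrad, real_inner_self_eq_norm_sq]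

theorem metricForm_spaceGrad_right (u : SmoothFun (E × ℝ)) (ξ : E) (z : E × ℝ) :
    metricForm u ξ (spaceGrad u z) z = (1 + ‖spaceGrad u z‖ ^ 2) * spaceDeriv ξ u z := by
  rw [metricForm_apply, real_inner_comm, inner_spaceGrad, spaceDeriv_spaceGrad_self]
  ring

theorem gradInner_metricForm_self (f u : SmoothFun (E × ℝ)) (ξ : E) :
    gradInner f (metricForm u ξ ξ) = 2 * spaceDeriv ξ u * gradInner f (spaceDeriv ξ u) := by
  simp only [metricForm, map_add, Derivation.map_algebraMap, Derivation.leibniz, smul_eq_mul]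
  ring

theorem linOp_metricForm_self (hlin : linOp u (spaceDeriv ξ u) z = 0) :
    linOp u (metricForm u ξ ξ) z
      = 2 * gradInner u (spaceDeriv ξ u) z ^ 2
        - 2 * (1 + ‖spaceGrad u z‖ ^ 2) * gradInner (spaceDeriv ξ u) (spaceDeriv ξ u) z := by
  simp only [metricForm, map_add, linOp_algebraMap, linOp_mul, SmoothFun.add_apply,
    SmoothFun.sub_apply, SmoothFun.mul_apply, SmoothFun.zero_apply, SmoothFun.one_apply,
    SmoothFun.ofNat_apply, gradInner_self_apply u, hlin]
  ring

theorem linOp_pinch_self (θ : SmoothFun (E × ℝ)) (hlin : linOp u (spaceDeriv ξ u) z = 0) :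
    linOp u (pinch θ u ξ ξ) z = linOp u (spaceDeriv ξ (spaceDeriv ξ u)) z
      - metricForm u ξ ξ z * linOp u θ z
      + 2 * θ z * ((1 + ‖spaceGrad u z‖ ^ 2) * gradInner (spaceDeriv ξ u) (spaceDeriv ξ u) z
        - gradInner u (spaceDeriv ξ u) z ^ 2)
      + 4 * spaceDeriv ξ u z * ((1 + ‖spaceGrad u z‖ ^ 2) * gradInner θ (spaceDeriv ξ u) z
        - gradInner u θ z * gradInner u (spaceDeriv ξ u) z) := by
  rw [pinch, map_sub, linOp_mul]
  simp only [SmoothFun.add_apply, SmoothFun.sub_apply, SmoothFun.mul_apply, SmoothFun.one_apply,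
    SmoothFun.ofNat_apply, linOp_metricForm_self hlin, gradInner_metricForm_self,
    gradInner_self_apply u]
  ring

section NullDirection

variable (hnull : ∀ η, pinch θ u ξ η z = 0)
include hnull

theorem spaceGrad_spaceDeriv_of_null :
    spaceGrad (spaceDeriv ξ u) z = θ z • (ξ + spaceDeriv ξ u z • spaceGrad u z) := by
  refine ext_inner_right ℝ fun η => ?_
  rw [inner_spaceGrad, spaceDeriv_comm, spaceDeriv_spaceDeriv_of_null (hnull η), metricForm_apply,
    real_inner_smul_left, inner_add_left, real_inner_smul_left, inner_spaceGrad]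

theorem gradInner_spaceDeriv_of_null (f : SmoothFun (E × ℝ)) :
    gradInner (spaceDeriv ξ u) f z
      = θ z * (spaceDeriv ξ f z + spaceDeriv ξ u z * spaceDeriv (spaceGrad u z) f z) := by
  rw [gradInner_apply, spaceGrad_spaceDeriv_of_null hnull]
  simp only [map_add, map_smul, Derivation.add_apply, Derivation.smul_apply, SmoothFun.add_apply,
    SmoothFun.smul_apply]

theorem spaceDeriv_spaceGrad_spaceDeriv_of_null :
    spaceDeriv (spaceGrad u z) (spaceDeriv ξ u) z
      = θ z * ((1 + ‖spaceGrad u z‖ ^ 2) * spaceDeriv ξ u z) := by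
  rw [spaceDeriv_comm, spaceDeriv_spaceDeriv_of_null (hnull _), metricForm_spaceGrad_right]

theorem gradInner_self_spaceDeriv_of_null :
    gradInner (spaceDeriv ξ u) (spaceDeriv ξ u) z = θ z ^ 2 *
      (metricForm u ξ ξ z + (1 + ‖spaceGrad u z‖ ^ 2) * spaceDeriv ξ u z ^ 2) := by
  rw [gradInner_spaceDeriv_of_null hnull, spaceDeriv_spaceGrad_spaceDeriv_of_null hnull,
    spaceDeriv_spaceDeriv_of_null (hnull ξ)]
  ring

theorem gradInner_gradInner_self_spaceDeriv_of_null :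
    gradInner u (gradInner (spaceDeriv ξ u) (spaceDeriv ξ u)) z
      = 2 * θ z * (spaceDeriv ξ (spaceDeriv ξ (spaceDeriv (spaceGrad u z) u)) z
        + spaceDeriv ξ u z
          * spaceDeriv (spaceGrad u z) (spaceDeriv (spaceGrad u z) (spaceDeriv ξ u)) z) := by
  rw [gradInner_gradInner_apply, ← gradInner_apply, gradInner_spaceDeriv_of_null hnull,
    spaceDeriv_comm (spaceGrad u z) ξ u]
  ring

theorem gradInner_spaceDeriv_gradInner_of_null :
    gradInner (spaceDeriv ξ u) (gradInner u (spaceDeriv ξ u)) z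
      = θ z ^ 3 * (metricForm u ξ ξ z
          + 2 * (1 + ‖spaceGrad u z‖ ^ 2) * spaceDeriv ξ u z ^ 2)
        + θ z ^ 2 * spaceDeriv ξ u z ^ 2
          * spaceDeriv (spaceGrad u z) (spaceDeriv (spaceGrad u z) u) z
        + θ z * (spaceDeriv ξ (spaceDeriv ξ (spaceDeriv (spaceGrad u z) u)) z
          + spaceDeriv ξ u z
            * spaceDeriv (spaceGrad u z) (spaceDeriv (spaceGrad u z) (spaceDeriv ξ u)) z) := by
  have hξp := spaceDeriv_spaceGrad_spaceDeriv_of_null hnull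
  have hξp' := spaceDeriv_comm ξ (spaceGrad u z) u ▸ hξp
  rw [gradInner_gradInner_apply, ← gradInner_apply, gradInner_spaceDeriv_of_null hnull,
    spaceGrad_spaceDeriv_of_null hnull]
  simp only [map_add, map_smul, Derivation.add_apply, Derivation.smul_apply, Derivation.map_smul,
    SmoothFun.add_apply, SmoothFun.smul_apply, spaceDeriv_spaceDeriv_of_null (hnull ξ), hξp]
  rw [spaceDeriv_comm (spaceGrad u z) ξ (spaceDeriv ξ u), spaceDeriv_comm (spaceGrad u z) ξ u, hξp']
  ring

theorem mcfSecondVar_of_null (hmcf : mcfOp u z = 0) (hlin : linOp u (spaceDeriv ξ u) z = 0) :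
    mcfSecondVar u (spaceDeriv ξ u) z
      = 4 * θ z * spaceDeriv ξ (spaceDeriv ξ (spaceDeriv (spaceGrad u z) u)) z
        + 2 * θ z ^ 3 * metricForm u ξ ξ z
        - 4 * θ z ^ 3 * (1 + ‖spaceGrad u z‖ ^ 2) * spaceDeriv ξ u z ^ 2
        - 2 * θ z ^ 2 * metricForm u ξ ξ z
          * spaceDeriv (spaceGrad u z) (spaceDeriv (spaceGrad u z) u) z
          / (1 + ‖spaceGrad u z‖ ^ 2) := by
  have hξp := spaceDeriv_spaceGrad_spaceDeriv_of_null hnull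
  have hmix : spaceDeriv (spaceGrad (spaceDeriv (spaceGrad u z) u) z) (spaceDeriv ξ u) z
      = θ z * (θ z * ((1 + ‖spaceGrad u z‖ ^ 2) * spaceDeriv ξ u z) + spaceDeriv ξ u z *
        spaceDeriv (spaceGrad u z) (spaceDeriv (spaceGrad u z) u) z) := by
    rw [← gradInner_apply, gradInner_comm, gradInner_spaceDeriv_of_null hnull, spaceDeriv_comm ξ,
      hξp]
  rw [mcfOp_apply] at hmcf
  rw [linOp_apply, hmix, hξp] at hlin
  simp only [mcfSecondVar, SmoothFun.add_apply, SmoothFun.mul_apply, SmoothFun.sub_apply,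
    SmoothFun.ofNat_apply, gradInner_self_spaceDeriv_of_null hnull,
    gradInner_apply u (spaceDeriv ξ u), hξp, gradInner_gradInner_self_spaceDeriv_of_null hnull,
    gradInner_spaceDeriv_gradInner_of_null hnull]
  set w := 1 + ‖spaceGrad u z‖ ^ 2
  have hw₀ : w ≠ 0 := by positivity
  field_simp
  linear_combination 4 * θ z * w * spaceDeriv ξ u z * hlin
    + (2 * θ z ^ 2 * metricForm u ξ ξ z - 6 * θ z ^ 2 * w * spaceDeriv ξ u z ^ 2) * hmcf

theorem spaceDeriv_pinch_spaceGrad_of_null :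
    spaceDeriv ξ (pinch θ u ξ (spaceGrad u z)) z
      = spaceDeriv ξ (spaceDeriv ξ (spaceDeriv (spaceGrad u z) u)) z
        - spaceDeriv ξ θ z * ((1 + ‖spaceGrad u z‖ ^ 2) * spaceDeriv ξ u z)
        - θ z ^ 2 * (metricForm u ξ ξ z * ‖spaceGrad u z‖ ^ 2
          + (1 + ‖spaceGrad u z‖ ^ 2) * spaceDeriv ξ u z ^ 2) := by
  have hmetric : spaceDeriv ξ (metricForm u ξ (spaceGrad u z)) z
      = θ z * (metricForm u ξ ξ z * ‖spaceGrad u z‖ ^ 2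
        + (1 + ‖spaceGrad u z‖ ^ 2) * spaceDeriv ξ u z ^ 2) := by
    simp only [spaceDeriv_metricForm, SmoothFun.add_apply, SmoothFun.mul_apply,
      spaceDeriv_spaceGrad_self]
    rw [spaceDeriv_spaceDeriv_of_null (hnull ξ), spaceDeriv_spaceDeriv_of_null (hnull _),
      metricForm_spaceGrad_right]
    ring
  simp only [pinch, map_sub, Derivation.leibniz, smul_eq_mul, SmoothFun.sub_apply,
    SmoothFun.add_apply, SmoothFun.mul_apply, hmetric, metricForm_spaceGrad_right]
  ring

end NullDirection

/-- The witness comes from the Sherman–Morrison formula for `(1 + |p|²) I - p pᵀ`. -/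
theorem exists_smul_eq_inner_smul_sub {H : Type*} [NormedAddCommGroup H] [InnerProductSpace ℝ H]
    (p ξ : H) (τ : ℝ) :
    ∃ y : H, (1 + ‖p‖ ^ 2) • y = ⟪y, p⟫ • p - τ • ξ ∧
      (1 + ‖p‖ ^ 2) * ‖y‖ ^ 2
        = ⟪y, p⟫ ^ 2 + τ ^ 2 * (⟪ξ, ξ⟫ + ⟪ξ, p⟫ * ⟪ξ, p⟫) / (1 + ‖p‖ ^ 2) := by
  have hw : 1 + ‖p‖ ^ 2 ≠ 0 := by positivity
  obtain ⟨y, hy⟩ : ∃ y, y = -(τ / (1 + ‖p‖ ^ 2)) • (ξ + ⟪ξ, p⟫ • p) := ⟨_, rfl⟩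
  have hyp : ⟪y, p⟫ = -τ * ⟪ξ, p⟫ := by
    rw [hy, real_inner_smul_left, inner_add_left, real_inner_smul_left,
      real_inner_self_eq_norm_sq]
    field_simp
  have hξy : ⟪ξ, y⟫ = -(τ * (⟪ξ, ξ⟫ + ⟪ξ, p⟫ * ⟪ξ, p⟫) / (1 + ‖p‖ ^ 2)) := by
    rw [hy, real_inner_smul_right, inner_add_right, real_inner_smul_right]
    ring
  have heq : (1 + ‖p‖ ^ 2) • y = ⟪y, p⟫ • p - τ • ξ := by
    rw [hyp, hy, smul_smul, mul_neg, mul_div_cancel₀ _ hw]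
    module
  refine ⟨y, heq, ?_⟩
  rw [← real_inner_self_eq_norm_sq y, ← real_inner_smul_left, heq, inner_sub_left,
    real_inner_smul_left, real_inner_smul_left, real_inner_comm y p, hξy]
  ring

theorem linOp_pinch_le_of_null
    (hP : ∀ᶠ z' in 𝓝 z, z'.2 ≤ z.2 → ∀ η, 0 ≤ pinch θ u η η z') (hnull : pinch θ u ξ ξ z = 0) :
    linOp u (pinch θ u ξ ξ) z ≤ -4 * θ z * spaceDeriv ξ (pinch θ u ξ (spaceGrad u z)) z
      + 2 * θ z ^ 2 * metricForm u ξ ξ z * pinch θ u (spaceGrad u z) (spaceGrad u z) z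
        / (1 + ‖spaceGrad u z‖ ^ 2) := by
  set p := spaceGrad u z with hp
  set w := 1 + ‖p‖ ^ 2 with hw
  obtain ⟨y, hy, hyy⟩ := exists_smul_eq_inner_smul_sub p ξ (θ z)
  rw [real_inner_comm p ξ, inner_spaceGrad, ← metricForm_apply, ← hw] at hyy
  have hyJ : w * spaceDeriv y (pinch θ u ξ p) z
      = ⟪y, p⟫ * spaceDeriv p (pinch θ u ξ p) z - θ z * spaceDeriv ξ (pinch θ u ξ p) z := by
    simp only [← inner_spaceGrad, ← real_inner_smul_right, ← inner_sub_right, ← hy, hw]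
  have htrace := traced_second_order (F := pinch θ u ξ ξ) (J := pinch θ u ξ p)
    (K := pinch θ u p p) (z := z) (y := y) (fun e => by
      have := pinch_second_order_of_null hP hnull e (⟪y, e⟫ • p)
      rw [pinch_smul_smul] at this
      simpa only [pinch_smul_right, Derivation.map_smul, SmoothFun.smul_apply] using this) p
  rw [linOp_apply, spaceDeriv_pinch_eq_zero_of_null hP hnull,
    spaceDeriv_pinch_eq_zero_of_null hP hnull, ← hp, ← hw]
  have htime := timeDeriv_pinch_nonpos_of_null hP hnull
  have hw_nonneg : 0 ≤ w := by positivity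
  rw [← hw] at htrace
  calc _ = w * timeDeriv (pinch θ u ξ ξ) z + (spaceDeriv p (spaceDeriv p (pinch θ u ξ ξ)) z
          - w * laplace (pinch θ u ξ ξ) z) := by ring
    _ ≤ 0 + (4 * (w * spaceDeriv y (pinch θ u ξ p) z - ⟪y, p⟫ * spaceDeriv p (pinch θ u ξ p) z)
          + 2 * (w * ‖y‖ ^ 2 - ⟪y, p⟫ ^ 2) * pinch θ u p p z) :=
        add_le_add (mul_nonpos_of_nonneg_of_nonpos hw_nonneg htime) (by linarith)
    _ = _ := by rw [hyy, hyJ]; ring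

theorem linOp_nonneg_of_touching (hξ : ξ ≠ 0) (hmcf : mcfOp u z = 0)
    (hlin : linOp u (spaceDeriv ξ u) z = 0)
    (hlin' : spaceDeriv ξ (linOp u (spaceDeriv ξ u)) z = 0)
    (hP : ∀ᶠ z' in 𝓝 z, z'.2 ≤ z.2 → ∀ η, 0 ≤ pinch θ u η η z') (hnull : pinch θ u ξ ξ z = 0) :
    0 ≤ linOp u θ z := by
  have hnull' := pinch_eq_zero_of_null (hP.self_of_nhds le_rfl) hnull
  have hle := linOp_pinch_le_of_null hP hnull
  rw [spaceDeriv_pinch_spaceGrad_of_null hnull', linOp_pinch_self θ hlin,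
    gradInner_self_spaceDeriv_of_null hnull', gradInner_apply u (spaceDeriv ξ u),
    spaceDeriv_spaceGrad_spaceDeriv_of_null hnull', gradInner_comm θ,
    gradInner_spaceDeriv_of_null hnull', gradInner_apply, pinch_apply,
    metricForm_spaceGrad_right, spaceDeriv_spaceGrad_self] at hle
  rw [spaceDeriv_eq_dirDeriv, dirDeriv_linOp_dirDeriv, ← spaceDeriv_eq_dirDeriv,
    SmoothFun.add_apply, mcfSecondVar_of_null hnull' hmcf hlin] at hlin'
  have hw₀ : 0 < 1 + ‖spaceGrad u z‖ ^ 2 := by positivity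
  refine nonneg_of_mul_nonneg_right ?_ (metricForm_self_pos u hξ z)
  have hK : 2 * θ z ^ 2 * metricForm u ξ ξ z
        * (spaceDeriv (spaceGrad u z) (spaceDeriv (spaceGrad u z) u) z
          - θ z * ((1 + ‖spaceGrad u z‖ ^ 2) * ‖spaceGrad u z‖ ^ 2)) / (1 + ‖spaceGrad u z‖ ^ 2)
      = 2 * θ z ^ 2 * metricForm u ξ ξ z
          * spaceDeriv (spaceGrad u z) (spaceDeriv (spaceGrad u z) u) z / (1 + ‖spaceGrad u z‖ ^ 2)
        - 2 * θ z ^ 3 * metricForm u ξ ξ z * ‖spaceGrad u z‖ ^ 2 := by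
    field_simp
  rw [hK] at hle
  linarith

end TouchingPoint

section MinCurv

variable {E : Type*} [NormedAddCommGroup E] [InnerProductSpace ℝ E]

/-- The smallest eigenvalue of `D²u` relative to the graph metric `I + ∇u ∇uᵀ`, which is `W` times
the smallest principal curvature of the graph of `u`. -/
noncomputable def minCurv (u : SmoothFun (E × ℝ)) (z : E × ℝ) : ℝ :=
  ⨅ ξ : Metric.sphere (0 : E) 1, spaceDeriv ξ.1 (spaceDeriv ξ.1 u) z / metricForm u ξ ξ z

/-- `v` is a viscosity supersolution of the linearized flow `linOp u v = 0` on `S`: the operator is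
nonnegative on smooth functions touching `v` from below at a point of `S` when only the present and
past of that point are considered. -/
def IsSupersolution [FiniteDimensional ℝ E] (u : SmoothFun (E × ℝ)) (v : E × ℝ → ℝ)
    (S : Set (E × ℝ)) : Prop :=
  ∀ z ∈ S, ∀ φ : SmoothFun (E × ℝ), (∀ᶠ z' in 𝓝 z, z'.2 ≤ z.2 → φ z' ≤ v z') → φ z = v z →
    0 ≤ linOp u φ z

theorem continuous_curvQuotient (u : SmoothFun (E × ℝ)) :
    Continuous fun q : (E × ℝ) × Metric.sphere (0 : E) 1 =>
      spaceDeriv q.2.1 (spaceDeriv q.2.1 u) q.1 / metricForm u q.2 q.2 q.1 := by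
  have hdir : Continuous fun q : (E × ℝ) × Metric.sphere (0 : E) 1 =>
      (q.1, ((q.2 : E), (0 : ℝ))) := by fun_prop
  refine ((continuous_dirDeriv_dirDeriv_apply u).comp hdir).div ?_ fun q =>
    (metricForm_self_pos u (ne_zero_of_mem_unit_sphere q.2) q.1).ne'
  have hgrad := (continuous_dirDeriv_apply u).comp hdir
  simp only [metricForm_apply]
  exact (by fun_prop : Continuous fun q : (E × ℝ) × Metric.sphere (0 : E) 1 =>
    ⟪(q.2 : E), (q.2 : E)⟫).add (hgrad.mul hgrad)

variable [FiniteDimensional ℝ E]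

theorem continuous_minCurv (u : SmoothFun (E × ℝ)) : Continuous (minCurv u) := by
  simp only [funext fun z => show minCurv u z = sInf _ from rfl, ← Set.image_univ]
  exact isCompact_univ.continuous_sInf (continuous_curvQuotient u)

variable [Nontrivial E] {θ u : SmoothFun (E × ℝ)} {z : E × ℝ}

theorem isLeast_minCurv (u : SmoothFun (E × ℝ)) (z : E × ℝ) :
    IsLeast {q | ∃ ξ : E, ξ ≠ 0 ∧ q = spaceDeriv ξ (spaceDeriv ξ u) z / metricForm u ξ ξ z}
      (minCurv u z) := by
  have hcont : Continuous fun ξ : Metric.sphere (0 : E) 1 =>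
      spaceDeriv ξ.1 (spaceDeriv ξ.1 u) z / metricForm u ξ ξ z :=
    (continuous_curvQuotient u).comp (f := fun ξ => (z, ξ)) (by fun_prop)
  have : Nonempty (Metric.sphere (0 : E) 1) :=
    (NormedSpace.sphere_nonempty.2 zero_le_one).to_subtype
  obtain ⟨ξ, hξ⟩ := (isCompact_range hcont).sInf_mem (Set.range_nonempty _)
  refine ⟨⟨ξ, ne_zero_of_mem_unit_sphere ξ, hξ.symm⟩, ?_⟩
  rintro _ ⟨η, hη, rfl⟩
  have hunit : ‖η‖⁻¹ • η ∈ Metric.sphere (0 : E) 1 := by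
    rw [mem_sphere_zero_iff_norm, norm_smul, norm_inv, norm_norm,
      inv_mul_cancel₀ (norm_ne_zero_iff.2 hη)]
  refine (ciInf_le (isCompact_range hcont).bddBelow ⟨_, hunit⟩).trans_eq ?_
  have hη' := norm_ne_zero_iff.2 hη
  have hpos := (metricForm_self_pos u hη z).ne'
  simp only [metricForm_apply, map_smul, Derivation.smul_apply, Derivation.map_smul,
    SmoothFun.smul_apply, real_inner_smul_left, real_inner_smul_right] at hpos ⊢
  field_simp

theorem forall_pinch_nonneg_iff :
    (∀ η, 0 ≤ pinch θ u η η z) ↔ θ z ≤ minCurv u z := by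
  have hpinch {η : E} (hη : η ≠ 0) : 0 ≤ pinch θ u η η z ↔
      θ z ≤ spaceDeriv η (spaceDeriv η u) z / metricForm u η η z := by
    rw [le_div_iff₀ (metricForm_self_pos u hη z), pinch_apply, sub_nonneg]
  obtain ⟨⟨ξ, hξ, heq⟩, hle⟩ := isLeast_minCurv u z
  refine ⟨fun h => heq ▸ (hpinch hξ).1 (h ξ), fun h η => ?_⟩
  obtain rfl | hη := eq_or_ne η 0
  · simp [pinch_apply, metricForm_apply]
  · exact (hpinch hη).2 (h.trans (hle ⟨η, hη, rfl⟩))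

theorem exists_pinch_eq_zero (h : θ z = minCurv u z) : ∃ ξ ≠ 0, pinch θ u ξ ξ z = 0 := by
  obtain ⟨⟨ξ, hξ, heq⟩, -⟩ := isLeast_minCurv u z
  refine ⟨ξ, hξ, ?_⟩
  rw [pinch_apply, h, heq, div_mul_cancel₀ _ (metricForm_self_pos u hξ z).ne', sub_self]

theorem isSupersolution_minCurv {S : Set (E × ℝ)} (hS : UniqueDiffOn ℝ S)
    (hu : ∀ z ∈ S, mcfOp u z = 0) : IsSupersolution u (minCurv u) S := by
  intro z hz φ hle heq
  have hlin (v : E × ℝ) : ∀ z ∈ S, linOp u (dirDeriv v u) z = 0 :=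
    dirDeriv_mcfOp v u ▸ dirDeriv_apply_eq_zero_of_eqOn hS hu v
  obtain ⟨ξ, hξ, hnull⟩ := exists_pinch_eq_zero heq
  exact linOp_nonneg_of_touching hξ (hu z hz) (hlin _ z hz)
    (dirDeriv_apply_eq_zero_of_eqOn hS (hlin (ξ, 0)) _ z hz)
    (hle.mono fun _ h ht => forall_pinch_nonneg_iff.2 (h ht)) hnull

end MinCurv

section StrongMaximumPrinciple

variable {E : Type*} [NormedAddCommGroup E] [InnerProductSpace ℝ E]

/-- The defining function `r² - |x - x₁ - (t - t₁) q|²` of the space-time tube of radius `r` around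
the ray leaving `x₁` at time `t₁` with velocity `q`. -/
noncomputable def tubeFun (x₁ q : E) (t₁ r : ℝ) : SmoothFun (E × ℝ) :=
  .ofContDiff (fun z => r ^ 2 - ‖z.1 - x₁ - (z.2 - t₁) • q‖ ^ 2)
    (contDiff_const.sub (ContDiff.norm_sq ℝ (by fun_prop)))

/-- The function `exp (-K (t - t₁))` on space-time. -/
noncomputable def timeDecay (E : Type*) [NormedAddCommGroup E] [InnerProductSpace ℝ E] (t₁ K : ℝ) :
    SmoothFun (E × ℝ) :=
  .ofContDiff (fun z => Real.exp (-K * (z.2 - t₁))) (by fun_prop)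

/-- The barrier `exp (-K (t - t₁)) s²`, where `s` is the defining function of the tube. -/
noncomputable def tubeBarrier (x₁ q : E) (t₁ r K : ℝ) : SmoothFun (E × ℝ) :=
  timeDecay E t₁ K * (tubeFun x₁ q t₁ r * tubeFun x₁ q t₁ r)

/-- The part of that space-time tube between the times `t₁` and `t₂`. -/
def tube (x₁ q : E) (t₁ t₂ r : ℝ) : Set (E × ℝ) :=
  {z | z.2 ∈ Set.Icc t₁ t₂ ∧ 0 ≤ tubeFun x₁ q t₁ r z}

theorem tubeFun_apply (x₁ q : E) (t₁ r : ℝ) (z : E × ℝ) :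
    tubeFun x₁ q t₁ r z = r ^ 2 - ‖z.1 - x₁ - (z.2 - t₁) • q‖ ^ 2 := rfl

theorem timeDecay_apply (t₁ K : ℝ) (z : E × ℝ) :
    timeDecay E t₁ K z = Real.exp (-K * (z.2 - t₁)) := rfl

theorem tubeFun_le (x₁ q : E) (t₁ r : ℝ) (z : E × ℝ) : tubeFun x₁ q t₁ r z ≤ r ^ 2 :=
  sub_le_self _ (sq_nonneg _)

theorem tubeFun_nonneg_iff {x₁ q : E} {t₁ r : ℝ} (hr : 0 ≤ r) {z : E × ℝ} :
    0 ≤ tubeFun x₁ q t₁ r z ↔ ‖z.1 - x₁ - (z.2 - t₁) • q‖ ≤ r := by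
  rw [tubeFun_apply, sub_nonneg, pow_le_pow_iff_left₀ (norm_nonneg _) hr two_ne_zero]

theorem tubeBarrier_apply (x₁ q : E) (t₁ r K : ℝ) (z : E × ℝ) :
    tubeBarrier x₁ q t₁ r K z
      = Real.exp (-K * (z.2 - t₁)) * (tubeFun x₁ q t₁ r z * tubeFun x₁ q t₁ r z) := rfl

theorem tubeBarrier_initial_le {x₁ q : E} {t₁ r K : ℝ} {z : E × ℝ} (hz : z.2 = t₁)
    (hpos : 0 ≤ tubeFun x₁ q t₁ r z) : tubeBarrier x₁ q t₁ r K z ≤ r ^ 4 := by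
  rw [tubeBarrier_apply, hz, sub_self, mul_zero, Real.exp_zero, one_mul]
  calc _ ≤ r ^ 2 * r ^ 2 := mul_self_le_mul_self hpos (tubeFun_le x₁ q t₁ r z)
    _ = r ^ 4 := by ring

theorem spaceDeriv_tubeFun (x₁ q ξ : E) (t₁ r : ℝ) (z : E × ℝ) :
    spaceDeriv ξ (tubeFun x₁ q t₁ r) z = -2 * ⟪z.1 - x₁ - (z.2 - t₁) • q, ξ⟫ := by
  have haxis : HasFDerivAt (fun z : E × ℝ => z.1 - x₁ - (z.2 - t₁) • q)
      (ContinuousLinearMap.fst ℝ E ℝ - (ContinuousLinearMap.snd ℝ E ℝ).smulRight q) z :=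
    (hasFDerivAt_fst.sub_const x₁).sub ((hasFDerivAt_snd.sub_const t₁).smul_const q)
  have htube : HasFDerivAt (tubeFun x₁ q t₁ r) _ z := haxis.norm_sq.const_sub (r ^ 2)
  rw [spaceDeriv_apply, htube.fderiv]
  simp [inner_sub_left, real_inner_smul_left]

theorem dirDeriv_timeDecay (v : E × ℝ) (t₁ K : ℝ) :
    dirDeriv v (timeDecay E t₁ K) = (-K * v.2) • timeDecay E t₁ K := by
  ext z
  have hdecay : HasFDerivAt (timeDecay E t₁ K) _ z :=
    ((hasFDerivAt_snd.sub_const t₁).const_mul (-K)).exp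
  rw [dirDeriv_apply, hdecay.fderiv]
  simp only [smul_apply, ContinuousLinearMap.coe_snd', smul_eq_mul, SmoothFun.smul_apply,
    timeDecay_apply]
  ring

theorem spaceDeriv_timeDecay (ξ : E) (t₁ K : ℝ) : spaceDeriv ξ (timeDecay E t₁ K) = 0 := by
  simp [spaceDeriv_eq_dirDeriv, dirDeriv_timeDecay]

theorem eventually_mem_tube_of_le {x₁ q : E} {t₁ t₂ r : ℝ} {z : E × ℝ}
    (hz : z.2 ∈ Set.Ioc t₁ t₂) (hpos : 0 < tubeFun x₁ q t₁ r z) :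
    ∀ᶠ z' in 𝓝 z, z'.2 ≤ z.2 → z' ∈ tube x₁ q t₁ t₂ r := by
  filter_upwards [(tubeFun x₁ q t₁ r).continuous.continuousAt.eventually_const_lt hpos,
    continuous_snd.continuousAt.eventually_const_lt hz.1] with z' hpos' hlt hpast
  exact ⟨⟨hlt.le, hpast.trans hz.2⟩, hpos'.le⟩

variable [FiniteDimensional ℝ E]

theorem spaceGrad_tubeFun (x₁ q : E) (t₁ r : ℝ) (z : E × ℝ) :
    spaceGrad (tubeFun x₁ q t₁ r) z = (-2 : ℝ) • (z.1 - x₁ - (z.2 - t₁) • q) :=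
  ext_inner_right ℝ fun ξ => by rw [inner_spaceGrad, spaceDeriv_tubeFun, real_inner_smul_left]

theorem gradInner_timeDecay (f : SmoothFun (E × ℝ)) (t₁ K : ℝ) :
    gradInner f (timeDecay E t₁ K) = 0 := by
  simp [gradInner_eq_sum, spaceDeriv_timeDecay]

theorem linOp_timeDecay (u : SmoothFun (E × ℝ)) (t₁ K : ℝ) (z : E × ℝ) :
    linOp u (timeDecay E t₁ K) z
      = -K * (1 + ‖spaceGrad u z‖ ^ 2) * timeDecay E t₁ K z := by
  have htime : timeDeriv (timeDecay E t₁ K) = (-K) • timeDecay E t₁ K := by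
    simp [timeDeriv, dirDeriv_timeDecay]
  simp only [linOp_apply, spaceDeriv_timeDecay, laplace_eq_sum, map_zero, Finset.sum_const_zero,
    htime, SmoothFun.smul_apply, SmoothFun.zero_apply]
  ring

/-- Where `s` is small the gradient term `-8|ζ|²` makes the barrier `exp (-K (t - t₁)) s²` a strict
subsolution; elsewhere the decay does. -/
theorem linOp_barrier_neg {u : SmoothFun (E × ℝ)} {x₁ q : E} {t₁ r K C : ℝ} {z : E × ℝ}
    (hK : (2 * C + 8) ^ 2 < 32 * K * r ^ 2) (hz : 0 ≤ tubeFun x₁ q t₁ r z)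
    (hC : linOp u (tubeFun x₁ q t₁ r) z ≤ C) :
    linOp u (tubeBarrier x₁ q t₁ r K) z < 0 := by
  set s := tubeFun x₁ q t₁ r with hs
  set ζ := z.1 - x₁ - (z.2 - t₁) • q with hζ
  set p := spaceGrad u z with hp
  have hsζ : ‖ζ‖ ^ 2 = r ^ 2 - s z := by rw [hs, tubeFun_apply]; ring
  have hexpand : linOp u (tubeBarrier x₁ q t₁ r K) z = timeDecay E t₁ K z
      * (-K * (1 + ‖p‖ ^ 2) * s z ^ 2 + 2 * s z * linOp u s z - 8 * (1 + ‖p‖ ^ 2) * ‖ζ‖ ^ 2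
        + 8 * ⟪p, ζ⟫ ^ 2) := by
    rw [tubeBarrier, linOp_mul, gradInner_timeDecay, gradInner_comm (timeDecay E t₁ K),
      gradInner_timeDecay, ← hs, linOp_mul]
    simp only [SmoothFun.add_apply, SmoothFun.sub_apply, SmoothFun.mul_apply, SmoothFun.one_apply,
      SmoothFun.zero_apply, SmoothFun.ofNat_apply, linOp_timeDecay, gradInner_apply_eq_inner, hs,
      spaceGrad_tubeFun, real_inner_self_eq_norm_sq, norm_smul, real_inner_smul_right,
      ← hp, ← hζ]
    norm_num
    ring
  rw [hexpand]
  refine mul_neg_of_pos_of_neg (Real.exp_pos _) ?_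
  have hcauchy : ⟪p, ζ⟫ ^ 2 ≤ ‖p‖ ^ 2 * ‖ζ‖ ^ 2 := by
    rw [← mul_pow, ← sq_abs]
    exact pow_le_pow_left₀ (abs_nonneg _) (abs_real_inner_le_norm _ _) 2
  have hKpos : 0 < K := by
    by_contra! hK'
    nlinarith [sq_nonneg (2 * C + 8), mul_nonneg (neg_nonneg.2 hK') (sq_nonneg r)]
  have hquad : -K * s z ^ 2 + (2 * C + 8) * s z - 8 * r ^ 2 < 0 := by
    by_contra! hnonneg
    nlinarith [mul_nonneg hKpos.le hnonneg, sq_nonneg (2 * K * s z - (2 * C + 8))]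
  have hgrad : 0 ≤ K * ‖p‖ ^ 2 * s z ^ 2 := by positivity
  linarith [mul_le_mul_of_nonneg_left hC hz]

theorem exists_linOp_barrier_neg (u : SmoothFun (E × ℝ)) (x₁ q : E) (t₁ : ℝ) {r : ℝ} (hr : 0 < r)
    {T : Set (E × ℝ)} (hT : IsCompact T) (hpos : ∀ z ∈ T, 0 ≤ tubeFun x₁ q t₁ r z) :
    ∃ K, ∀ z ∈ T,
      linOp u (tubeBarrier x₁ q t₁ r K) z < 0 := by
  obtain ⟨C, hC⟩ := hT.bddAbove_image (linOp u (tubeFun x₁ q t₁ r)).continuous.continuousOn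
  refine ⟨((2 * C + 8) ^ 2 + 1) / (32 * r ^ 2), fun z hz =>
    linOp_barrier_neg ?_ (hpos z hz) (hC ⟨z, hz, rfl⟩)⟩
  field_simp
  linarith

theorem isCompact_tube (x₁ q : E) (t₁ t₂ : ℝ) {r : ℝ} (hr : 0 ≤ r) :
    IsCompact (tube x₁ q t₁ t₂ r) := by
  have himage : IsCompact ((fun y : E × ℝ => (y.1 + x₁ + (y.2 - t₁) • q, y.2)) ''
      (Metric.closedBall 0 r ×ˢ Set.Icc t₁ t₂)) :=
    ((isCompact_closedBall 0 r).prod isCompact_Icc).image (by fun_prop)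
  refine himage.of_isClosed_subset ((isClosed_Icc.preimage continuous_snd).inter
    (isClosed_le continuous_const (tubeFun x₁ q t₁ r).continuous)) fun z hz => ?_
  exact ⟨(z.1 - x₁ - (z.2 - t₁) • q, z.2),
    ⟨mem_closedBall_zero_iff.2 ((tubeFun_nonneg_iff hr).1 hz.2), hz.1⟩,
    Prod.ext (by dsimp only; abel) rfl⟩

variable {u θ φ : SmoothFun (E × ℝ)} {v : E × ℝ → ℝ} {S T : Set (E × ℝ)}
  {B : Set E} {a b : ℝ}

theorem IsSupersolution.le_of_linOp_neg (hv : IsSupersolution u v S) (hcont : Continuous v)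
    (hT : IsCompact T) (hφ : ∀ z ∈ T, linOp u φ z < 0)
    (hbdry : ∀ z ∈ T, φ z ≤ v z ∨ z ∈ S ∧ ∀ᶠ z' in 𝓝 z, z'.2 ≤ z.2 → z' ∈ T) :
    ∀ z ∈ T, φ z ≤ v z := by
  intro z₀ hz₀
  obtain ⟨z, hz, hmin⟩ := hT.exists_isMinOn ⟨z₀, hz₀⟩ (hcont.sub φ.continuous).continuousOn
  refine sub_nonneg.1 (le_trans (sub_nonneg.2 ?_) (hmin hz₀))
  refine (hbdry z hz).resolve_right fun ⟨hzS, hpast⟩ => (hφ z hz).not_ge ?_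
  have htouch := hv z hzS (φ + algebraMap ℝ _ (v z - φ z)) (hpast.mono fun z' h ht => ?_) ?_
  · simpa only [map_add, linOp_algebraMap, add_zero] using htouch
  · have : v z - φ z ≤ v z' - φ z' := hmin (h ht)
    rw [SmoothFun.add_apply, SmoothFun.algebraMap_apply]
    linarith
  · rw [SmoothFun.add_apply, SmoothFun.algebraMap_apply, add_sub_cancel]

theorem IsSupersolution.add_tubeBarrier_le (hv : IsSupersolution u v S) (hcont : Continuous v)
    (hθ : ∀ z ∈ S, linOp u θ z = 0) (hle : ∀ z ∈ S, θ z ≤ v z) {x₁ q : E} {t₁ t₂ r K δ : ℝ}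
    (hr : 0 < r) (hδ : 0 < δ) (hS : tube x₁ q t₁ t₂ r ⊆ S)
    (hinit : ∀ x ∈ Metric.closedBall x₁ r, δ ≤ v (x, t₁) - θ (x, t₁))
    (hK : ∀ z ∈ tube x₁ q t₁ t₂ r, linOp u (tubeBarrier x₁ q t₁ r K) z < 0) :
    ∀ z ∈ tube x₁ q t₁ t₂ r, (θ + (δ / r ^ 4) • tubeBarrier x₁ q t₁ r K) z ≤ v z := by
  refine hv.le_of_linOp_neg hcont (isCompact_tube x₁ q t₁ t₂ hr.le) (fun z hz => ?_)
    fun z hz => ?_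
  · rw [map_add, map_smul, SmoothFun.add_apply, SmoothFun.smul_apply, hθ z (hS hz), zero_add]
    exact mul_neg_of_pos_of_neg (by positivity) (hK z hz)
  rw [SmoothFun.add_apply, SmoothFun.smul_apply]
  obtain hside | hside := hz.2.eq_or_lt
  · left
    rw [tubeBarrier_apply, ← hside, mul_zero, mul_zero, mul_zero, add_zero]
    exact hle z (hS hz)
  obtain hbottom | hbottom := hz.1.1.eq_or_lt
  · left
    have hball : z.1 ∈ Metric.closedBall x₁ r := by
      simpa [← hbottom, dist_eq_norm] using (tubeFun_nonneg_iff hr.le).1 hz.2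
    have hbarrier : δ / r ^ 4 * tubeBarrier x₁ q t₁ r K z ≤ δ :=
      (mul_le_mul_of_nonneg_left (tubeBarrier_initial_le hbottom.symm hz.2)
        (by positivity)).trans_eq (div_mul_cancel₀ _ (by positivity))
    have hgap : δ ≤ v z - θ z := by simpa only [hbottom] using hinit z.1 hball
    linarith
  · exact .inr ⟨hS hz, eventually_mem_tube_of_le ⟨hbottom, hz.1.2⟩ hside⟩

theorem IsSupersolution.lt_of_tube (hv : IsSupersolution u v S) (hcont : Continuous v)
    (hθ : ∀ z ∈ S, linOp u θ z = 0) (hle : ∀ z ∈ S, θ z ≤ v z) {x₁ q : E} {t₁ t₂ r : ℝ}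
    (ht : t₁ ≤ t₂) (hr : 0 < r) (hS : tube x₁ q t₁ t₂ r ⊆ S)
    (hinit : ∀ x ∈ Metric.closedBall x₁ r, θ (x, t₁) < v (x, t₁)) :
    θ (x₁ + (t₂ - t₁) • q, t₂) < v (x₁ + (t₂ - t₁) • q, t₂) := by
  obtain ⟨δ, hδ, hgap⟩ : ∃ δ > 0, ∀ x ∈ Metric.closedBall x₁ r, δ ≤ v (x, t₁) - θ (x, t₁) :=
    (isCompact_closedBall x₁ r).exists_forall_le'
      (by have := θ.continuous; fun_prop) fun x hx => sub_pos.2 (hinit x hx)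
  obtain ⟨K, hK⟩ := exists_linOp_barrier_neg u x₁ q t₁ hr (isCompact_tube x₁ q t₁ t₂ hr.le)
    fun z hz => hz.2
  have htop : tubeFun x₁ q t₁ r (x₁ + (t₂ - t₁) • q, t₂) = r ^ 2 := by simp [tubeFun_apply]
  have hbarrier_pos :
      0 < δ / r ^ 4 * tubeBarrier x₁ q t₁ r K (x₁ + (t₂ - t₁) • q, t₂) := by
    rw [tubeBarrier_apply, htop]
    positivity
  exact (lt_add_of_pos_right _ hbarrier_pos).trans_le
    (hv.add_tubeBarrier_le hcont hθ hle hr hδ hS hgap hK _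
      ⟨⟨ht, le_rfl⟩, htop.symm ▸ sq_nonneg r⟩)

/-- The tube around the segment from `(x₁, t₁)` to `(x₂, t₂)` transports strict inequality. -/
theorem IsSupersolution.lt_of_lt (hB : IsOpen B) (hconv : Convex ℝ B)
    (hv : IsSupersolution u v (B ×ˢ Set.Icc a b)) (hcont : Continuous v)
    (hθ : ∀ z ∈ B ×ˢ Set.Icc a b, linOp u θ z = 0) (hle : ∀ z ∈ B ×ˢ Set.Icc a b, θ z ≤ v z)
    {x₁ x₂ : E} {t₁ : ℝ} (hx₁ : x₁ ∈ B) (hx₂ : x₂ ∈ B) (ht₁ : t₁ ∈ Set.Ico a b)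
    (hlt : θ (x₁, t₁) < v (x₁, t₁)) : θ (x₂, b) < v (x₂, b) := by
  have hpos : 0 < b - t₁ := sub_pos.2 ht₁.2
  set q := (b - t₁)⁻¹ • (x₂ - x₁)
  have hq : x₁ + (b - t₁) • q = x₂ := by rw [smul_inv_smul₀ hpos.ne', add_sub_cancel]
  have hcompact : IsCompact (segment ℝ x₁ x₂) := by
    rw [← convexHull_pair]
    exact (Set.toFinite _).isCompact_convexHull ℝ
  obtain ⟨ρ, hρ, hρB⟩ : ∃ ρ > 0, Metric.cthickening ρ (segment ℝ x₁ x₂) ⊆ B :=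
    hcompact.exists_cthickening_subset_open hB (hconv.segment_subset hx₁ hx₂)
  obtain ⟨ε, hε, hεlt⟩ : ∃ ε > 0, ∀ x ∈ Metric.closedBall x₁ ε, θ (x, t₁) < v (x, t₁) := by
    have hopen : IsOpen {x | θ (x, t₁) < v (x, t₁)} := by
      have := θ.continuous
      exact isOpen_lt (by fun_prop) (by fun_prop)
    exact Metric.nhds_basis_closedBall.mem_iff.1 (hopen.mem_nhds hlt)
  rw [← hq]
  refine hv.lt_of_tube hcont hθ hle ht₁.2.le (lt_min hρ hε) (fun z ⟨hz, htube⟩ => ?_)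
    fun x hx => hεlt x (Metric.closedBall_subset_closedBall (min_le_right _ _) hx)
  have hdist := (tubeFun_nonneg_iff (lt_min hρ hε).le).1 htube
  refine ⟨hρB (Metric.mem_cthickening_of_dist_le _ (x₁ + (z.2 - t₁) • q) _ _ ?_ ?_),
    ht₁.1.trans hz.1, hz.2⟩
  · rw [segment_eq_image', Set.mem_image]
    refine ⟨(z.2 - t₁) / (b - t₁), ⟨div_nonneg (sub_nonneg.2 hz.1) hpos.le,
      div_le_one_of_le₀ (by linarith [hz.2]) hpos.le⟩, ?_⟩
    rw [div_eq_mul_inv, mul_smul]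
  · rw [dist_eq_norm, ← sub_sub]
    exact hdist.trans (min_le_left _ _)

theorem IsSupersolution.eqOn_of_eq (hB : IsOpen B) (hconv : Convex ℝ B)
    (hv : IsSupersolution u v (B ×ˢ Set.Icc a b)) (hcont : Continuous v)
    (hθ : ∀ z ∈ B ×ˢ Set.Icc a b, linOp u θ z = 0) (hle : ∀ z ∈ B ×ˢ Set.Icc a b, θ z ≤ v z)
    (hab : a < b) {x : E} (hx : x ∈ B) (heq : θ (x, b) = v (x, b)) :
    Set.EqOn θ v (B ×ˢ Set.Icc a b) := by
  have hbefore : Set.EqOn θ v (B ×ˢ Set.Ico a b) := fun z hz =>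
    (hle z ⟨hz.1, Set.Ico_subset_Icc_self hz.2⟩).eq_of_not_lt fun hlt =>
      (hv.lt_of_lt hB hconv hcont hθ hle hz.1 hx hz.2 hlt).ne heq
  refine (hbefore.closure θ.continuous hcont).mono ?_
  rw [closure_prod_eq, closure_Ico hab.ne]
  exact Set.prod_mono subset_closure le_rfl

end StrongMaximumPrinciple

section Extension

/-- Multiply by a cutoff function that is `1` near `K` and `0` near the complement of `V`. -/
theorem exists_smoothFun_eventuallyEq {X : Type*} [NormedAddCommGroup X] [NormedSpace ℝ X]
    [FiniteDimensional ℝ X] {K V : Set X} (hK : IsClosed K) (hV : IsOpen V) (hKV : K ⊆ V)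
    {u : X → ℝ} (hu : ContDiffOn ℝ ∞ u V) :
    ∃ U : SmoothFun X, ∀ z ∈ K, u =ᶠ[𝓝 z] U := by
  obtain ⟨χ, hzero, hone, -⟩ := exists_contMDiffMap_zero_one_nhds_of_isClosed (n := ⊤)
    𝓘(ℝ, X) hV.isClosed_compl hK (Set.disjoint_compl_left_iff_subset.2 hKV)
  have hχ : ContDiff ℝ ∞ χ := χ.contMDiff.contDiff
  refine ⟨.ofContDiff (fun z => χ z * u z) (contDiff_iff_contDiffAt.2 fun z => ?_), fun z hz => ?_⟩
  · by_cases hz : z ∈ V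
    · exact hχ.contDiffAt.mul (hu.contDiffAt (hV.mem_nhds hz))
    · refine contDiffAt_const (c := (0 : ℝ)) |>.congr_of_eventuallyEq ?_
      filter_upwards [hzero.filter_mono (nhds_le_nhdsSet hz)] with y hy
      rw [hy, zero_mul]
  · filter_upwards [hone.filter_mono (nhds_le_nhdsSet hz)] with y hy
    rw [SmoothFun.ofContDiff_apply, hy, one_mul]

end Extension

section TimeSlice

variable {n : ℕ}

theorem hasFDerivAt_slice (U : SmoothFun (EuclideanSpace ℝ (Fin n) × ℝ))
    (x : EuclideanSpace ℝ (Fin n)) (t : ℝ) :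
    HasFDerivAt (fun y => U (y, t))
      (fderiv ℝ U (x, t) ∘L ContinuousLinearMap.inl ℝ (EuclideanSpace ℝ (Fin n)) ℝ) x :=
  (U.differentiable (x, t)).hasFDerivAt.comp x (hasFDerivAt_prodMk_left x t)

theorem gradient_slice (U : SmoothFun (EuclideanSpace ℝ (Fin n) × ℝ))
    (x : EuclideanSpace ℝ (Fin n)) (t : ℝ) :
    gradient (fun y => U (y, t)) x = spaceGrad U (x, t) := by
  rw [gradient, (hasFDerivAt_slice U x t).fderiv, spaceGrad]

theorem deriv_slice (U : SmoothFun (EuclideanSpace ℝ (Fin n) × ℝ))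
    (x : EuclideanSpace ℝ (Fin n)) (t : ℝ) :
    deriv (fun s => U (x, s)) t = timeDeriv U (x, t) :=
  ((U.differentiable (x, t)).hasFDerivAt.comp_hasDerivAt t
    ((hasDerivAt_const t x).prodMk (hasDerivAt_id t))).deriv

theorem inner_hess_slice (U : SmoothFun (EuclideanSpace ℝ (Fin n) × ℝ))
    (x ξ η : EuclideanSpace ℝ (Fin n)) (t : ℝ) :
    ⟪hess (fun y => U (y, t)) x ξ, η⟫ = spaceDeriv ξ (spaceDeriv η U) (x, t) := by
  have hgrad : gradient (fun y => U (y, t)) = fun y => spaceGrad U (y, t) :=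
    funext fun y => gradient_slice U y t
  have hdiff : DifferentiableAt ℝ (fun y => spaceGrad U (y, t)) x := by
    have hinl : DifferentiableAt ℝ (fun y => fderiv ℝ U (y, t)) x :=
      (U.contDiff_fderiv.differentiable (by simp) (x, t)).comp x
        (differentiableAt_id.prodMk (differentiableAt_const t))
    exact (InnerProductSpace.toDual ℝ _).symm.differentiable.differentiableAt.comp x
      (hinl.clm_comp (differentiableAt_const _))
  have hinner := fderiv_inner_apply ℝ hdiff (differentiableAt_const (c := η)) ξ
  simp only [inner_spaceGrad, fderiv_fun_const, Pi.zero_apply, zero_apply, inner_zero_right,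
    zero_add, (hasFDerivAt_slice (spaceDeriv η U) x t).fderiv] at hinner
  rw [hess, hgrad, ← hinner]
  rfl

theorem lap_slice (U : SmoothFun (EuclideanSpace ℝ (Fin n) × ℝ))
    (x : EuclideanSpace ℝ (Fin n)) (t : ℝ) :
    lap (fun y => U (y, t)) x = laplace U (x, t) := by
  let H := (fderiv ℝ (gradient fun y => U (y, t)) x).toLinearMap
  have htrace := (H.trace_eq_sum_inner (EuclideanSpace.basisFun (Fin n) ℝ)).symm.trans
    (H.trace_eq_sum_inner (stdOrthonormalBasis ℝ _))
  simpa only [EuclideanSpace.basisFun_apply, real_inner_comm, lap, hess, laplace_eq_sum,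
    SmoothFun.sum_apply, ← inner_hess_slice, H, ContinuousLinearMap.coe_coe] using htrace

theorem hess_congr {f g : EuclideanSpace ℝ (Fin n) → ℝ} {x : EuclideanSpace ℝ (Fin n)}
    (h : f =ᶠ[𝓝 x] g) : hess f x = hess g x := by
  funext ξ
  rw [hess, hess, h.gradient.fderiv_eq]

theorem lap_congr {f g : EuclideanSpace ℝ (Fin n) → ℝ} {x : EuclideanSpace ℝ (Fin n)}
    (h : f =ᶠ[𝓝 x] g) : lap f x = lap g x := by
  rw [lap, lap, hess_congr h]

theorem graphH_congr {f g : EuclideanSpace ℝ (Fin n) → ℝ} {x : EuclideanSpace ℝ (Fin n)}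
    (h : f =ᶠ[𝓝 x] g) : graphH f x = graphH g x := by
  rw [graphH, graphH, hess_congr h, h.gradient_eq, lap_congr h]

theorem graphKappa1_congr {f g : EuclideanSpace ℝ (Fin n) → ℝ} {x : EuclideanSpace ℝ (Fin n)}
    (h : f =ᶠ[𝓝 x] g) : graphKappa1 f x = graphKappa1 g x := by
  rw [graphKappa1, graphKappa1, hess_congr h, h.gradient_eq]

theorem nontrivial_of_graphH_pos {f : EuclideanSpace ℝ (Fin n) → ℝ} {x : EuclideanSpace ℝ (Fin n)}
    (h : 0 < graphH f x) : Nontrivial (EuclideanSpace ℝ (Fin n)) := by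
  by_contra htriv
  rw [not_nontrivial_iff_subsingleton] at htriv
  simp [graphH, lap, Subsingleton.elim (gradient f x) 0, Subsingleton.elim (hess f x _) 0] at h

theorem graphH_slice {U : SmoothFun (EuclideanSpace ℝ (Fin n) × ℝ)}
    {x : EuclideanSpace ℝ (Fin n)} {t : ℝ} (hmcf : mcfOp U (x, t) = 0) :
    graphH (fun y => U (y, t)) x
      = timeDeriv U (x, t) / Real.sqrt (1 + ‖spaceGrad U (x, t)‖ ^ 2) := by
  rw [mcfOp_apply] at hmcf
  rw [graphH, gradient_slice, lap_slice, real_inner_comm, inner_hess_slice]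
  set W := Real.sqrt (1 + ‖spaceGrad U (x, t)‖ ^ 2)
  have hW_pos : 0 < W := Real.sqrt_pos.2 (by positivity)
  have hW_sq : W ^ 2 = 1 + ‖spaceGrad U (x, t)‖ ^ 2 := Real.sq_sqrt (by positivity)
  rw [div_eq_div_iff (by positivity) hW_pos.ne', pow_succ _ 2, hW_sq]
  linear_combination (-W) * hmcf

theorem graphKappa1_slice [Nontrivial (EuclideanSpace ℝ (Fin n))]
    (U : SmoothFun (EuclideanSpace ℝ (Fin n) × ℝ)) (x : EuclideanSpace ℝ (Fin n)) (t : ℝ) :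
    graphKappa1 (fun y => U (y, t)) x
      = minCurv U (x, t) / Real.sqrt (1 + ‖spaceGrad U (x, t)‖ ^ 2) := by
  have hquot (ξ : EuclideanSpace ℝ (Fin n)) :
      ⟪hess (fun y => U (y, t)) x ξ, ξ⟫ / (Real.sqrt (1 + ‖gradient (fun y => U (y, t)) x‖ ^ 2)
        * (‖ξ‖ ^ 2 + ⟪gradient (fun y => U (y, t)) x, ξ⟫ ^ 2))
      = spaceDeriv ξ (spaceDeriv ξ U) (x, t) / metricForm U ξ ξ (x, t)
        / Real.sqrt (1 + ‖spaceGrad U (x, t)‖ ^ 2) := by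
    rw [inner_hess_slice, gradient_slice, inner_spaceGrad, metricForm_apply,
      real_inner_self_eq_norm_sq, ← sq, div_div, mul_comm]
  simp only [graphKappa1, hquot]
  obtain ⟨⟨ξ, hξ, heq⟩, hle⟩ := isLeast_minCurv U (x, t)
  refine IsLeast.csInf_eq ⟨⟨ξ, hξ, by rw [heq]⟩, ?_⟩
  rintro _ ⟨η, hη, rfl⟩
  exact div_le_div_of_nonneg_right (hle ⟨η, hη, rfl⟩) (Real.sqrt_nonneg _)

end TimeSlice

section PinchingRatio

/-- Both `minCurv u` and `c ∂_t u` solve the linearized flow, the first only as a supersolution, so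
the strong maximum principle applies to `c ∂_t u ≤ minCurv u`. -/
theorem minCurv_div_timeDeriv_eq_of_min {E : Type*} [NormedAddCommGroup E] [InnerProductSpace ℝ E]
    [FiniteDimensional ℝ E] [Nontrivial E] {u : SmoothFun (E × ℝ)} {B : Set E} (hB : IsOpen B)
    (hconv : Convex ℝ B) {a b : ℝ} (hab : a < b) (hmcf : ∀ z ∈ B ×ˢ Set.Icc a b, mcfOp u z = 0)
    (hpos : ∀ z ∈ B ×ˢ Set.Icc a b, 0 < timeDeriv u z) {c : ℝ}
    (hmin : ∀ z ∈ B ×ˢ Set.Icc a b, c ≤ minCurv u z / timeDeriv u z) {x : E} (hx : x ∈ B)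
    (heq : minCurv u (x, b) / timeDeriv u (x, b) = c) :
    ∀ z ∈ B ×ˢ Set.Icc a b, minCurv u z / timeDeriv u z = c := by
  have hS : UniqueDiffOn ℝ (B ×ˢ Set.Icc a b) := hB.uniqueDiffOn.prod (uniqueDiffOn_Icc hab)
  have hlin : ∀ z ∈ B ×ˢ Set.Icc a b, linOp u (c • timeDeriv u) z = 0 := fun z hz => by
    rw [map_smul, SmoothFun.smul_apply, timeDeriv, ← dirDeriv_mcfOp,
      dirDeriv_apply_eq_zero_of_eqOn hS hmcf _ z hz, mul_zero]
  have hconst := (isSupersolution_minCurv hS hmcf).eqOn_of_eq hB hconv (continuous_minCurv u) hlin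
    (fun z hz => (le_div_iff₀ (hpos z hz)).1 (hmin z hz)) hab hx
    ((div_eq_iff (hpos _ ⟨hx, Set.right_mem_Icc.2 hab.le⟩).ne').1 heq).symm
  exact fun z hz => (div_eq_iff (hpos z hz).ne').2 (hconst hz).symm

variable {n : ℕ} {u : EuclideanSpace ℝ (Fin n) × ℝ → ℝ}

/-- The nonparametric mean curvature flow equation for `u` at the space-time point `z`. -/
def IsMCFAt (u : EuclideanSpace ℝ (Fin n) × ℝ → ℝ) (z : EuclideanSpace ℝ (Fin n) × ℝ) : Prop :=
  deriv (fun s => u (z.1, s)) z.2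
    = lap (fun y => u (y, z.2)) z.1
      - ⟪gradient (fun y => u (y, z.2)) z.1,
          hess (fun y => u (y, z.2)) z.1 (gradient (fun y => u (y, z.2)) z.1)⟫
        / (1 + ‖gradient (fun y => u (y, z.2)) z.1‖ ^ 2)

/-- The ratio `κ₁ / h` of the smallest principal curvature and the mean curvature of the graph of
`u` at the space-time point `z`. -/
noncomputable def pinchingRatio (u : EuclideanSpace ℝ (Fin n) × ℝ → ℝ)
    (z : EuclideanSpace ℝ (Fin n) × ℝ) : ℝ :=
  graphKappa1 (fun y => u (y, z.2)) z.1 / graphH (fun y => u (y, z.2)) z.1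

theorem eventuallyEq_slice {v : EuclideanSpace ℝ (Fin n) × ℝ → ℝ}
    {z : EuclideanSpace ℝ (Fin n) × ℝ} (h : u =ᶠ[𝓝 z] v) :
    (fun y => u (y, z.2)) =ᶠ[𝓝 z.1] fun y => v (y, z.2) :=
  (Continuous.prodMk_left z.2).continuousAt.eventually h

theorem mcfOp_eq_zero_of_isMCFAt {U : SmoothFun (EuclideanSpace ℝ (Fin n) × ℝ)}
    {z : EuclideanSpace ℝ (Fin n) × ℝ} (h : u =ᶠ[𝓝 z] U) (hmcf : IsMCFAt u z) :
    mcfOp U z = 0 := by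
  have hslice := eventuallyEq_slice h
  have htime : (fun s => u (z.1, s)) =ᶠ[𝓝 z.2] fun s => U (z.1, s) :=
    (Continuous.prodMk_right z.1).continuousAt.eventually h
  rw [IsMCFAt, htime.deriv_eq, lap_congr hslice, hslice.gradient_eq, hess_congr hslice,
    deriv_slice, lap_slice, gradient_slice, real_inner_comm, inner_hess_slice] at hmcf
  rw [mcfOp_apply, hmcf]
  field_simp
  ring

theorem timeDeriv_pos_of_graphH_pos {U : SmoothFun (EuclideanSpace ℝ (Fin n) × ℝ)}
    {z : EuclideanSpace ℝ (Fin n) × ℝ} (h : u =ᶠ[𝓝 z] U) (hmcf : mcfOp U z = 0)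
    (hpos : 0 < graphH (fun y => u (y, z.2)) z.1) : 0 < timeDeriv U z := by
  rw [graphH_congr (eventuallyEq_slice h), graphH_slice hmcf] at hpos
  exact (div_pos_iff_of_pos_right (Real.sqrt_pos.2 (by positivity))).1 hpos

theorem pinchingRatio_eq_minCurv_div_timeDeriv [Nontrivial (EuclideanSpace ℝ (Fin n))]
    {U : SmoothFun (EuclideanSpace ℝ (Fin n) × ℝ)}
    {z : EuclideanSpace ℝ (Fin n) × ℝ} (h : u =ᶠ[𝓝 z] U) (hmcf : mcfOp U z = 0) :
    pinchingRatio u z = minCurv U z / timeDeriv U z := by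
  rw [pinchingRatio, graphH_congr (eventuallyEq_slice h), graphKappa1_congr (eventuallyEq_slice h),
    graphH_slice hmcf, graphKappa1_slice, div_div_div_cancel_right₀]
  exact (Real.sqrt_pos.2 (by positivity)).ne'

variable {D : Set (EuclideanSpace ℝ (Fin n))} {a b c : ℝ}

theorem exists_smoothFun_model {V : Set (EuclideanSpace ℝ (Fin n) × ℝ)} (hD : IsOpen D)
    (hV : IsOpen V) (hDV : D ×ˢ Set.Icc a b ⊆ V) (hu : ContDiffOn ℝ ∞ u V)
    (hmcf : ∀ z ∈ D ×ˢ Set.Icc a b, IsMCFAt u z)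
    (hpos : ∀ z ∈ D ×ˢ Set.Icc a b, 0 < graphH (fun y => u (y, z.2)) z.1)
    {x : EuclideanSpace ℝ (Fin n)} (hx : x ∈ D) :
    ∃ ρ > 0, Metric.ball x ρ ⊆ D ∧ ∃ U : SmoothFun (EuclideanSpace ℝ (Fin n) × ℝ),
      ∀ z ∈ Metric.ball x ρ ×ˢ Set.Icc a b, mcfOp U z = 0 ∧ 0 < timeDeriv U z ∧
        pinchingRatio u z = minCurv U z / timeDeriv U z := by
  obtain ⟨ρ, hρ, hρD⟩ := Metric.nhds_basis_closedBall.mem_iff.1 (hD.mem_nhds hx)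
  have hball : Metric.ball x ρ ⊆ D := Metric.ball_subset_closedBall.trans hρD
  obtain ⟨U, hU⟩ := exists_smoothFun_eventuallyEq
    (Metric.isClosed_closedBall.prod (isClosed_Icc (a := a) (b := b))) hV
    ((Set.prod_mono_left hρD).trans hDV) hu
  refine ⟨ρ, hρ, hball, U, fun z hz => ?_⟩
  have hzD : z ∈ D ×ˢ Set.Icc a b := ⟨hball hz.1, hz.2⟩
  have hzU : u =ᶠ[𝓝 z] U := hU z ⟨Metric.ball_subset_closedBall hz.1, hz.2⟩
  have hmcfU : mcfOp U z = 0 := mcfOp_eq_zero_of_isMCFAt hzU (hmcf z hzD)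
  have : Nontrivial (EuclideanSpace ℝ (Fin n)) := nontrivial_of_graphH_pos (hpos z hzD)
  exact ⟨hmcfU, timeDeriv_pos_of_graphH_pos hzU hmcfU (hpos z hzD),
    pinchingRatio_eq_minCurv_div_timeDeriv hzU hmcfU⟩

theorem exists_mem_nhds_pinchingRatio_eq {V : Set (EuclideanSpace ℝ (Fin n) × ℝ)} (hD : IsOpen D)
    (hab : a < b) (hV : IsOpen V) (hDV : D ×ˢ Set.Icc a b ⊆ V) (hu : ContDiffOn ℝ ∞ u V)
    (hmcf : ∀ z ∈ D ×ˢ Set.Icc a b, IsMCFAt u z)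
    (hpos : ∀ z ∈ D ×ˢ Set.Icc a b, 0 < graphH (fun y => u (y, z.2)) z.1)
    (hmin : ∀ z ∈ D ×ˢ Set.Icc a b, c ≤ pinchingRatio u z)
    {x : EuclideanSpace ℝ (Fin n)} (hx : x ∈ D) :
    ∃ B ∈ 𝓝 x, ∀ x₁ ∈ B, pinchingRatio u (x₁, b) = c →
      ∀ z ∈ B ×ˢ Set.Icc a b, pinchingRatio u z = c := by
  obtain ⟨ρ, hρ, hball, U, hU⟩ := exists_smoothFun_model hD hV hDV hu hmcf hpos hx
  have : Nontrivial (EuclideanSpace ℝ (Fin n)) :=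
    nontrivial_of_graphH_pos (hpos (x, a) ⟨hx, Set.left_mem_Icc.2 hab.le⟩)
  refine ⟨Metric.ball x ρ, Metric.ball_mem_nhds x hρ, fun x₁ hx₁ heq z hz => ?_⟩
  exact (hU z hz).2.2.trans <| minCurv_div_timeDeriv_eq_of_min Metric.isOpen_ball
    (convex_ball x ρ) hab (fun w hw => (hU w hw).1) (fun w hw => (hU w hw).2.1)
    (fun w hw => (hmin w ⟨hball hw.1, hw.2⟩).trans_eq (hU w hw).2.2) hx₁
    ((hU (x₁, b) ⟨hx₁, Set.right_mem_Icc.2 hab.le⟩).2.2.symm.trans heq) z hz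

theorem subsequent_singularities_stmt6_general (hD : IsOpen D) (hDconn : IsPreconnected D)
    (hab : a < b)
    (hsmooth : ∃ V, IsOpen V ∧ D ×ˢ Set.Icc a b ⊆ V ∧ ContDiffOn ℝ ∞ u V)
    (hmcf : ∀ z ∈ D ×ˢ Set.Icc a b, IsMCFAt u z)
    (hpos : ∀ z ∈ D ×ˢ Set.Icc a b, 0 < graphH (fun y => u (y, z.2)) z.1)
    {x₀ : EuclideanSpace ℝ (Fin n)} (hx₀ : x₀ ∈ D)
    (hmin : ∀ z ∈ D ×ˢ Set.Icc a b, pinchingRatio u (x₀, b) ≤ pinchingRatio u z) :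
    ∀ z ∈ D ×ˢ Set.Icc a b, pinchingRatio u z = pinchingRatio u (x₀, b) := by
  obtain ⟨V, hV, hDV, hu⟩ := hsmooth
  rintro ⟨x, t⟩ ⟨hx, ht⟩
  refine hDconn.induction₂' (fun x₁ x₂ => pinchingRatio u (x₁, b) = pinchingRatio u (x₀, b) →
    ∀ t ∈ Set.Icc a b, pinchingRatio u (x₂, t) = pinchingRatio u (x₀, b)) (fun y hy => ?_)
    (fun x₁ x₂ x₃ _ _ _ h₁₂ h₂₃ heq => h₂₃ (h₁₂ heq b (Set.right_mem_Icc.2 hab.le)))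
    hx₀ hx rfl t ht
  obtain ⟨B, hB, hconst⟩ := exists_mem_nhds_pinchingRatio_eq hD hab hV hDV hu hmcf hpos hmin hy
  filter_upwards [mem_nhdsWithin_of_mem_nhds hB] with y' hy'
  have hyB := mem_of_mem_nhds hB
  exact ⟨fun heq s hs => hconst y hyB heq (y', s) ⟨hy', hs⟩,
    fun heq s hs => hconst y' hy' heq (y, s) ⟨hyB, hs⟩⟩

end PinchingRatio

/-- maximum principle for `κ₁/h` under nonparametric mean curvature flow.
Let `D ⊆ ℝⁿ` be nonempty bounded open connected, `a < b`, and let `u` be smooth on a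
neighborhood of `D̄ × [a,b]` and satisfy the nonparametric mean curvature flow equation
`∂u/∂t = Δu − ⟨∇u,(D²u)∇u⟩/(1+|∇u|²)` there, with `h(u(·,t),x) > 0` on `D̄ × [a,b]`.
If the minimum of `(x,t) ↦ κ₁(u(·,t),x)/h(u(·,t),x)` over `D̄ × [a,b]` is attained at `(x₀,t₀)`
with `x₀ ∈ D` and `t₀ > a`, then that ratio is constant on `D × [a, t₀]`. -/
theorem subsequent_singularities_stmt6 {n : ℕ}
    (D : Set (EuclideanSpace ℝ (Fin n))) (hD : IsOpen D) (hDconn : IsConnected D)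
    (hDbdd : Bornology.IsBounded D)
    (a b : ℝ) (hab : a < b)
    (u : EuclideanSpace ℝ (Fin n) × ℝ → ℝ)
    (husmooth : ∃ V : Set (EuclideanSpace ℝ (Fin n) × ℝ), IsOpen V ∧
      (closure D) ×ˢ Set.Icc a b ⊆ V ∧ ContDiffOn ℝ (⊤ : ℕ∞) u V)
    (hmcf : ∀ x ∈ closure D, ∀ t ∈ Set.Icc a b,
      deriv (fun s => u (x, s)) t
        = lap (fun y => u (y, t)) x
          - ⟪gradient (fun y => u (y, t)) x,
              hess (fun y => u (y, t)) x (gradient (fun y => u (y, t)) x)⟫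
            / (1 + ‖gradient (fun y => u (y, t)) x‖ ^ 2))
    (hpos : ∀ x ∈ closure D, ∀ t ∈ Set.Icc a b, 0 < graphH (fun y => u (y, t)) x)
    (x₀ : EuclideanSpace ℝ (Fin n)) (t₀ : ℝ) (hx₀ : x₀ ∈ D) (ht₀ : t₀ ∈ Set.Ioc a b)
    (hmin : ∀ x ∈ closure D, ∀ t ∈ Set.Icc a b,
      graphKappa1 (fun y => u (y, t₀)) x₀ / graphH (fun y => u (y, t₀)) x₀
        ≤ graphKappa1 (fun y => u (y, t)) x / graphH (fun y => u (y, t)) x) :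
    ∀ x ∈ D, ∀ t ∈ Set.Icc a t₀,
      graphKappa1 (fun y => u (y, t)) x / graphH (fun y => u (y, t)) x
        = graphKappa1 (fun y => u (y, t₀)) x₀ / graphH (fun y => u (y, t₀)) x₀ := by
  have hsub : D ×ˢ Set.Icc a t₀ ⊆ closure D ×ˢ Set.Icc a b :=
    Set.prod_mono subset_closure (Set.Icc_subset_Icc_right ht₀.2)
  exact fun x hx t ht => subsequent_singularities_stmt6_general hD hDconn.isPreconnected ht₀.1
    (husmooth.imp fun V hV => ⟨hV.1, hsub.trans hV.2.1, hV.2.2⟩)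
    (fun z hz => hmcf z.1 (hsub hz).1 z.2 (hsub hz).2)
    (fun z hz => hpos z.1 (hsub hz).1 z.2 (hsub hz).2) hx₀
    (fun z hz => hmin z.1 (hsub hz).1 z.2 (hsub hz).2) (x, t) ⟨hx, ht⟩
end

section
/- Let Ω ⊆ ℝⁿ be open, let K be a nonempty bounded open connected subset of ℝⁿ with closure K̄ ⊆ Ω, let v = (v', v_{n+1}) ∈ ℝⁿ × ℝ, and let f : Ω → ℝ be a smooth solution of the translator equation with velocity v on Ω with h(f, x) > 0 for all x ∈ K̄. Then the minimum of the function x ↦ κ₁(f, x)/h(f, x) over K̄ is attained at some point of the topological frontier ∂K; moreover, if it is attained at some point of K, then x ↦ κ₁(f, x)/h(f, x) is constant on K̄. -/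
open scoped RealInnerProductSpace

open ContinuousLinearMap Filter InnerProductSpace Topology

/-!
Let `S`, `p` be the Hessian and the gradient of a translator `f`, `g = I + p ⊗ p`, and let `λ` be
the least eigenvalue of `S` relative to `g`, so that `κ₁ / h = λ / F` with `F = vn - ⟪v', p⟫`.
Suppose that a smooth `ψ` touches `λ` from below at `x`, where `ξ` is an eigenvector. The function
`⟪S η, η⟫ - ψ ⟪g η, η⟫` is then nonnegative near `x` and vanishes at `x` for `η = ξ`, so its second
variation, with `η` extending `ξ` in parallel to first order, is nonnegative. Tracing it with `g⁻¹`
and inserting the second derivative of the translator equation in the direction `ξ`, everything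
but the linearized operator applied to `ψ` cancels: `λ` is a viscosity supersolution of the
linearized translator equation, even though it need not be differentiable. The first derivative of
the translator equation in the direction `v'` says that `F` is a solution. Hence the quotient
`λ / F` is a supersolution of an elliptic equation without zeroth-order term, and the strong
minimum principle, proved with Hopf's Gaussian barrier, applies to it.
-/

lemma hasDerivAt_line_s7 {V : Type*} [NormedAddCommGroup V] [NormedSpace ℝ V] (x b : V) (t : ℝ) :
    HasDerivAt (fun t : ℝ => x + t • b) b t := by
  simpa using ((hasDerivAt_id t).smul_const b).const_add x

lemma tendsto_line {V : Type*} [NormedAddCommGroup V] [NormedSpace ℝ V] (x b : V) :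
    Tendsto (fun t : ℝ => x + t • b) (𝓝 0) (𝓝 x) := by
  simpa using (hasDerivAt_line_s7 x b 0).continuousAt.tendsto

/-- `f` is differentiable near `0`, twice differentiable at `0`, with value `a`, first derivative
`b` and second derivative `c` at `0`. -/
def HasJet {V : Type*} [NormedAddCommGroup V] [NormedSpace ℝ V] (f : ℝ → V) (a b c : V) : Prop :=
  f 0 = a ∧ ∃ f' : ℝ → V, (∀ᶠ t in 𝓝 0, HasDerivAt f (f' t) t) ∧ f' 0 = b ∧ HasDerivAt f' c 0

namespace HasJet

variable {V W X : Type*} [NormedAddCommGroup V] [NormedSpace ℝ V] [NormedAddCommGroup W]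
  [NormedSpace ℝ W] [NormedAddCommGroup X] [NormedSpace ℝ X]

lemma const (a : V) : HasJet (fun _ => a) a 0 0 :=
  ⟨rfl, fun _ => 0, .of_forall fun t => hasDerivAt_const t a, rfl, hasDerivAt_const 0 0⟩

lemma affine (a b : V) : HasJet (fun t : ℝ => a + t • b) a b 0 :=
  ⟨by simp, fun _ => b, .of_forall (hasDerivAt_line_s7 a b), rfl, hasDerivAt_const 0 b⟩

lemma add {f g : ℝ → V} {a b c a' b' c' : V} (hf : HasJet f a b c) (hg : HasJet g a' b' c') :
    HasJet (fun t => f t + g t) (a + a') (b + b') (c + c') := by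
  obtain ⟨rfl, f', hf, rfl, hf'⟩ := hf
  obtain ⟨rfl, g', hg, rfl, hg'⟩ := hg
  exact ⟨rfl, fun t => f' t + g' t, by filter_upwards [hf, hg] with t h h' using h.fun_add h', rfl,
    hf'.fun_add hg'⟩

lemma sub {f g : ℝ → V} {a b c a' b' c' : V} (hf : HasJet f a b c) (hg : HasJet g a' b' c') :
    HasJet (fun t => f t - g t) (a - a') (b - b') (c - c') := by
  obtain ⟨rfl, f', hf, rfl, hf'⟩ := hf
  obtain ⟨rfl, g', hg, rfl, hg'⟩ := hg
  exact ⟨rfl, fun t => f' t - g' t, by filter_upwards [hf, hg] with t h h' using h.fun_sub h', rfl,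
    hf'.fun_sub hg'⟩

lemma map (L : V →L[ℝ] W) {f : ℝ → V} {a b c : V} (hf : HasJet f a b c) :
    HasJet (fun t => L (f t)) (L a) (L b) (L c) := by
  obtain ⟨rfl, f', hf, rfl, hf'⟩ := hf
  exact ⟨rfl, fun t => L (f' t), hf.mono fun t ht => L.hasFDerivAt.comp_hasDerivAt t ht, rfl,
    L.hasFDerivAt.comp_hasDerivAt 0 hf'⟩

lemma bilin (B : V →L[ℝ] W →L[ℝ] X) {f : ℝ → V} {g : ℝ → W} {a b c : V} {a' b' c' : W}
    (hf : HasJet f a b c) (hg : HasJet g a' b' c') :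
    HasJet (fun t => B (f t) (g t)) (B a a') (B a b' + B b a') (B a c' + 2 • B b b' + B c a') := by
  obtain ⟨rfl, f', hf, rfl, hf'⟩ := hf
  obtain ⟨rfl, g', hg, rfl, hg'⟩ := hg
  refine ⟨rfl, fun t => B (f t) (g' t) + B (f' t) (g t), ?_, rfl, ?_⟩
  · filter_upwards [hf, hg] with t h h'
    exact B.hasDerivAt_of_bilinear (fun _ => h) (fun _ => h')
  · convert! (B.hasDerivAt_of_bilinear (fun _ => hf.self_of_nhds) (fun _ => hg')).fun_add
      (B.hasDerivAt_of_bilinear (fun _ => hf') (fun _ => hg.self_of_nhds)) using 1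
    rw [two_smul]
    abel

lemma mul {f g : ℝ → ℝ} {a b c a' b' c' : ℝ} (hf : HasJet f a b c) (hg : HasJet g a' b' c') :
    HasJet (fun t => f t * g t) (a * a') (a * b' + b * a') (a * c' + 2 * (b * b') + c * a') := by
  simpa using hf.bilin (ContinuousLinearMap.mul ℝ ℝ) hg

lemma inner {E : Type*} [NormedAddCommGroup E] [InnerProductSpace ℝ E] {f g : ℝ → E}
    {a b c a' b' c' : E} (hf : HasJet f a b c) (hg : HasJet g a' b' c') :
    HasJet (fun t => ⟪f t, g t⟫) ⟪a, a'⟫ (⟪a, b'⟫ + ⟪b, a'⟫)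
      (⟪a, c'⟫ + 2 * ⟪b, b'⟫ + ⟪c, a'⟫) := by
  have h := hf.bilin (innerSL ℝ) hg
  rw [nsmul_eq_mul, Nat.cast_ofNat] at h
  exact h

lemma clm_apply {f : ℝ → V →L[ℝ] W} {g : ℝ → V} {a b c : V →L[ℝ] W} {a' b' c' : V}
    (hf : HasJet f a b c) (hg : HasJet g a' b' c') :
    HasJet (fun t => f t (g t)) (a a') (a b' + b a') (a c' + (2 : ℝ) • b b' + c a') := by
  simpa [two_smul] using hf.bilin (ContinuousLinearMap.id ℝ (V →L[ℝ] W)) hg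

lemma of_contDiffAt {f : V → W} {x : V} (hf : ContDiffAt ℝ 2 f x) (b : V) :
    HasJet (fun t : ℝ => f (x + t • b)) (f x) (fderiv ℝ f x b) (fderiv ℝ (fderiv ℝ f) x b b) := by
  refine ⟨by simp, fun t => fderiv ℝ f (x + t • b) b, ?_, by simp, ?_⟩
  · filter_upwards [(tendsto_line x b).eventually (hf.eventually (by simp))] with t ht
    exact (ht.differentiableAt (by norm_num)).hasFDerivAt.comp_hasDerivAt t (hasDerivAt_line_s7 x b t)
  · have h1 : DifferentiableAt ℝ (fderiv ℝ f) x :=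
      (hf.fderiv_right (m := 1) (by norm_num)).differentiableAt (by norm_num)
    have h2 : HasDerivAt (fun t : ℝ => fderiv ℝ f (x + t • b)) (fderiv ℝ (fderiv ℝ f) x b) 0 := by
      have h3 : HasFDerivAt (fderiv ℝ f) (fderiv ℝ (fderiv ℝ f) x) (x + (0 : ℝ) • b) := by
        simpa using h1.hasFDerivAt
      exact h3.comp_hasDerivAt 0 (hasDerivAt_line_s7 x b 0)
    simpa using h2.clm_apply (hasDerivAt_const 0 b)

lemma eq_zero_and_nonneg {f : ℝ → ℝ} {b c : ℝ} (hf : HasJet f 0 b c)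
    (h : ∀ᶠ t in 𝓝 0, 0 ≤ f t) : b = 0 ∧ 0 ≤ c := by
  obtain ⟨h0, f', hf, rfl, hf'⟩ := hf
  have hb : f' 0 = 0 := by
    refine IsLocalMin.hasDerivAt_eq_zero (f := f) (a := 0) ?_ hf.self_of_nhds
    filter_upwards [h] with t ht
    rwa [h0]
  refine ⟨hb, ?_⟩
  by_contra! hc
  -- `f - c t² / 4` has a strict local maximum at `0`, although `f` has a local minimum there.
  have hg : ∀ᶠ t in 𝓝 0, HasDerivAt (fun t => f t - c / 4 * t ^ 2) (f' t - c / 2 * t) t := by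
    filter_upwards [hf] with t ht
    convert! ht.fun_sub ((hasDerivAt_pow 2 t).const_mul (c / 4)) using 1
    norm_num
    ring
  have hd : deriv (fun t => f t - c / 4 * t ^ 2) =ᶠ[𝓝 0] fun t => f' t - c / 2 * t := by
    filter_upwards [hg] with t ht using ht.deriv
  have hdd : HasDerivAt (fun t => f' t - c / 2 * t) (c / 2) 0 := by
    convert! hf'.fun_sub ((hasDerivAt_id (0 : ℝ)).const_mul (c / 2)) using 1
    ring
  have hmax : IsLocalMax (fun t => f t - c / 4 * t ^ 2) 0 := by
    refine isLocalMax_of_deriv_deriv_neg ?_ ?_ hg.self_of_nhds.continuousAt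
    · rw [hd.deriv_eq, hdd.deriv]
      linarith
    · rw [hd.self_of_nhds]
      simp [hb]
  obtain ⟨t, ⟨ht1, ht2⟩, ht3⟩ :=
    (((hmax.and h).filter_mono nhdsWithin_le_nhds).and self_mem_nhdsWithin :
      ∀ᶠ t in 𝓝[>] (0 : ℝ), _).exists
  simp only [h0] at ht1
  have : 0 < t ^ 2 := pow_pos ht3 2
  nlinarith

lemma eq_zero {f : ℝ → ℝ} {a b c : ℝ} (hf : HasJet f a b c) (h : ∀ᶠ t in 𝓝 0, f t = 0) :
    b = 0 ∧ c = 0 := by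
  obtain rfl : a = 0 := hf.1 ▸ h.self_of_nhds
  have h1 := hf.eq_zero_and_nonneg (h.mono fun t ht => ht.ge)
  have h2 := (HasJet.const 0).sub hf
  rw [sub_self] at h2
  have h3 := h2.eq_zero_and_nonneg (h.mono fun t ht => by simp [ht])
  exact ⟨h1.1, le_antisymm (by linarith [h3.2]) h1.2⟩

end HasJet

section Gradient

variable {E : Type*} [NormedAddCommGroup E] [InnerProductSpace ℝ E]

lemma isSymmetric_of_hasFDerivAt {V : Type*} [NormedAddCommGroup V] [NormedSpace ℝ V]
    {L : V → E →L[ℝ] E} {L' : V →L[ℝ] E →L[ℝ] E} {x : V} (hL : HasFDerivAt L L' x)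
    (hsymm : ∀ᶠ y in 𝓝 x, (L y).IsSymmetric) (u : V) : (L' u).IsSymmetric := by
  intro v w
  have hleft := (hL.clm_apply (hasFDerivAt_const v x)).inner ℝ (hasFDerivAt_const w x)
  have hright := (hasFDerivAt_const v x).inner ℝ (hL.clm_apply (hasFDerivAt_const w x))
  have heq : (fun y => ⟪L y v, w⟫) =ᶠ[𝓝 x] fun y => ⟪v, L y w⟫ := by
    filter_upwards [hsymm] with y hy using hy v w
  simpa using DFunLike.congr_fun (hleft.unique (hright.congr_of_eventuallyEq heq)) u

variable [CompleteSpace E] {f g : E → ℝ} {x : E}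

lemma contDiffAt_gradient {k m : WithTop ℕ∞} (hf : ContDiffAt ℝ k f x) (hm : m + 1 ≤ k) :
    ContDiffAt ℝ m (gradient f) x :=
  (toDual ℝ E).symm.contDiff.contDiffAt.comp x (hf.fderiv_right hm)

lemma hasFDerivAt_gradient (hf : ContDiffAt ℝ 2 f x) :
    HasFDerivAt (gradient f) (fderiv ℝ (gradient f) x) x :=
  ((contDiffAt_gradient (m := 1) hf (by norm_num)).differentiableAt (by norm_num)).hasFDerivAt

lemma fderiv_fderiv_apply (hf : ContDiffAt ℝ 2 f x) (u v : E) :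
    fderiv ℝ (fderiv ℝ f) x u v = ⟪fderiv ℝ (gradient f) x u, v⟫ := by
  have hD : HasFDerivAt (fderiv ℝ f) (fderiv ℝ (fderiv ℝ f) x) x :=
    ((hf.fderiv_right (m := 1) (by norm_num)).differentiableAt (by norm_num)).hasFDerivAt
  have h := (hasFDerivAt_gradient hf).inner ℝ (hasFDerivAt_const v x)
  simp only [inner_gradient_left] at h
  simpa using DFunLike.congr_fun ((hD.clm_apply (hasFDerivAt_const v x)).unique h) u

lemma isSymmetric_fderiv_gradient (hf : ContDiffAt ℝ 2 f x) :
    (fderiv ℝ (gradient f) x).IsSymmetric := by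
  intro u v
  change ⟪fderiv ℝ (gradient f) x u, v⟫ = ⟪u, fderiv ℝ (gradient f) x v⟫
  rw [← fderiv_fderiv_apply hf, real_inner_comm, ← fderiv_fderiv_apply hf]
  exact hf.isSymmSndFDerivAt (by simp) u v

lemma HasJet.of_gradient (hf : ContDiffAt ℝ 2 f x) (b : E) :
    HasJet (fun t : ℝ => f (x + t • b)) (f x) ⟪gradient f x, b⟫
      ⟪fderiv ℝ (gradient f) x b, b⟫ := by
  simpa only [fderiv_fderiv_apply hf, inner_gradient_left] using HasJet.of_contDiffAt hf b

lemma continuousOn_gradient {s : Set E} (hf : ∀ x ∈ s, ContDiffAt ℝ 2 f x) :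
    ContinuousOn (gradient f) s :=
  fun x hx => (hasFDerivAt_gradient (hf x hx)).continuousAt.continuousWithinAt

lemma continuousOn_fderiv_gradient {s : Set E} (hf : ∀ x ∈ s, ContDiffAt ℝ 2 f x) :
    ContinuousOn (fderiv ℝ (gradient f)) s := fun x hx =>
  ((contDiffAt_gradient (m := 1) (hf x hx) (by norm_num)).fderiv_right
    (m := 0) (by norm_num)).continuousAt.continuousWithinAt

lemma gradient_add_const (c : ℝ) : gradient (fun y => f y + c) = gradient f := by
  funext y
  simp only [gradient, fderiv_add_const]

lemma gradient_mul (hf : DifferentiableAt ℝ f x) (hg : DifferentiableAt ℝ g x) :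
    gradient (fun y => f y * g y) x = f x • gradient g x + g x • gradient f x := by
  refine HasGradientAt.gradient ?_
  rw [hasGradientAt_iff_hasFDerivAt]
  simpa using hf.hasFDerivAt.fun_mul hg.hasFDerivAt

lemma fderiv_gradient_mul (hf : ContDiffAt ℝ 2 f x) (hg : ContDiffAt ℝ 2 g x) :
    fderiv ℝ (gradient fun y => f y * g y) x = f x • fderiv ℝ (gradient g) x
      + g x • fderiv ℝ (gradient f) x + rankOne ℝ (gradient f x) (gradient g x)
      + rankOne ℝ (gradient g x) (gradient f x) := by
  have heq : (gradient fun y => f y * g y) =ᶠ[𝓝 x]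
      fun y => f y • gradient g y + g y • gradient f y := by
    filter_upwards [hf.eventually (by simp), hg.eventually (by simp)] with y hfy hgy
    exact gradient_mul (hfy.differentiableAt (by norm_num)) (hgy.differentiableAt (by norm_num))
  have hf' := (hf.differentiableAt (by norm_num)).hasFDerivAt
  have hg' := (hg.differentiableAt (by norm_num)).hasFDerivAt
  rw [heq.fderiv_eq, ((hf'.fun_smul (hasFDerivAt_gradient hg)).fun_add
    (hg'.fun_smul (hasFDerivAt_gradient hf))).fderiv]
  ext u
  simp [← inner_gradient_left]
  abel

end Gradient

section Trace

variable {E : Type*} [NormedAddCommGroup E] [InnerProductSpace ℝ E] [FiniteDimensional ℝ E]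

/-- The trace of an operator on a finite-dimensional space, as a continuous linear functional. -/
noncomputable def traceCLM : (E →L[ℝ] E) →L[ℝ] ℝ :=
  LinearMap.toContinuousLinearMap (LinearMap.trace ℝ E ∘ₗ ContinuousLinearMap.coeLM ℝ)

lemma traceCLM_apply (L : E →L[ℝ] E) : traceCLM L = LinearMap.trace ℝ E L := rfl

lemma traceCLM_rankOne (x y : E) : traceCLM (rankOne ℝ x y) = ⟪y, x⟫ := trace_rankOne x y

lemma traceCLM_comp_comm (A B : E →L[ℝ] E) : traceCLM (A ∘L B) = traceCLM (B ∘L A) :=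
  LinearMap.trace_comp_comm' (B : E →ₗ[ℝ] E) (A : E →ₗ[ℝ] E)

lemma traceCLM_rankOne_comp (x y : E) (L : E →L[ℝ] E) :
    traceCLM (rankOne ℝ x y ∘L L) = ⟪y, L x⟫ := by
  rw [traceCLM_comp_comm, comp_rankOne, traceCLM_rankOne]

lemma traceCLM_comp_nonneg {A M : E →L[ℝ] E} (hA : A.IsPositive) (hM : ∀ b, 0 ≤ ⟪M b, b⟫) :
    0 ≤ traceCLM (A ∘L M) := by
  have hA' := hA.toLinearMap
  let e := hA'.isSymmetric.eigenvectorBasis rfl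
  have happly (i) : A (e i) = hA'.isSymmetric.eigenvalues rfl i • e i :=
    hA'.isSymmetric.apply_eigenvectorBasis rfl i
  rw [traceCLM_comp_comm, traceCLM_apply, LinearMap.trace_eq_sum_inner _ e]
  refine Finset.sum_nonneg fun i _ => ?_
  change 0 ≤ ⟪e i, M (A (e i))⟫
  rw [happly, map_smul, real_inner_smul_right, real_inner_comm]
  exact mul_nonneg (hA'.nonneg_eigenvalues rfl i) (hM _)

end Trace

section InteriorBall

variable {E : Type*} [NormedAddCommGroup E] [NormedSpace ℝ E]

lemma eq_of_dist_midpoint_le [StrictConvexSpace ℝ E] {w q y : E}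
    (hm : dist w (midpoint ℝ y q) ≤ dist q (midpoint ℝ y q)) (hy : dist q y ≤ dist w y) :
    w = q := by
  have hqm : dist q (midpoint ℝ y q) = dist q y / 2 := by
    rw [dist_comm, dist_midpoint_right, dist_comm y q, Real.norm_ofNat]
    ring
  have hmy : dist (midpoint ℝ y q) y = dist q y / 2 := by
    rw [dist_midpoint_left, dist_comm y q, Real.norm_ofNat]
    ring
  have htri := dist_triangle w (midpoint ℝ y q) y
  have hmid : midpoint ℝ y q = midpoint ℝ w y :=
    eq_midpoint_of_dist_eq_half (by linarith) (by linarith)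
  simpa [midpoint_eq_smul_add, add_comm w y] using hmid.symm

lemma exists_mem_inter_closure_sdiff {X : Type*} [TopologicalSpace X] {K Z : Set X}
    (hK : IsPreconnected K) (hZ : IsOpen (K \ Z)) (hne : (K ∩ Z).Nonempty)
    (hne' : (K \ Z).Nonempty) : (K ∩ Z ∩ closure (K \ Z)).Nonempty := by
  by_contra! h
  obtain ⟨p, hpK, hpZ⟩ := hne
  have hsub : K ⊆ K \ Z := hK.subset_of_closure_inter_subset hZ
    (hne'.mono fun x hx => ⟨hx.1, hx⟩) fun z hz => ⟨hz.2, fun hzZ => h.le ⟨⟨hz.2, hzZ⟩, hz.1⟩⟩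
  exact (hsub hpK).2 hpZ

lemma exists_closedBall_inter_eq_singleton [StrictConvexSpace ℝ E] [ProperSpace E] {K Z : Set E}
    (hK : IsOpen K) (hKc : IsPreconnected K) (hZ : IsOpen (K \ Z)) (hne : (K ∩ Z).Nonempty)
    (hne' : (K \ Z).Nonempty) :
    ∃ c, ∃ q ∈ K ∩ Z, c ≠ q ∧ ∀ w ∈ K ∩ Z, dist w c ≤ dist q c → w = q := by
  obtain ⟨z, ⟨hzK, hzZ⟩, hzcl⟩ := exists_mem_inter_closure_sdiff hKc hZ hne hne'
  obtain ⟨δ, hδ, hδK⟩ := Metric.nhds_basis_closedBall.mem_iff.1 (hK.mem_nhds hzK)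
  obtain ⟨y, ⟨-, hyZ⟩, hyz⟩ := Metric.mem_closure_iff.1 hzcl (δ / 2) (by positivity)
  have hcompact : IsCompact (Metric.closedBall z δ ∩ Z) := by
    have hsdiff : Metric.closedBall z δ ∩ Z = Metric.closedBall z δ \ (K \ Z) := by
      grind
    rw [hsdiff]
    exact (isCompact_closedBall z δ).diff hZ
  obtain ⟨q, ⟨hqz, hqZ⟩, hqmin⟩ := hcompact.exists_isMinOn (f := fun w => dist w y)
    ⟨z, Metric.mem_closedBall_self hδ.le, hzZ⟩ (by fun_prop)
  simp only [isMinOn_iff] at hqmin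
  have hqy : q ≠ y := ne_of_mem_of_not_mem hqZ hyZ
  refine ⟨midpoint ℝ y q, q, ⟨hδK hqz, hqZ⟩, by simpa using hqy.symm, fun w hw hwc => ?_⟩
  refine eq_of_dist_midpoint_le hwc (le_of_not_gt fun hlt => ?_)
  have hwz : w ∈ Metric.closedBall z δ := by
    rw [Metric.mem_closedBall]
    linarith [dist_triangle w y z, dist_comm y z,
      hqmin z ⟨Metric.mem_closedBall_self hδ.le, hzZ⟩]
  exact (hqmin w ⟨hwz, hw.2⟩).not_gt hlt

end InteriorBall

section Barrier

variable {E : Type*} [NormedAddCommGroup E]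

/-- Hopf's barrier: a Gaussian of height `ε` and steepness `α` centred at `c`. -/
noncomputable def gaussianBarrier (ε α : ℝ) (c x : E) : ℝ := ε * Real.exp (-(α * ‖x - c‖ ^ 2))

lemma gaussianBarrier_pos {ε : ℝ} (hε : 0 < ε) (α : ℝ) (c x : E) : 0 < gaussianBarrier ε α c x := by
  unfold gaussianBarrier
  positivity

lemma gaussianBarrier_le {ε α : ℝ} (hε : 0 < ε) (hα : 0 < α) (c x : E) :
    gaussianBarrier ε α c x ≤ ε := by
  refine mul_le_of_le_one_right hε.le (Real.exp_le_one_iff.2 (neg_nonpos.2 ?_))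
  positivity

lemma gaussianBarrier_lt_gaussianBarrier {ε α : ℝ} (hε : 0 < ε) (hα : 0 < α) {c x y : E}
    (h : dist y c < dist x c) : gaussianBarrier ε α c x < gaussianBarrier ε α c y := by
  unfold gaussianBarrier
  rw [← dist_eq_norm, ← dist_eq_norm]
  gcongr

variable [InnerProductSpace ℝ E]

lemma contDiff_gaussianBarrier (ε α : ℝ) (c : E) {k : WithTop ℕ∞} :
    ContDiff ℝ k (gaussianBarrier ε α c) := by
  unfold gaussianBarrier
  have hnorm : ContDiff ℝ k fun x : E => ‖x - c‖ ^ 2 :=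
    (contDiff_norm_sq ℝ).comp (contDiff_id.sub contDiff_const)
  exact contDiff_const.mul (Real.contDiff_exp.comp (contDiff_const.mul hnorm).neg)

variable [CompleteSpace E]

lemma gradient_gaussianBarrier (ε α : ℝ) (c x : E) :
    gradient (gaussianBarrier ε α c) x = (-(2 * α) * gaussianBarrier ε α c x) • (x - c) := by
  refine HasGradientAt.gradient ?_
  rw [hasGradientAt_iff_hasFDerivAt]
  have hsq := ((hasFDerivAt_id x).sub_const c).norm_sq
  convert! (hsq.const_mul α).fun_neg.exp.const_mul ε using 1
  ext u
  simp [gaussianBarrier]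
  ring

lemma fderiv_gradient_gaussianBarrier (ε α : ℝ) (c x : E) :
    fderiv ℝ (gradient (gaussianBarrier ε α c)) x = (2 * α * gaussianBarrier ε α c x) •
      ((2 * α) • rankOne ℝ (x - c) (x - c) - 1) := by
  have hγ : HasFDerivAt (gaussianBarrier ε α c) _ x :=
    ((contDiff_gaussianBarrier ε α c (k := 1)).differentiable (by norm_num) x).hasFDerivAt
  have hsub : HasFDerivAt (fun y => y - c) (.id ℝ E) x := (hasFDerivAt_id x).sub_const c
  rw [funext (gradient_gaussianBarrier ε α c), ((hγ.const_mul (-(2 * α))).fun_smul hsub).fderiv]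
  ext u
  simp only [add_apply, sub_apply, smul_apply, one_def, id_apply, smulRight_apply, rankOne_apply,
    ← inner_gradient_left, gradient_gaussianBarrier, real_inner_smul_left, smul_eq_mul]
  module

end Barrier

section Viscosity

variable {E : Type*} [NormedAddCommGroup E] [InnerProductSpace ℝ E] [FiniteDimensional ℝ E]

lemma exists_gaussianBarrier_strict_subsolution {a : E → E →L[ℝ] E} {β : E → E} {s : Set E}
    (hs : IsCompact s) (ha : ContinuousOn a s) (hβ : ContinuousOn β s)
    (hpos : ∀ x ∈ s, ∀ ξ ≠ 0, 0 < ⟪a x ξ, ξ⟫) {c : E} (hc : c ∉ s) :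
    ∃ α > 0, ∀ ε > 0, ∀ x ∈ s, ⟪β x, gradient (gaussianBarrier ε α c) x⟫ <
      traceCLM (a x ∘L fderiv ℝ (gradient (gaussianBarrier ε α c)) x) := by
  have hA (x) (hx : x ∈ s) : 0 < ⟪a x (x - c), x - c⟫ :=
    hpos x hx _ (sub_ne_zero.2 (ne_of_mem_of_not_mem hx hc))
  have hquot : ContinuousOn
      (fun x => (traceCLM (a x) - ⟪β x, x - c⟫) / ⟪a x (x - c), x - c⟫) s := by
    have hsub : ContinuousOn (fun x => x - c) s := by fun_prop
    exact ((traceCLM.continuous.comp_continuousOn ha).sub (hβ.inner hsub)).div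
      ((ha.clm_apply hsub).inner hsub) fun x hx => (hA x hx).ne'
  obtain ⟨C, hC⟩ := hs.exists_bound_of_continuousOn hquot
  set α := max C 1
  have hα : 0 < α := lt_max_of_lt_right one_pos
  refine ⟨α, hα, fun ε hε x hx => ?_⟩
  have hbound : traceCLM (a x) - ⟪β x, x - c⟫ < 2 * α * ⟪a x (x - c), x - c⟫ := by
    rw [← div_lt_iff₀ (hA x hx)]
    linarith [(Real.le_norm_self _).trans (hC x hx), le_max_left C 1]
  have hγ : 0 < 2 * α * gaussianBarrier ε α c x :=
    mul_pos (by positivity) (gaussianBarrier_pos hε α c x)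
  have htrace (z : E) : traceCLM (a x ∘L ((2 * α) • rankOne ℝ z z - 1)) =
      2 * α * ⟪a x z, z⟫ - traceCLM (a x) := by
    rw [comp_sub, comp_smul, comp_rankOne, map_sub, map_smul, traceCLM_rankOne, one_def, comp_id,
      smul_eq_mul, real_inner_comm]
  rw [fderiv_gradient_gaussianBarrier, gradient_gaussianBarrier, real_inner_smul_right, comp_smul,
    map_smul, htrace, smul_eq_mul]
  linear_combination (2 * α * gaussianBarrier ε α c x) * hbound

/-- `u` is a viscosity supersolution on `K` of the linear equation `tr (a D²u) = ⟪β, ∇u⟫`. -/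
def IsViscositySupersolution (a : E → E →L[ℝ] E) (β : E → E) (u : E → ℝ) (K : Set E) : Prop :=
  ∀ x ∈ K, ∀ ψ : E → ℝ, ContDiffAt ℝ 2 ψ x → IsLocalMin (fun y => u y - ψ y) x →
    traceCLM (a x ∘L fderiv ℝ (gradient ψ) x) ≤ ⟪β x, gradient ψ x⟫

namespace IsViscositySupersolution

variable {a : E → E →L[ℝ] E} {β : E → E} {u : E → ℝ} {K : Set E}

/-- A function touching `u / F` from below at `x` becomes, after adding a constant and multiplying
by `F`, a function touching `u` from below at `x`. -/
lemma div (hu : IsViscositySupersolution a β u K) (hK : IsOpen K) {F : E → ℝ}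
    (hF : ∀ x ∈ K, ContDiffAt ℝ 2 F x) (hFpos : ∀ x ∈ K, 0 < F x)
    (hFeq : ∀ x ∈ K, traceCLM (a x ∘L fderiv ℝ (gradient F) x) = ⟪β x, gradient F x⟫)
    (ha : ∀ x ∈ K, (a x).IsSymmetric) :
    IsViscositySupersolution a (fun x => β x - (2 / F x) • a x (gradient F x))
      (fun x => u x / F x) K := by
  intro x hx ψ hψ hmin
  set c := u x / F x - ψ x
  have hψc : ContDiffAt ℝ 2 (fun y => ψ y + c) x := hψ.add contDiffAt_const
  have hgrad : gradient (fun y => ψ y + c) = gradient ψ := gradient_add_const c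
  have htouch : IsLocalMin (fun y => u y - (ψ y + c) * F y) x := by
    filter_upwards [hmin, hK.mem_nhds hx] with y hy hyK
    have hle : ψ y + c ≤ u y / F y := by grind
    have hx0 : (ψ x + c) * F x = u x := by
      rw [add_sub_cancel, div_mul_cancel₀ _ (hFpos x hx).ne']
    rw [hx0, sub_self, sub_nonneg]
    exact (le_div_iff₀ (hFpos y hyK)).1 hle
  have hvisc := hu x hx _ (hψc.mul (hF x hx)) htouch
  have hsymm : ⟪gradient F x, a x (gradient ψ x)⟫ = ⟪gradient ψ x, a x (gradient F x)⟫ :=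
    (ha x hx _ _).symm.trans (real_inner_comm _ _)
  rw [gradient_mul (hψc.differentiableAt (by norm_num)) ((hF x hx).differentiableAt (by norm_num)),
    fderiv_gradient_mul hψc (hF x hx), hgrad] at hvisc
  simp only [comp_add, comp_smul, comp_rankOne, map_add, map_smul, traceCLM_rankOne, smul_eq_mul,
    inner_add_right, real_inner_smul_right, hFeq x hx, hsymm] at hvisc
  have hFx := hFpos x hx
  rw [inner_sub_left, real_inner_smul_left, real_inner_comm (gradient ψ x) (a x (gradient F x))]
  refine le_of_mul_le_mul_left ?_ hFx
  field_simp
  linarith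

lemma hopf (hvisc : IsViscositySupersolution a β u K) (hK : IsOpen K) (ha : ContinuousOn a K)
    (hpos : ∀ x ∈ K, ∀ ξ ≠ 0, 0 < ⟪a x ξ, ξ⟫) (hβ : ContinuousOn β K) (hu : ContinuousOn u K)
    {c q : E} (hcq : c ≠ q) (hq : q ∈ K) (hmin : ∀ x ∈ K, u q ≤ u x) :
    ∃ x ∈ K, x ≠ q ∧ dist x c ≤ dist q c ∧ u x = u q := by
  by_contra! htouch
  obtain ⟨r, hr, hrsub⟩ := Metric.nhds_basis_closedBall.mem_iff.1
    ((hK.inter isOpen_compl_singleton).mem_nhds ⟨hq, hcq.symm⟩)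
  have hrK : Metric.closedBall q r ⊆ K := fun x hx => (hrsub hx).1
  have hrc : c ∉ Metric.closedBall q r := fun hc => (hrsub hc).2 rfl
  obtain ⟨α, hα, hstrict⟩ := exists_gaussianBarrier_strict_subsolution (isCompact_closedBall q r)
    (ha.mono hrK) (hβ.mono hrK) (fun x hx => hpos x (hrK hx)) hrc
  obtain ⟨m, hm, hgap⟩ : ∃ m > u q, ∀ x ∈ Metric.sphere q r ∩ Metric.closedBall c (dist q c),
      m ≤ u x := by
    refine ((isCompact_sphere q r).inter_right Metric.isClosed_closedBall).exists_forall_le'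
      (hu.mono fun x hx => hrK (Metric.sphere_subset_closedBall hx.1)) fun x ⟨hxq, hxc⟩ => ?_
    have hxK := hrK (Metric.sphere_subset_closedBall hxq)
    exact (hmin x hxK).lt_of_ne'
      (htouch x hxK (Metric.ne_of_mem_sphere hxq hr.ne') hxc)
  have hε : 0 < m - u q := sub_pos.2 hm
  set γ := gaussianBarrier (m - u q) α c
  have hγ : ContDiff ℝ 2 γ := contDiff_gaussianBarrier _ α c
  have hboundary (x) (hx : x ∈ Metric.closedBall q r \ Metric.ball q r) :
      u q - γ q < u x - γ x := by
    rw [Metric.closedBall_sdiff_ball] at hx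
    obtain hxc | hxc := le_or_gt (dist x c) (dist q c)
    · linarith [hgap x ⟨hx, hxc⟩, gaussianBarrier_le hε hα c x, gaussianBarrier_pos hε α c q]
    · linarith [hmin x (hrK (Metric.sphere_subset_closedBall hx)),
        gaussianBarrier_lt_gaussianBarrier hε hα hxc]
  obtain ⟨x, hx, hxmin⟩ := (isCompact_closedBall q r).exists_isLocalMin_mem_open
    Metric.ball_subset_closedBall ((hu.mono hrK).sub hγ.continuous.continuousOn)
    (Metric.mem_closedBall_self hr.le) hboundary Metric.isOpen_ball
  have hx' := Metric.ball_subset_closedBall hx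
  exact (hvisc x (hrK hx') γ hγ.contDiffAt hxmin).not_gt (hstrict _ hε x hx')

lemma eq_of_isMinOn (hvisc : IsViscositySupersolution a β u K) (hK : IsOpen K)
    (hKc : IsPreconnected K) (ha : ContinuousOn a K)
    (hpos : ∀ x ∈ K, ∀ ξ ≠ 0, 0 < ⟪a x ξ, ξ⟫) (hβ : ContinuousOn β K) (hu : ContinuousOn u K)
    {p : E} (hp : p ∈ K) (hmin : ∀ x ∈ K, u p ≤ u x) {x : E} (hx : x ∈ K) : u x = u p := by
  by_contra hxp
  obtain ⟨c, q, ⟨hqK, hqp : u q = u p⟩, hcq, hball⟩ := exists_closedBall_inter_eq_singleton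
    (Z := u ⁻¹' {u p}) hK hKc (hu.isOpen_inter_preimage hK isOpen_compl_singleton)
    ⟨p, hp, rfl⟩ ⟨x, hx, hxp⟩
  obtain ⟨w, hwK, hwq, hwc, hw⟩ := hvisc.hopf hK ha hpos hβ hu hcq hqK (by simpa only [hqp])
  exact hwq (hball w ⟨hwK, hw.trans hqp⟩ hwc)

end IsViscositySupersolution

end Viscosity

section GraphMetric

variable {E : Type*} [NormedAddCommGroup E] [InnerProductSpace ℝ E]

/-- The metric `I + p ⊗ p` of a graph at a point where its gradient is `p`. -/
noncomputable def graphMetric (p : E) : E →L[ℝ] E := 1 + rankOne ℝ p p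

/-- The inverse `I - (p ⊗ p) / (1 + |p|²)` of `graphMetric p`. -/
noncomputable def graphCometric (p : E) : E →L[ℝ] E := 1 - (1 + ‖p‖ ^ 2)⁻¹ • rankOne ℝ p p

lemma graphMetric_apply (p ξ : E) : graphMetric p ξ = ξ + ⟪p, ξ⟫ • p := by simp [graphMetric]

lemma graphCometric_apply (p ξ : E) :
    graphCometric p ξ = ξ - (⟪p, ξ⟫ / (1 + ‖p‖ ^ 2)) • p := by
  simp [graphCometric, smul_smul, div_eq_inv_mul]

lemma inner_graphMetric_self (p ξ : E) : ⟪graphMetric p ξ, ξ⟫ = ‖ξ‖ ^ 2 + ⟪p, ξ⟫ ^ 2 := by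
  rw [graphMetric_apply, inner_add_left, real_inner_self_eq_norm_sq, real_inner_smul_left,
    sq ⟪p, ξ⟫]

lemma inner_graphMetric_self_pos (p : E) {ξ : E} (hξ : ξ ≠ 0) : 0 < ⟪graphMetric p ξ, ξ⟫ := by
  rw [inner_graphMetric_self]
  have := norm_pos_iff.2 hξ
  positivity

lemma graphCometric_graphMetric (p ξ : E) : graphCometric p (graphMetric p ξ) = ξ := by
  have hw : 1 + ‖p‖ ^ 2 ≠ 0 := by positivity
  rw [graphCometric_apply, graphMetric_apply, inner_add_right, real_inner_smul_right,
    real_inner_self_eq_norm_sq, ← mul_one_add, mul_div_cancel_right₀ _ hw, add_sub_cancel_right]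

lemma inner_graphCometric_left (p ξ η : E) :
    ⟪graphCometric p ξ, η⟫ = ⟪ξ, graphCometric p η⟫ := by
  simp only [graphCometric_apply, inner_sub_left, inner_sub_right, real_inner_smul_left,
    real_inner_smul_right, real_inner_comm ξ p]
  ring

lemma inner_graphCometric_self_pos (p : E) {ξ : E} (hξ : ξ ≠ 0) :
    0 < ⟪graphCometric p ξ, ξ⟫ := by
  have hw : 0 < 1 + ‖p‖ ^ 2 := by positivity
  have hcs : ⟪p, ξ⟫ ^ 2 ≤ ‖p‖ ^ 2 * ‖ξ‖ ^ 2 := by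
    simpa only [sq, real_inner_self_eq_norm_sq, real_inner_comm p ξ] using
      real_inner_mul_inner_self_le p ξ
  have hval : ⟪graphCometric p ξ, ξ⟫ = ‖ξ‖ ^ 2 - ⟪p, ξ⟫ ^ 2 / (1 + ‖p‖ ^ 2) := by
    rw [graphCometric_apply, inner_sub_left, real_inner_smul_left, real_inner_self_eq_norm_sq]
    ring
  rw [hval, sub_pos, div_lt_iff₀ hw]
  nlinarith [norm_pos_iff.2 hξ]

lemma isPositive_graphCometric (p : E) : (graphCometric p).IsPositive := by
  refine isPositive_def.2 ⟨inner_graphCometric_left p, fun ξ => ?_⟩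
  obtain rfl | hξ := eq_or_ne ξ 0
  · simp [reApplyInnerSelf]
  · exact (inner_graphCometric_self_pos p hξ).le

lemma continuous_graphCometric : Continuous (graphCometric : E → E →L[ℝ] E) := by
  have hw (p : E) : 1 + ‖p‖ ^ 2 ≠ 0 := by positivity
  have hrank : Continuous fun p : E => rankOne ℝ p p :=
    (rankOne ℝ).continuous.clm_apply continuous_id
  unfold graphCometric
  fun_prop (disch := assumption)

lemma traceCLM_graphCometric_comp [FiniteDimensional ℝ E] (p : E) (L : E →L[ℝ] E) :
    traceCLM (graphCometric p ∘L L) = traceCLM L - ⟪p, L p⟫ / (1 + ‖p‖ ^ 2) := by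
  rw [graphCometric, ContinuousLinearMap.sub_comp, ContinuousLinearMap.smul_comp, map_sub, map_smul,
    traceCLM_rankOne_comp, smul_eq_mul, div_eq_inv_mul, ContinuousLinearMap.one_def,
    ContinuousLinearMap.id_comp]

end GraphMetric

section TranslatorDrift

variable {E : Type*} [NormedAddCommGroup E] [InnerProductSpace ℝ E] {v' : E} {vn : ℝ}

/-- The drift of the linearized translator equation `tr (g⁻¹ D²u) = ⟪translatorDrift v' p S, ∇u⟫`
at a point where the translator has gradient `p` and Hessian `S`. -/
noncomputable def translatorDrift (v' p : E) (S : E →L[ℝ] E) : E :=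
  (2 / (1 + ‖p‖ ^ 2)) • graphCometric p (S p) - v'

lemma inner_translatorDrift (v' p : E) (S : E →L[ℝ] E) (x : E) :
    ⟪translatorDrift v' p S, x⟫ = 2 / (1 + ‖p‖ ^ 2) *
      (⟪S p, x⟫ - ⟪p, S p⟫ * ⟪p, x⟫ / (1 + ‖p‖ ^ 2)) - ⟪v', x⟫ := by
  simp only [translatorDrift, graphCometric_apply, inner_sub_left, real_inner_smul_left]
  ring

variable [FiniteDimensional ℝ E]

lemma traceCLM_graphCometric_comp_eq_iff (p : E) (S : E →L[ℝ] E) :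
    traceCLM (graphCometric p ∘L S) = vn - ⟪v', p⟫ ↔
      (1 + ⟪p, p⟫) * (traceCLM S + ⟪v', p⟫ - vn) - ⟪S p, p⟫ = 0 := by
  have hw : 0 < 1 + ‖p‖ ^ 2 := by positivity
  rw [traceCLM_graphCometric_comp, real_inner_self_eq_norm_sq, real_inner_comm, sub_eq_iff_eq_add',
    ← sub_eq_iff_eq_add, eq_div_iff hw.ne', sub_eq_zero]
  constructor <;> intro h <;> linear_combination h

lemma traceCLM_graphCometric_comp_of_hasJet {p : ℝ → E} {S : ℝ → E →L[ℝ] E}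
    {p₀ p₁ p₂ : E} {S₀ S₁ S₂ : E →L[ℝ] E} (hp : HasJet p p₀ p₁ p₂) (hS : HasJet S S₀ S₁ S₂)
    (hS₀ : S₀.IsSymmetric) (hS₁ : S₁.IsSymmetric)
    (heq : ∀ᶠ t in 𝓝 0, traceCLM (graphCometric (p t) ∘L S t) = vn - ⟪v', p t⟫) :
    traceCLM (graphCometric p₀ ∘L S₁) = ⟪translatorDrift v' p₀ S₀, p₁⟫ ∧
      traceCLM (graphCometric p₀ ∘L S₂) = ⟪translatorDrift v' p₀ S₀, p₂⟫
        + 4 / (1 + ‖p₀‖ ^ 2) * ⟪S₁ p₀, graphCometric p₀ p₁⟫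
        + 2 / (1 + ‖p₀‖ ^ 2) * (⟪S₀ p₁, p₁⟫ - ⟪S₀ p₀, p₀⟫ * ⟪p₁, p₁⟫ / (1 + ‖p₀‖ ^ 2)
          - 4 * ⟪p₀, p₁⟫ * ⟪S₀ p₀, graphCometric p₀ p₁⟫ / (1 + ‖p₀‖ ^ 2)) := by
  have hjet := (((HasJet.const 1).add (hp.inner hp)).mul
    (((hS.map traceCLM).add ((HasJet.const v').inner hp)).sub (HasJet.const vn))).sub
    ((hS.clm_apply hp).inner hp)
  have hzero : (1 + ⟪p₀, p₀⟫) * (traceCLM S₀ + ⟪v', p₀⟫ - vn) - ⟪S₀ p₀, p₀⟫ = 0 := by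
    rw [← traceCLM_graphCometric_comp_eq_iff, ← hp.1, ← hS.1]
    exact heq.self_of_nhds
  obtain ⟨h1, h2⟩ := hjet.eq_zero
    (heq.mono fun t ht => (traceCLM_graphCometric_comp_eq_iff (p t) (S t)).1 ht)
  have hS₀' (x y : E) : ⟪S₀ x, y⟫ = ⟪S₀ y, x⟫ := by rw [real_inner_comm]; exact (hS₀ y x).symm
  have hS₁' (x y : E) : ⟪S₁ x, y⟫ = ⟪S₁ y, x⟫ := by rw [real_inner_comm]; exact (hS₁ y x).symm
  have hw : 1 + ‖p₀‖ ^ 2 ≠ 0 := by positivity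
  simp only [inner_translatorDrift, traceCLM_graphCometric_comp, graphCometric_apply,
    inner_sub_right, real_inner_smul_right, ← real_inner_self_eq_norm_sq] at hw ⊢
  simp only [inner_zero_left, add_zero, zero_add, sub_zero, inner_add_left, real_inner_smul_left,
    hS₀' p₁ p₀, hS₀' p₂ p₀, hS₁' p₁ p₀, real_inner_comm p₀ p₁, real_inner_comm p₀ p₂] at h1 h2
  rw [real_inner_comm (S₀ p₀) p₀, real_inner_comm (S₁ p₀) p₀, real_inner_comm (S₂ p₀) p₀]
  set w := 1 + ⟪p₀, p₀⟫
  constructor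
  · field_simp
    linear_combination w * h1 - 2 * ⟪p₀, p₁⟫ * hzero
  · field_simp
    linear_combination w ^ 2 * h2 - 4 * w * ⟪p₀, p₁⟫ * h1
      - (2 * w * (⟪p₀, p₂⟫ + ⟪p₁, p₁⟫) - 8 * ⟪p₀, p₁⟫ ^ 2) * hzero

end TranslatorDrift

section PrincipalDirection

variable {E : Type*} [NormedAddCommGroup E] [InnerProductSpace ℝ E]
  {p ξ : E} {S : E →L[ℝ] E} {κ : ℝ}

lemma inner_apply_principal (hS : S.IsSymmetric) (hξ : S ξ = κ • graphMetric p ξ) :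
    ⟪S p, ξ⟫ = κ * ⟪p, ξ⟫ * (1 + ‖p‖ ^ 2) := by
  rw [show ⟪S p, ξ⟫ = ⟪p, S ξ⟫ from hS p ξ, hξ, graphMetric_apply]
  simp only [real_inner_smul_right, inner_add_right, real_inner_self_eq_norm_sq]
  ring

lemma graphCometric_apply_principal (hξ : S ξ = κ • graphMetric p ξ) :
    graphCometric p (S ξ) = κ • ξ := by
  rw [hξ, map_smul, graphCometric_graphMetric]

lemma inner_apply_self_principal (hξ : S ξ = κ • graphMetric p ξ) :
    ⟪S ξ, S ξ⟫ = κ ^ 2 * (⟪graphMetric p ξ, ξ⟫ + ⟪p, ξ⟫ ^ 2 * (1 + ‖p‖ ^ 2)) := by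
  rw [hξ]
  simp only [graphMetric_apply, real_inner_smul_left, real_inner_smul_right, inner_add_left,
    inner_add_right, real_inner_comm p ξ, ← real_inner_self_eq_norm_sq p]
  ring

lemma inner_apply_apply_self_principal (hS : S.IsSymmetric) (hξ : S ξ = κ • graphMetric p ξ) :
    ⟪S (S ξ), S ξ⟫ = κ ^ 3 * (⟪graphMetric p ξ, ξ⟫ + 2 * ⟪p, ξ⟫ ^ 2 * (1 + ‖p‖ ^ 2))
      + κ ^ 2 * ⟪p, ξ⟫ ^ 2 * ⟪S p, p⟫ := by
  have hcross := inner_apply_principal hS hξ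
  have hself : ⟪S ξ, ξ⟫ = κ * ⟪graphMetric p ξ, ξ⟫ := by rw [hξ, real_inner_smul_left]
  have hexpand : S ξ = κ • ξ + (κ * ⟪p, ξ⟫) • p := by
    rw [hξ, graphMetric_apply, smul_add, smul_smul]
  have hsymm : ⟪S ξ, p⟫ = ⟪S p, ξ⟫ := (hS ξ p).trans (real_inner_comm _ _)
  calc ⟪S (S ξ), S ξ⟫ = κ ^ 2 * (⟪S ξ, ξ⟫ + 2 * ⟪p, ξ⟫ * ⟪S p, ξ⟫ + ⟪p, ξ⟫ ^ 2 * ⟪S p, p⟫) := by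
        conv_lhs => rw [hexpand]
        simp only [map_add, map_smul, inner_add_left, inner_add_right, real_inner_smul_left,
          real_inner_smul_right, hsymm]
        ring
    _ = _ := by
        rw [hself, hcross]
        ring

/-- The quadratic form `b ↦ ⟪secondVariation … b, b⟫` is the second derivative of
`⟪S η, η⟫ - ψ ⟪graphMetric p η, η⟫` along a line in direction `b`, where the vector field `η`
extends `ξ` parallel to first order for the graph metric. Here `g`, `H` are the gradient and
Hessian of the test function `ψ`, and `T`, `Q` are the first two derivatives of `S`, contracted
with `ξ`, `ξ ⊗ ξ`. -/
noncomputable def secondVariation (p ξ : E) (S T Q H : E →L[ℝ] E) (κ : ℝ) : E →L[ℝ] E :=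
  Q - (4 / (1 + ‖p‖ ^ 2)) • rankOne ℝ (T p) (S ξ)
    + (2 * ⟪S p, p⟫ / (1 + ‖p‖ ^ 2) ^ 2 - 2 * κ / (1 + ‖p‖ ^ 2)) • rankOne ℝ (S ξ) (S ξ)
    - ⟪graphMetric p ξ, ξ⟫ • H - (2 * κ * ⟪p, ξ⟫) • T
    + (4 * κ * ⟪p, ξ⟫ / (1 + ‖p‖ ^ 2)) • rankOne ℝ (S p) (S ξ)

lemma inner_secondVariation (p ξ : E) (S T Q H : E →L[ℝ] E) (κ : ℝ) (b : E) :
    ⟪secondVariation p ξ S T Q H κ b, b⟫ = ⟪Q b, b⟫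
      - 4 / (1 + ‖p‖ ^ 2) * ⟪S ξ, b⟫ * ⟪T p, b⟫
      + (2 * ⟪S p, p⟫ / (1 + ‖p‖ ^ 2) ^ 2 - 2 * κ / (1 + ‖p‖ ^ 2)) * ⟪S ξ, b⟫ ^ 2
      - ⟪graphMetric p ξ, ξ⟫ * ⟪H b, b⟫ - 2 * κ * ⟪p, ξ⟫ * ⟪T b, b⟫
      + 4 * κ * ⟪p, ξ⟫ / (1 + ‖p‖ ^ 2) * ⟪S ξ, b⟫ * ⟪S p, b⟫ := by
  simp only [secondVariation, add_apply, sub_apply, smul_apply, rankOne_apply, inner_add_left,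
    inner_sub_left, real_inner_smul_left]
  ring

variable [FiniteDimensional ℝ E]

lemma traceCLM_secondVariation {T Q H : E →L[ℝ] E} {v' g : E} (hS : S.IsSymmetric)
    (hξ : S ξ = κ • graphMetric p ξ)
    (hTξ : T ξ = ⟪graphMetric p ξ, ξ⟫ • g + (2 * κ * ⟪p, ξ⟫) • S ξ)
    (htrT : traceCLM (graphCometric p ∘L T) = ⟪translatorDrift v' p S, S ξ⟫)
    (htrQ : traceCLM (graphCometric p ∘L Q) = ⟪translatorDrift v' p S, T ξ⟫
      + 4 / (1 + ‖p‖ ^ 2) * ⟪T p, graphCometric p (S ξ)⟫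
      + 2 / (1 + ‖p‖ ^ 2) * (⟪S (S ξ), S ξ⟫ - ⟪S p, p⟫ * ⟪S ξ, S ξ⟫ / (1 + ‖p‖ ^ 2)
        - 4 * ⟪p, S ξ⟫ * ⟪S p, graphCometric p (S ξ)⟫ / (1 + ‖p‖ ^ 2))) :
    traceCLM (graphCometric p ∘L secondVariation p ξ S T Q H κ) = ⟪graphMetric p ξ, ξ⟫ *
      (⟪translatorDrift v' p S, g⟫ - traceCLM (graphCometric p ∘L H)) := by
  have hw : 1 + ‖p‖ ^ 2 ≠ 0 := by positivity
  have hcross := inner_apply_principal hS hξ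
  have hself : ⟪S ξ, ξ⟫ = κ * ⟪graphMetric p ξ, ξ⟫ := by rw [hξ, real_inner_smul_left]
  have hcross' : ⟪p, S ξ⟫ = ⟪S p, ξ⟫ := (hS p ξ).symm
  have hrank (y : E) : traceCLM (graphCometric p ∘L rankOne ℝ y (S ξ)) = κ * ⟪y, ξ⟫ := by
    rw [comp_rankOne, traceCLM_rankOne, real_inner_comm, inner_graphCometric_left,
      graphCometric_apply_principal hξ, real_inner_smul_right]
  rw [graphCometric_apply_principal hξ, inner_apply_self_principal hξ,
    inner_apply_apply_self_principal hS hξ, hcross', real_inner_smul_right,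
    real_inner_smul_right, hcross, hTξ, inner_add_right, real_inner_smul_right,
    real_inner_smul_right] at htrQ
  simp only [secondVariation, comp_add, comp_sub, comp_smul, map_add, map_sub, map_smul,
    smul_eq_mul, hrank, htrT, htrQ, hcross, hself]
  field_simp
  ring

end PrincipalDirection

section Variation

variable {E : Type*} [NormedAddCommGroup E] [InnerProductSpace ℝ E]

lemma variation_of_hasJet {p : ℝ → E} {S : ℝ → E →L[ℝ] E} {μ : ℝ → ℝ} {p₀ p₁ p₂ ξ : E}
    {S₀ S₁ S₂ : E →L[ℝ] E} {μ₀ μ₁ μ₂ : ℝ} (hp : HasJet p p₀ p₁ p₂) (hS : HasJet S S₀ S₁ S₂)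
    (hμ : HasJet μ μ₀ μ₁ μ₂) (hS₀ : S₀.IsSymmetric) (hS₁ : S₁.IsSymmetric)
    (hle : ∀ᶠ t in 𝓝 0, ∀ ζ, μ t * ⟪graphMetric (p t) ζ, ζ⟫ ≤ ⟪S t ζ, ζ⟫)
    (heq : ⟪S₀ ξ, ξ⟫ = μ₀ * ⟪graphMetric p₀ ξ, ξ⟫) (η : E) :
    ⟪S₁ ξ, ξ⟫ + 2 * ⟪S₀ ξ, η⟫ = μ₁ * ⟪graphMetric p₀ ξ, ξ⟫
        + 2 * μ₀ * (⟪ξ, η⟫ + ⟪p₀, ξ⟫ * (⟪p₁, ξ⟫ + ⟪p₀, η⟫)) ∧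
      0 ≤ ⟪S₂ ξ, ξ⟫ + 4 * ⟪S₁ ξ, η⟫ + 2 * ⟪S₀ η, η⟫ - μ₂ * ⟪graphMetric p₀ ξ, ξ⟫
        - 4 * μ₁ * (⟪ξ, η⟫ + ⟪p₀, ξ⟫ * (⟪p₁, ξ⟫ + ⟪p₀, η⟫))
        - 2 * μ₀ * (⟪η, η⟫ + (⟪p₁, ξ⟫ + ⟪p₀, η⟫) ^ 2
          + ⟪p₀, ξ⟫ * (⟪p₂, ξ⟫ + 2 * ⟪p₁, η⟫)) := by
  have hζ := HasJet.affine ξ η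
  have hmetric (p ζ : E) : ⟪graphMetric p ζ, ζ⟫ = ⟪ζ, ζ⟫ + ⟪p, ζ⟫ * ⟪p, ζ⟫ := by
    rw [inner_graphMetric_self, real_inner_self_eq_norm_sq, sq ⟪p, ζ⟫]
  have hjet := ((hS.clm_apply hζ).inner hζ).sub
    (hμ.mul ((hζ.inner hζ).add ((hp.inner hζ).mul (hp.inner hζ))))
  rw [← hmetric, heq, sub_self] at hjet
  obtain ⟨h1, h2⟩ := hjet.eq_zero_and_nonneg (hle.mono fun t ht => by
    rw [← hmetric, sub_nonneg]
    exact ht _)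
  have hS₀' : ⟪S₀ η, ξ⟫ = ⟪S₀ ξ, η⟫ := (hS₀ η ξ).trans (real_inner_comm _ _)
  have hS₁' : ⟪S₁ η, ξ⟫ = ⟪S₁ ξ, η⟫ := (hS₁ η ξ).trans (real_inner_comm _ _)
  simp only [map_zero, zero_add, add_zero, inner_zero_left, inner_zero_right, inner_add_left,
    real_inner_smul_left, hS₀', hS₁', real_inner_comm ξ η] at h1 h2
  exact ⟨by linear_combination h1, by linear_combination h2⟩

end Variation

section TranslatorGradient

variable {E : Type*} [NormedAddCommGroup E] [InnerProductSpace ℝ E] [FiniteDimensional ℝ E]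
  {v' : E} {vn : ℝ}

/-- `P` is, near `x`, the gradient of a solution of the translator equation with velocity
`(v', vn)`; being a gradient is encoded by the symmetry of the derivative. -/
structure IsTranslatorGradientAt (v' : E) (vn : ℝ) (P : E → E) (x : E) : Prop where
  contDiffAt : ContDiffAt ℝ 3 P x
  isSymmetric : ∀ᶠ y in 𝓝 x, (fderiv ℝ P y).IsSymmetric
  trace_eq : ∀ᶠ y in 𝓝 x, traceCLM (graphCometric (P y) ∘L fderiv ℝ P y) = vn - ⟪v', P y⟫

/-- `κ` is the least eigenvalue of `S` relative to the metric `graphMetric p`. On the graph of `f`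
over `x`, with `p = ∇f(x)` and `S = D²f(x)`, it is `√(1 + |p|²)` times the smallest principal
curvature. -/
structure IsLeastRelativeEigenvalue (p : E) (S : E →L[ℝ] E) (κ : ℝ) : Prop where
  mul_inner_le (ξ : E) : κ * ⟪graphMetric p ξ, ξ⟫ ≤ ⟪S ξ, ξ⟫
  exists_eq : ∃ ξ ≠ 0, ⟪S ξ, ξ⟫ = κ * ⟪graphMetric p ξ, ξ⟫

namespace IsTranslatorGradientAt

variable {P : E → E} {x : E}

local notation "D" => fderiv ℝ

lemma eventually (h : IsTranslatorGradientAt v' vn P x) :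
    ∀ᶠ y in 𝓝 x, IsTranslatorGradientAt v' vn P y := by
  filter_upwards [h.contDiffAt.eventually (by simp), h.isSymmetric.eventually_nhds,
    h.trace_eq.eventually_nhds] with y hc hs ht using ⟨hc, hs, ht⟩

lemma contDiffAt_fderiv (h : IsTranslatorGradientAt v' vn P x) : ContDiffAt ℝ 2 (D P) x :=
  h.contDiffAt.fderiv_right (by norm_num)

lemma hasFDerivAt_fderiv (h : IsTranslatorGradientAt v' vn P x) :
    HasFDerivAt (D P) (D (D P) x) x :=
  (h.contDiffAt_fderiv.differentiableAt (by norm_num)).hasFDerivAt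

lemma hasFDerivAt_fderiv_fderiv (h : IsTranslatorGradientAt v' vn P x) :
    HasFDerivAt (D (D P)) (D (D (D P)) x) x :=
  ((h.contDiffAt_fderiv.fderiv_right (m := 1) (by norm_num)).differentiableAt
    (by norm_num)).hasFDerivAt

lemma fderiv_fderiv_comm (h : IsTranslatorGradientAt v' vn P x) (u v : E) :
    D (D P) x u v = D (D P) x v u :=
  h.contDiffAt.isSymmSndFDerivAt (by simp; norm_num) u v

lemma isSymmetric_fderiv_fderiv (h : IsTranslatorGradientAt v' vn P x) (u : E) :
    (D (D P) x u).IsSymmetric :=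
  isSymmetric_of_hasFDerivAt h.hasFDerivAt_fderiv h.isSymmetric u

lemma inner_fderiv_fderiv_fderiv_comm (h : IsTranslatorGradientAt v' vn P x) (u v : E) :
    ⟪D (D (D P)) x u u v, v⟫ = ⟪D (D (D P)) x v v u, u⟫ := by
  have hQ (z : E) : HasFDerivAt (fun y => D (D P) y z) ((D (D (D P)) x).flip z) x := by
    simpa using h.hasFDerivAt_fderiv_fderiv.clm_apply (hasFDerivAt_const z x)
  have hcomm (y z : E) : D (D (D P)) x y z = D (D (D P)) x z y :=
    h.contDiffAt_fderiv.isSymmSndFDerivAt (by simp) y z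
  have hsymm (y z : E) : (D (D (D P)) x y z).IsSymmetric :=
    isSymmetric_of_hasFDerivAt (hQ z)
      (h.eventually.mono fun y hy => hy.isSymmetric_fderiv_fderiv z) y
  have hlast (y z z' : E) : D (D (D P)) x y z z' = D (D (D P)) x y z' z := by
    have h1 := (hQ z).clm_apply (hasFDerivAt_const z' x)
    have h2 := (hQ z').clm_apply (hasFDerivAt_const z x)
    have heq : (fun y => D (D P) y z z') =ᶠ[𝓝 x] fun y => D (D P) y z' z :=
      h.eventually.mono fun y hy => hy.fderiv_fderiv_comm z z'
    simpa using DFunLike.congr_fun (h1.unique (h2.congr_of_eventuallyEq heq)) y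
  calc ⟪D (D (D P)) x u u v, v⟫ = ⟪D (D (D P)) x v u u, v⟫ := by rw [hlast, hcomm u v]
    _ = ⟪D (D (D P)) x v v u, u⟫ := by
      rw [hlast v v u]
      exact (hsymm v u u v).trans (real_inner_comm _ _)

lemma hasJet_line (h : IsTranslatorGradientAt v' vn P x) (b : E) :
    HasJet (fun t : ℝ => P (x + t • b)) (P x) (D P x b) (D (D P) x b b) :=
  HasJet.of_contDiffAt (h.contDiffAt.of_le (by norm_num)) b

lemma hasJet_fderiv_line (h : IsTranslatorGradientAt v' vn P x) (b : E) :
    HasJet (fun t : ℝ => D P (x + t • b)) (D P x) (D (D P) x b) (D (D (D P)) x b b) :=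
  HasJet.of_contDiffAt h.contDiffAt_fderiv b

lemma traceCLM_fderiv_fderiv (h : IsTranslatorGradientAt v' vn P x) (u : E) :
    traceCLM (graphCometric (P x) ∘L D (D P) x u) = ⟪translatorDrift v' (P x) (D P x), D P x u⟫ ∧
      traceCLM (graphCometric (P x) ∘L D (D (D P)) x u u) =
        ⟪translatorDrift v' (P x) (D P x), D (D P) x u u⟫
        + 4 / (1 + ‖P x‖ ^ 2) * ⟪D (D P) x u (P x), graphCometric (P x) (D P x u)⟫
        + 2 / (1 + ‖P x‖ ^ 2) * (⟪D P x (D P x u), D P x u⟫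
          - ⟪D P x (P x), P x⟫ * ⟪D P x u, D P x u⟫ / (1 + ‖P x‖ ^ 2)
          - 4 * ⟪P x, D P x u⟫ * ⟪D P x (P x), graphCometric (P x) (D P x u)⟫
            / (1 + ‖P x‖ ^ 2)) :=
  traceCLM_graphCometric_comp_of_hasJet (h.hasJet_line u) (h.hasJet_fderiv_line u)
    h.isSymmetric.self_of_nhds (h.isSymmetric_fderiv_fderiv u)
    ((tendsto_line x u).eventually h.trace_eq)

variable {ψ : E → ℝ} {ξ : E}

lemma variation_line (h : IsTranslatorGradientAt v' vn P x) (hψ : ContDiffAt ℝ 2 ψ x)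
    (hle : ∀ᶠ y in 𝓝 x, ∀ ζ, ψ y * ⟪graphMetric (P y) ζ, ζ⟫ ≤ ⟪D P y ζ, ζ⟫)
    (heq : ⟪D P x ξ, ξ⟫ = ψ x * ⟪graphMetric (P x) ξ, ξ⟫) (b η : E) :
    ⟪D (D P) x b ξ, ξ⟫ + 2 * ⟪D P x ξ, η⟫ =
        ⟪gradient ψ x, b⟫ * ⟪graphMetric (P x) ξ, ξ⟫
          + 2 * ψ x * (⟪ξ, η⟫ + ⟪P x, ξ⟫ * (⟪D P x b, ξ⟫ + ⟪P x, η⟫)) ∧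
      0 ≤ ⟪D (D (D P)) x b b ξ, ξ⟫ + 4 * ⟪D (D P) x b ξ, η⟫ + 2 * ⟪D P x η, η⟫
        - ⟪D (gradient ψ) x b, b⟫ * ⟪graphMetric (P x) ξ, ξ⟫
        - 4 * ⟪gradient ψ x, b⟫ * (⟪ξ, η⟫ + ⟪P x, ξ⟫ * (⟪D P x b, ξ⟫ + ⟪P x, η⟫))
        - 2 * ψ x * (⟪η, η⟫ + (⟪D P x b, ξ⟫ + ⟪P x, η⟫) ^ 2
          + ⟪P x, ξ⟫ * (⟪D (D P) x b b, ξ⟫ + 2 * ⟪D P x b, η⟫)) :=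
  variation_of_hasJet (h.hasJet_line b) (h.hasJet_fderiv_line b) (.of_gradient hψ b)
    h.isSymmetric.self_of_nhds (h.isSymmetric_fderiv_fderiv b) ((tendsto_line x b).eventually hle)
    heq η

lemma apply_eq_smul_graphMetric (h : IsTranslatorGradientAt v' vn P x) (hψ : ContDiffAt ℝ 2 ψ x)
    (hle : ∀ᶠ y in 𝓝 x, ∀ ζ, ψ y * ⟪graphMetric (P y) ζ, ζ⟫ ≤ ⟪D P y ζ, ζ⟫)
    (heq : ⟪D P x ξ, ξ⟫ = ψ x * ⟪graphMetric (P x) ξ, ξ⟫) :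
    D P x ξ = ψ x • graphMetric (P x) ξ := by
  refine ext_inner_right ℝ fun η => ?_
  have hvar := (h.variation_line hψ hle heq 0 η).1
  simp only [map_zero, zero_apply, inner_zero_left, inner_zero_right, zero_mul, zero_add] at hvar
  rw [real_inner_smul_left, graphMetric_apply, inner_add_left, real_inner_smul_left]
  linarith

lemma fderiv_fderiv_apply_principal (h : IsTranslatorGradientAt v' vn P x)
    (hψ : ContDiffAt ℝ 2 ψ x)
    (hle : ∀ᶠ y in 𝓝 x, ∀ ζ, ψ y * ⟪graphMetric (P y) ζ, ζ⟫ ≤ ⟪D P y ζ, ζ⟫)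
    (heq : ⟪D P x ξ, ξ⟫ = ψ x * ⟪graphMetric (P x) ξ, ξ⟫) :
    D (D P) x ξ ξ = ⟪graphMetric (P x) ξ, ξ⟫ • gradient ψ x
      + (2 * ψ x * ⟪P x, ξ⟫) • D P x ξ := by
  refine ext_inner_right ℝ fun b => ?_
  have hvar := (h.variation_line hψ hle heq b 0).1
  have hS : ⟪D P x b, ξ⟫ = ⟪D P x ξ, b⟫ :=
    (h.isSymmetric.self_of_nhds b ξ).trans (real_inner_comm _ _)
  have hT : ⟪D (D P) x ξ ξ, b⟫ = ⟪D (D P) x b ξ, ξ⟫ := by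
    rw [h.fderiv_fderiv_comm b ξ]
    exact (h.isSymmetric_fderiv_fderiv ξ ξ b).trans (real_inner_comm _ _)
  simp only [inner_zero_right, mul_zero, add_zero, zero_add, hS] at hvar
  rw [hT, inner_add_left, real_inner_smul_left, real_inner_smul_left, hvar]
  ring

/-- The variation along `b` is taken with `η = -(⟪S ξ, b⟫ / (1 + |p|²)) p`, which makes the
extension of `ξ` parallel to first order. -/
lemma inner_secondVariation_nonneg (h : IsTranslatorGradientAt v' vn P x)
    (hψ : ContDiffAt ℝ 2 ψ x)
    (hle : ∀ᶠ y in 𝓝 x, ∀ ζ, ψ y * ⟪graphMetric (P y) ζ, ζ⟫ ≤ ⟪D P y ζ, ζ⟫)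
    (heq : ⟪D P x ξ, ξ⟫ = ψ x * ⟪graphMetric (P x) ξ, ξ⟫) (b : E) :
    0 ≤ ⟪secondVariation (P x) ξ (D P x) (D (D P) x ξ) (D (D (D P)) x ξ ξ)
      (D (gradient ψ) x) (ψ x) b, b⟫ := by
  have hS := h.isSymmetric.self_of_nhds
  have hT := h.isSymmetric_fderiv_fderiv
  have hSb : ⟪D P x b, ξ⟫ = ⟪D P x ξ, b⟫ := (hS b ξ).trans (real_inner_comm _ _)
  have hSp : ⟪D P x b, P x⟫ = ⟪D P x (P x), b⟫ := (hS b (P x)).trans (real_inner_comm _ _)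
  have hTb : ⟪D (D P) x b b, ξ⟫ = ⟪D (D P) x ξ b, b⟫ := by
    rw [h.fderiv_fderiv_comm ξ b]
    exact (hT b b ξ).trans (real_inner_comm _ _)
  have hTp : ⟪D (D P) x b ξ, P x⟫ = ⟪D (D P) x ξ (P x), b⟫ := by
    rw [h.fderiv_fderiv_comm b ξ]
    exact (hT ξ b (P x)).trans (real_inner_comm _ _)
  have hvar := (h.variation_line hψ hle heq b (-(⟪D P x ξ, b⟫ / (1 + ‖P x‖ ^ 2)) • P x)).2
  have hw : 1 + ‖P x‖ ^ 2 ≠ 0 := by positivity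
  simp only [map_smul, real_inner_smul_left, real_inner_smul_right, hSb, hSp, hTb, hTp,
    h.inner_fderiv_fderiv_fderiv_comm b ξ, real_inner_self_eq_norm_sq (P x),
    real_inner_comm (P x) ξ] at hvar
  rw [inner_secondVariation]
  convert! hvar using 1
  field_simp
  ring

lemma traceCLM_graphCometric_comp_le (h : IsTranslatorGradientAt v' vn P x)
    (hψ : ContDiffAt ℝ 2 ψ x)
    (hle : ∀ᶠ y in 𝓝 x, ∀ ζ, ψ y * ⟪graphMetric (P y) ζ, ζ⟫ ≤ ⟪D P y ζ, ζ⟫)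
    (heq : ⟪D P x ξ, ξ⟫ = ψ x * ⟪graphMetric (P x) ξ, ξ⟫) (hξ : ξ ≠ 0) :
    traceCLM (graphCometric (P x) ∘L D (gradient ψ) x) ≤
      ⟪translatorDrift v' (P x) (D P x), gradient ψ x⟫ := by
  have htrace := traceCLM_comp_nonneg (isPositive_graphCometric (P x))
    (h.inner_secondVariation_nonneg hψ hle heq)
  obtain ⟨htrT, htrQ⟩ := h.traceCLM_fderiv_fderiv ξ
  rw [traceCLM_secondVariation h.isSymmetric.self_of_nhds (h.apply_eq_smul_graphMetric hψ hle heq)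
    (h.fderiv_fderiv_apply_principal hψ hle heq) htrT htrQ] at htrace
  exact sub_nonneg.1 (nonneg_of_mul_nonneg_right htrace (inner_graphMetric_self_pos (P x) hξ))

lemma gradient_sub_inner (h : IsTranslatorGradientAt v' vn P x) :
    gradient (fun y => vn - ⟪v', P y⟫) x = -D P x v' := by
  have hP : HasFDerivAt P (D P x) x :=
    (h.contDiffAt.differentiableAt (by norm_num)).hasFDerivAt
  refine HasGradientAt.gradient (hasGradientAt_iff_hasFDerivAt.2 ?_)
  convert! ((hasFDerivAt_const v' x).inner ℝ hP).const_sub vn using 1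
  ext u
  simpa using h.isSymmetric.self_of_nhds v' u

lemma fderiv_gradient_sub_inner (h : IsTranslatorGradientAt v' vn P x) :
    D (gradient fun y => vn - ⟪v', P y⟫) x = -D (D P) x v' := by
  have heq : gradient (fun y => vn - ⟪v', P y⟫) =ᶠ[𝓝 x] fun y => -D P y v' :=
    h.eventually.mono fun y hy => hy.gradient_sub_inner
  rw [heq.fderiv_eq]
  ext u
  have hD := (h.hasFDerivAt_fderiv.clm_apply (hasFDerivAt_const v' x)).fun_neg
  rw [hD.fderiv]
  simpa using h.fderiv_fderiv_comm u v'

lemma traceCLM_fderiv_gradient_sub_inner (h : IsTranslatorGradientAt v' vn P x) :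
    traceCLM (graphCometric (P x) ∘L D (gradient fun y => vn - ⟪v', P y⟫) x) =
      ⟪translatorDrift v' (P x) (D P x), gradient (fun y => vn - ⟪v', P y⟫) x⟫ := by
  rw [h.fderiv_gradient_sub_inner, h.gradient_sub_inner, comp_neg, map_neg, inner_neg_right,
    (h.traceCLM_fderiv_fderiv v').1]

variable {K : Set E} {lam : E → ℝ}

lemma isViscositySupersolution (hK : IsOpen K)
    (h : ∀ x ∈ K, IsTranslatorGradientAt v' vn P x)
    (hlam : ∀ x ∈ K, IsLeastRelativeEigenvalue (P x) (D P x) (lam x)) :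
    IsViscositySupersolution (fun x => graphCometric (P x))
      (fun x => translatorDrift v' (P x) (D P x)) lam K := by
  intro x hx ψ hψ hmin
  set c := lam x - ψ x
  have hgrad : gradient (fun y => ψ y + c) = gradient ψ := gradient_add_const c
  have hle : ∀ᶠ y in 𝓝 x, ∀ ζ, (ψ y + c) * ⟪graphMetric (P y) ζ, ζ⟫ ≤ ⟪D P y ζ, ζ⟫ := by
    filter_upwards [hmin, hK.mem_nhds hx] with y hy hyK ζ
    refine le_trans ?_ ((hlam y hyK).mul_inner_le ζ)
    rw [inner_graphMetric_self]
    gcongr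
    linarith
  obtain ⟨ξ, hξ, heq⟩ := (hlam x hx).exists_eq
  rw [← add_sub_cancel (ψ x) (lam x)] at heq
  simpa only [hgrad] using
    (h x hx).traceCLM_graphCometric_comp_le (hψ.add contDiffAt_const) hle heq hξ

lemma eq_of_isMinOn (hK : IsOpen K) (hKc : IsPreconnected K)
    (h : ∀ x ∈ K, IsTranslatorGradientAt v' vn P x) (hpos : ∀ x ∈ K, 0 < vn - ⟪v', P x⟫)
    (hlam : ∀ x ∈ K, IsLeastRelativeEigenvalue (P x) (D P x) (lam x))
    (hcont : ContinuousOn (fun x => lam x / (vn - ⟪v', P x⟫)) K) {p x : E} (hp : p ∈ K)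
    (hmin : IsMinOn (fun x => lam x / (vn - ⟪v', P x⟫)) K p) (hx : x ∈ K) :
    lam x / (vn - ⟪v', P x⟫) = lam p / (vn - ⟪v', P p⟫) := by
  have hP : ContinuousOn P K := fun y hy => (h y hy).contDiffAt.continuousAt.continuousWithinAt
  have hS : ContinuousOn (D P) K := fun y hy =>
    (h y hy).contDiffAt_fderiv.continuousAt.continuousWithinAt
  have ha : ContinuousOn (fun y => graphCometric (P y)) K :=
    continuous_graphCometric.comp_continuousOn hP
  have hF (y : E) (hy : y ∈ K) : ContDiffAt ℝ 2 (fun y => vn - ⟪v', P y⟫) y :=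
    contDiffAt_const.sub (contDiffAt_const.inner ℝ ((h y hy).contDiffAt.of_le (by norm_num)))
  have hgradF := continuousOn_gradient hF
  have hdrift : ContinuousOn (fun y => translatorDrift v' (P y) (D P y)
      - (2 / (vn - ⟪v', P y⟫)) • graphCometric (P y) (gradient (fun y => vn - ⟪v', P y⟫) y)) K := by
    have hw (y : E) : 1 + ‖P y‖ ^ 2 ≠ 0 := by positivity
    have hne : ∀ y ∈ K, vn - ⟪v', P y⟫ ≠ 0 := fun y hy => (hpos y hy).ne'
    unfold translatorDrift
    fun_prop (disch := simp_all)
  have hsuper := (isViscositySupersolution hK h hlam).div hK hF hpos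
    (fun y hy => (h y hy).traceCLM_fderiv_gradient_sub_inner)
    (fun y _ => (isPositive_graphCometric (P y)).isSymmetric)
  exact hsuper.eq_of_isMinOn hK hKc ha (fun y _ ξ => inner_graphCometric_self_pos (P y)) hdrift
    hcont hp hmin hx

end IsTranslatorGradientAt

end TranslatorGradient

lemma exists_frontier_forall_le_and_eq_of_isMinOn {E : Type*} [NormedAddCommGroup E]
    [NormedSpace ℝ E] [ProperSpace E] [Nontrivial E] {K : Set E} (hK : IsOpen K)
    (hKne : K.Nonempty) (hKbdd : Bornology.IsBounded K) {u : E → ℝ}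
    (hu : ContinuousOn u (closure K))
    (hstrong : ∀ p ∈ K, IsMinOn u K p → ∀ x ∈ K, u x = u p) :
    (∃ p ∈ frontier K, ∀ x ∈ closure K, u p ≤ u x) ∧
      ∀ p ∈ K, (∀ x ∈ closure K, u p ≤ u x) → ∀ x ∈ closure K, u x = u p := by
  have hconst : ∀ p ∈ K, (∀ x ∈ closure K, u p ≤ u x) → ∀ x ∈ closure K, u x = u p :=
    fun p hp hmin =>
      Set.EqOn.of_subset_closure
        (hstrong p hp fun x hx => hmin x (subset_closure hx))
        hu continuousOn_const subset_closure subset_rfl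
  refine ⟨?_, hconst⟩
  obtain ⟨p, hp, hmin⟩ := hKbdd.isCompact_closure.exists_isMinOn hKne.closure hu
  by_cases hpK : p ∈ K
  · have hKuniv : K ≠ Set.univ := by
      rintro rfl
      exact NormedSpace.unbounded_univ ℝ E hKbdd
    obtain ⟨q, hq⟩ := nonempty_frontier_iff.2 ⟨hKne, hKuniv⟩
    refine ⟨q, hq, fun x hx => ?_⟩
    rw [hconst p hpK hmin q (frontier_subset_closure hq)]
    exact hmin hx
  · exact ⟨p, ⟨hp, by rwa [hK.interior_eq]⟩, hmin⟩

section Graph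

variable {n : ℕ} {f : EuclideanSpace ℝ (Fin n) → ℝ} {s : Set (EuclideanSpace ℝ (Fin n))}
  {v' : EuclideanSpace ℝ (Fin n)} {vn : ℝ} {x : EuclideanSpace ℝ (Fin n)}

lemma lap_eq_traceCLM (f : EuclideanSpace ℝ (Fin n) → ℝ) (x : EuclideanSpace ℝ (Fin n)) :
    lap f x = traceCLM (fderiv ℝ (gradient f) x) := by
  rw [traceCLM_apply, LinearMap.trace_eq_sum_inner _ (EuclideanSpace.basisFun (Fin n) ℝ)]
  simp only [lap, hess, EuclideanSpace.basisFun_apply, coe_coe, real_inner_comm]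

lemma graphH_eq_traceCLM (f : EuclideanSpace ℝ (Fin n) → ℝ) (x : EuclideanSpace ℝ (Fin n)) :
    graphH f x = traceCLM (graphCometric (gradient f x) ∘L fderiv ℝ (gradient f) x)
      / √(1 + ‖gradient f x‖ ^ 2) := by
  have hw : 0 < 1 + ‖gradient f x‖ ^ 2 := by positivity
  have hsqrt : √(1 + ‖gradient f x‖ ^ 2) ≠ 0 := (Real.sqrt_pos.2 hw).ne'
  rw [graphH, traceCLM_graphCometric_comp, lap_eq_traceCLM, hess, pow_succ √_,
    Real.sq_sqrt hw.le]
  field_simp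

lemma translatorEqAt_iff_traceCLM :
    TranslatorEqAt f v' vn x ↔
      traceCLM (graphCometric (gradient f x) ∘L fderiv ℝ (gradient f) x)
        = vn - ⟪v', gradient f x⟫ := by
  have hw : 1 + ‖gradient f x‖ ^ 2 ≠ 0 := by positivity
  rw [TranslatorEqAt, traceCLM_graphCometric_comp, lap_eq_traceCLM, hess, sub_div' hw,
    div_eq_iff hw, mul_comm (1 + _)]

lemma TranslatorEqAt.graphH_eq (h : TranslatorEqAt f v' vn x) :
    graphH f x = (vn - ⟪v', gradient f x⟫) / √(1 + ‖gradient f x‖ ^ 2) := by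
  rw [graphH_eq_traceCLM, translatorEqAt_iff_traceCLM.1 h]

lemma isTranslatorGradientAt_gradient (hf : ContDiffAt ℝ 4 f x)
    (h : ∀ᶠ y in 𝓝 x, TranslatorEqAt f v' vn y) :
    IsTranslatorGradientAt v' vn (gradient f) x where
  contDiffAt := contDiffAt_gradient hf (by norm_num)
  isSymmetric := (hf.eventually (by simp)).mono fun y hy =>
    isSymmetric_fderiv_gradient (hy.of_le (by norm_num))
  trace_eq := h.mono fun y hy => translatorEqAt_iff_traceCLM.1 hy

/-- The normal curvature of the graph of `f` over `x` in the direction `ξ`. -/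
noncomputable def normalCurvature (f : EuclideanSpace ℝ (Fin n) → ℝ)
    (x ξ : EuclideanSpace ℝ (Fin n)) : ℝ :=
  ⟪hess f x ξ, ξ⟫ / (√(1 + ‖gradient f x‖ ^ 2) * (‖ξ‖ ^ 2 + ⟪gradient f x, ξ⟫ ^ 2))

lemma normalCurvature_smul (f : EuclideanSpace ℝ (Fin n) → ℝ) (x ξ : EuclideanSpace ℝ (Fin n))
    {c : ℝ} (hc : c ≠ 0) : normalCurvature f x (c • ξ) = normalCurvature f x ξ := by
  simp only [normalCurvature, hess, map_smul, real_inner_smul_left, real_inner_smul_right,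
    norm_smul, mul_pow, Real.norm_eq_abs, sq_abs, ← mul_add]
  rw [← mul_assoc, ← sq, mul_left_comm, mul_div_mul_left _ _ (pow_ne_zero 2 hc)]

lemma normalCurvature_den_pos (f : EuclideanSpace ℝ (Fin n) → ℝ) (x : EuclideanSpace ℝ (Fin n))
    {ξ : EuclideanSpace ℝ (Fin n)} (hξ : ξ ≠ 0) :
    0 < √(1 + ‖gradient f x‖ ^ 2) * (‖ξ‖ ^ 2 + ⟪gradient f x, ξ⟫ ^ 2) := by
  have := norm_pos_iff.2 hξ
  positivity

lemma graphKappa1_eq_sInf_image_sphere (f : EuclideanSpace ℝ (Fin n) → ℝ)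
    (x : EuclideanSpace ℝ (Fin n)) :
    graphKappa1 f x = sInf (normalCurvature f x '' Metric.sphere 0 1) := by
  rw [graphKappa1]
  congr 1
  ext r
  constructor
  · rintro ⟨ξ, hξ, rfl⟩
    exact ⟨‖ξ‖⁻¹ • ξ, by simp [norm_smul, hξ],
      normalCurvature_smul f x ξ (inv_ne_zero (norm_ne_zero_iff.2 hξ))⟩
  · rintro ⟨ξ, hξ, rfl⟩
    exact ⟨ξ, ne_zero_of_mem_unit_sphere ⟨ξ, hξ⟩, rfl⟩

lemma isLeast_graphKappa1 [Nontrivial (EuclideanSpace ℝ (Fin n))]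
    (f : EuclideanSpace ℝ (Fin n) → ℝ) (x : EuclideanSpace ℝ (Fin n)) :
    IsLeast (normalCurvature f x '' Metric.sphere 0 1) (graphKappa1 f x) := by
  have hcont : ContinuousOn (normalCurvature f x) (Metric.sphere 0 1) := by
    unfold normalCurvature hess
    exact ContinuousOn.div (by fun_prop) (by fun_prop) fun ξ hξ =>
      (normalCurvature_den_pos f x (ne_zero_of_mem_unit_sphere ⟨ξ, hξ⟩)).ne'
  rw [graphKappa1_eq_sInf_image_sphere]
  exact ((isCompact_sphere 0 1).image_of_continuousOn hcont).isLeast_sInf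
    ((NormedSpace.sphere_nonempty.2 zero_le_one).image _)

lemma isLeastRelativeEigenvalue_graphKappa1 [Nontrivial (EuclideanSpace ℝ (Fin n))]
    (f : EuclideanSpace ℝ (Fin n) → ℝ) (x : EuclideanSpace ℝ (Fin n)) :
    IsLeastRelativeEigenvalue (gradient f x) (fderiv ℝ (gradient f) x)
      (√(1 + ‖gradient f x‖ ^ 2) * graphKappa1 f x) where
  mul_inner_le ξ := by
    obtain rfl | hξ := eq_or_ne ξ 0
    · simp only [map_zero, inner_zero_right, mul_zero, le_refl]
    have hle : graphKappa1 f x ≤ normalCurvature f x ξ := by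
      rw [← normalCurvature_smul f x ξ (inv_ne_zero (norm_ne_zero_iff.2 hξ))]
      exact (isLeast_graphKappa1 f x).2 (Set.mem_image_of_mem _ (by simp [norm_smul, hξ]))
    rw [normalCurvature, le_div_iff₀ (normalCurvature_den_pos f x hξ)] at hle
    rwa [inner_graphMetric_self, mul_comm √_, mul_assoc]
  exists_eq := by
    obtain ⟨ξ, hξ, heq⟩ := (isLeast_graphKappa1 f x).1
    have hξ0 : ξ ≠ 0 := ne_zero_of_mem_unit_sphere ⟨ξ, hξ⟩
    rw [normalCurvature, div_eq_iff (normalCurvature_den_pos f x hξ0).ne'] at heq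
    refine ⟨ξ, hξ0, ?_⟩
    rw [inner_graphMetric_self, mul_comm √_, mul_assoc]
    exact heq

lemma continuousOn_graphH (hf : ∀ x ∈ s, ContDiffAt ℝ 2 f x) : ContinuousOn (graphH f) s := by
  have hP := continuousOn_gradient hf
  have hS := continuousOn_fderiv_gradient hf
  unfold graphH lap hess
  refine ContinuousOn.div (by fun_prop) (by fun_prop) fun x _ => ?_
  positivity

lemma continuousOn_graphKappa1 (hf : ∀ x ∈ s, ContDiffAt ℝ 2 f x) :
    ContinuousOn (graphKappa1 f) s := by
  have hcurv : Continuous fun z : s × Metric.sphere (0 : EuclideanSpace ℝ (Fin n)) 1 =>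
      normalCurvature f z.1 z.2 := by
    have hP : Continuous fun z : s × Metric.sphere (0 : EuclideanSpace ℝ (Fin n)) 1 =>
        gradient f z.1 := (continuousOn_gradient hf).domRestrict.comp continuous_fst
    have hS : Continuous fun z : s × Metric.sphere (0 : EuclideanSpace ℝ (Fin n)) 1 =>
        fderiv ℝ (gradient f) z.1 :=
      (continuousOn_fderiv_gradient hf).domRestrict.comp continuous_fst
    unfold normalCurvature hess
    exact Continuous.div (by fun_prop) (by fun_prop) fun z =>
      (normalCurvature_den_pos f _ (ne_zero_of_mem_unit_sphere z.2)).ne'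
  rw [continuousOn_iff_continuous_domRestrict]
  refine (isCompact_univ.continuous_sInf (f := fun (x : s)
    (ξ : Metric.sphere (0 : EuclideanSpace ℝ (Fin n)) 1) => normalCurvature f x ξ)
    hcurv).congr fun x => ?_
  rw [Set.image_univ, ← Set.image_eq_range]
  exact (graphKappa1_eq_sInf_image_sphere f x).symm

lemma nontrivial_of_graphH_ne_zero (h : graphH f x ≠ 0) :
    Nontrivial (EuclideanSpace ℝ (Fin n)) := by
  contrapose! h
  simp [graphH, lap, Subsingleton.elim (hess f x _) 0]

lemma graphKappa1_div_graphH_eq_of_isMinOn {K : Set (EuclideanSpace ℝ (Fin n))} (hK : IsOpen K)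
    (hKc : IsPreconnected K) (hf : ∀ x ∈ K, ContDiffAt ℝ 4 f x)
    (ht : ∀ x ∈ K, TranslatorEqAt f v' vn x) (hpos : ∀ x ∈ K, 0 < graphH f x)
    {p : EuclideanSpace ℝ (Fin n)} (hp : p ∈ K)
    (hmin : IsMinOn (fun x => graphKappa1 f x / graphH f x) K p) (hx : x ∈ K) :
    graphKappa1 f x / graphH f x = graphKappa1 f p / graphH f p := by
  have := nontrivial_of_graphH_ne_zero (hpos p hp).ne'
  have hsqrt (y : EuclideanSpace ℝ (Fin n)) : 0 < √(1 + ‖gradient f y‖ ^ 2) := by positivity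
  have hratio : ∀ y ∈ K, √(1 + ‖gradient f y‖ ^ 2) * graphKappa1 f y / (vn - ⟪v', gradient f y⟫)
      = graphKappa1 f y / graphH f y := fun y hy => by
    rw [(ht y hy).graphH_eq, div_div_eq_mul_div, mul_comm]
  have hf2 : ∀ y ∈ K, ContDiffAt ℝ 2 f y := fun y hy => (hf y hy).of_le (by norm_num)
  have hcont : ContinuousOn (fun y => graphKappa1 f y / graphH f y) K :=
    (continuousOn_graphKappa1 hf2).div (continuousOn_graphH hf2) fun y hy => (hpos y hy).ne'
  rw [← hratio x hx, ← hratio p hp]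
  refine IsTranslatorGradientAt.eq_of_isMinOn hK hKc
    (fun y hy => isTranslatorGradientAt_gradient (hf y hy) ((hK.eventually_mem hy).mono ht))
    (fun y hy => ?_) (fun y _ => isLeastRelativeEigenvalue_graphKappa1 f y)
    (hcont.congr hratio) hp (isMinOn_iff.2 fun y hy => ?_) hx
  · simpa only [(ht y hy).graphH_eq, div_pos_iff_of_pos_right (hsqrt y)] using hpos y hy
  · simpa only [hratio p hp, hratio y hy] using isMinOn_iff.1 hmin y hy

end Graph

theorem subsequent_singularities_stmt7_general {n : ℕ} {K : Set (EuclideanSpace ℝ (Fin n))}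
    (hK : IsOpen K) (hKconn : IsConnected K) (hKbdd : Bornology.IsBounded K)
    {v' : EuclideanSpace ℝ (Fin n)} {vn : ℝ} {f : EuclideanSpace ℝ (Fin n) → ℝ}
    (hf : ∀ x ∈ closure K, ContDiffAt ℝ 4 f x) (ht : ∀ x ∈ K, TranslatorEqAt f v' vn x)
    (hpos : ∀ x ∈ closure K, 0 < graphH f x) :
    (∃ p ∈ frontier K, ∀ x ∈ closure K,
        graphKappa1 f p / graphH f p ≤ graphKappa1 f x / graphH f x) ∧
    (∀ p ∈ K, (∀ x ∈ closure K,
        graphKappa1 f p / graphH f p ≤ graphKappa1 f x / graphH f x) →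
      ∀ x ∈ closure K, graphKappa1 f x / graphH f x = graphKappa1 f p / graphH f p) := by
  have hf2 : ∀ x ∈ closure K, ContDiffAt ℝ 2 f x := fun x hx => (hf x hx).of_le (by norm_num)
  have hcont : ContinuousOn (fun x => graphKappa1 f x / graphH f x) (closure K) :=
    (continuousOn_graphKappa1 hf2).div (continuousOn_graphH hf2) fun x hx => (hpos x hx).ne'
  have := nontrivial_of_graphH_ne_zero
    (hpos _ (subset_closure hKconn.nonempty.some_mem)).ne'
  refine exists_frontier_forall_le_and_eq_of_isMinOn hK hKconn.nonempty hKbdd hcont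
    fun p hp hmin x hx => ?_
  exact graphKappa1_div_graphH_eq_of_isMinOn hK hKconn.isPreconnected
    (fun y hy => hf y (subset_closure hy)) ht (fun y hy => hpos y (subset_closure hy)) hp hmin hx

/-- corollary of the maximum principle for translators.
Let `f` be a smooth solution of the translator equation with velocity `(v', vn)` on an open
`Ω ⊆ ℝⁿ`, let `K` be a nonempty bounded open connected set with `K̄ ⊆ Ω`, and suppose the
scalar mean curvature `h(f,·)` of the graph is positive on `K̄`. Then the minimum of
`κ₁(f,·)/h(f,·)` over `K̄` is attained at a point of the frontier `∂K`; and if it is attained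
at a point of `K`, then `κ₁(f,·)/h(f,·)` is constant on `K̄`. -/
theorem subsequent_singularities_stmt7 {n : ℕ}
    (Ω K : Set (EuclideanSpace ℝ (Fin n))) (hΩ : IsOpen Ω)
    (hK : IsOpen K) (hKconn : IsConnected K) (hKbdd : Bornology.IsBounded K)
    (hKΩ : closure K ⊆ Ω)
    (v' : EuclideanSpace ℝ (Fin n)) (vn : ℝ)
    (f : EuclideanSpace ℝ (Fin n) → ℝ)
    (hf : ContDiffOn ℝ (⊤ : ℕ∞) f Ω)
    (ht : ∀ x ∈ Ω, TranslatorEqAt f v' vn x)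
    (hpos : ∀ x ∈ closure K, 0 < graphH f x) :
    (∃ p ∈ frontier K, ∀ x ∈ closure K,
        graphKappa1 f p / graphH f p ≤ graphKappa1 f x / graphH f x) ∧
    (∀ p ∈ K, (∀ x ∈ closure K,
        graphKappa1 f p / graphH f p ≤ graphKappa1 f x / graphH f x) →
      ∀ x ∈ closure K, graphKappa1 f x / graphH f x = graphKappa1 f p / graphH f p) := by
  exact subsequent_singularities_stmt7_general hK hKconn hKbdd
    (fun x hx => (hf.contDiffAt (hΩ.mem_nhds (hKΩ hx))).of_le (by norm_cast))
    (fun x hx => ht x (hKΩ (subset_closure hx))) hpos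
end
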